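/- Suppose there exist real numbers θ > 1, σ > 1 and r₀ > 0 such that ∫_{r₀}^∞ (r·f_σ(r))^{1/(p−1)} dr = ∞ while at least one of the integrals ∫_1^∞ (g_θ(t)·t)^{−1/p} dt, ∫_1^∞ g_θ(t)^{−1/α} dt is infinite. Define F_∞(ξ) = (∫_1^ξ (g_θ(t)·t)^{−1/p} dt)^{p/(p−1)} + ∫_1^ξ g_θ(t)^{−1/α} dt for ξ ≥ 1. Then there exists a constant C > 0, depending only on n, p, θ, σ, α, C₁ and C₂, such that for every nonnegative C¹ solution u, not identically zero, of div A(x,Du) + b(x)|Du|^α ≥ q(x)g(u) in ℝⁿ there exists R > r₀ with: M(r;u) ≥ 1 and F_∞(M(r;u)) ≥ C·∫_{r₀}^r (ξ·f_σ(ξ))^{1/(p−1)} dξ for all r ≥ R (equivalently, M(r;u) ≥ F_∞^{−1}(C·∫_{r₀}^r (ξ f_σ(ξ))^{1/(p−1)} dξ) for all sufficiently large r). -/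

import Mathlib

open MeasureTheory Metric Set Filter
open scoped RealInnerProductSpace ENNReal

noncomputable section

abbrev Euc (n : ℕ) := EuclideanSpace ℝ (Fin n)

/-- Weak solution of `div A(x,Dv) + b(x)|Dv|^α ≥ a(x)` on an open set `U`:
for every nonnegative test function `φ ∈ C₀^∞(U)`,
`-∫ A(x,Dv)·Dφ + ∫ b |Dv|^α φ ≥ ∫ a φ`. -/
def IsWeakSol {n : ℕ} (A : Euc n → Euc n → Euc n) (b : Euc n → ℝ) (α : ℝ)
    (a : Euc n → ℝ) (U : Set (Euc n)) (v : Euc n → ℝ) : Prop :=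
  ∀ φ : Euc n → ℝ, ContDiff ℝ (⊤ : ℕ∞) φ → HasCompactSupport φ → tsupport φ ⊆ U →
    (∀ x, 0 ≤ φ x) →
    (∫ x in U, a x * φ x) ≤
      (-(∫ x in U, ⟪A x (gradient v x), gradient φ x⟫)) +
        ∫ x in U, b x * ‖gradient v x‖ ^ α * φ x

/-- Structural conditions on `A`: measurability, coercivity and growth. -/
def StructCond {n : ℕ} (A : Euc n → Euc n → Euc n) (p C₁ C₂ : ℝ) : Prop :=
  Measurable (Function.uncurry A) ∧
    ∀ x ζ : Euc n, C₁ * ‖ζ‖ ^ p ≤ ⟪ζ, A x ζ⟫ ∧ ‖A x ζ‖ ≤ C₂ * ‖ζ‖ ^ (p - 1)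

/-- Locally bounded function on `ℝⁿ`. -/
def LocBdd {n : ℕ} (b : Euc n → ℝ) : Prop :=
  ∀ K : Set (Euc n), IsCompact K → ∃ C, ∀ x ∈ K, b x ≤ C

/-- `M(r; u) = max_{|x| = r} u x`. -/
def sphMax {n : ℕ} (u : Euc n → ℝ) (r : ℝ) : ℝ := sSup (u '' Metric.sphere (0 : Euc n) r)

/-- `g_θ(t) = inf_{s ∈ (t/θ, θ t)} g s`. -/
def ginf (g : ℝ → ℝ) (θ t : ℝ) : ℝ := sInf (g '' Set.Ioo (t / θ) (θ * t))

/-- The open annulus `{x : r₁ < |x| < r₂}`. -/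
def Ann (n : ℕ) (r₁ r₂ : ℝ) : Set (Euc n) := {x : Euc n | r₁ < ‖x‖ ∧ ‖x‖ < r₂}

/-- `q_σ(r) = ess inf_{r/σ < |x| < σ r} q x`. -/
def qinf {n : ℕ} (q : Euc n → ℝ) (σ r : ℝ) : ℝ :=
  essInf q (volume.restrict (Ann n (r / σ) (σ * r)))

/-- `f_σ(r) = q_σ(r) / (1 + r q_σ(r)^{(α-p+1)/α} ess sup_{r/σ<|x|<σr} b^{(p-1)/α})`. -/
def fdef {n : ℕ} (q b : Euc n → ℝ) (p α σ r : ℝ) : ℝ :=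
  qinf q σ r /
    (1 + r * qinf q σ r ^ ((α - p + 1) / α) *
      essSup (fun x => b x ^ ((p - 1) / α)) (volume.restrict (Ann n (r / σ) (σ * r))))

/-- `F_∞(ξ) = (∫_1^ξ (g_θ(t) t)^{-1/p} dt)^{p/(p-1)} + ∫_1^ξ g_θ(t)^{-1/α} dt`. -/
def Finfty (g : ℝ → ℝ) (θ p α ξ : ℝ) : ℝ :=
  (∫ t in Set.Ioc (1 : ℝ) ξ, (ginf g θ t * t) ^ (-(1 / p))) ^ (p / (p - 1)) +
    ∫ t in Set.Ioc (1 : ℝ) ξ, ginf g θ t ^ (-(1 / α))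

/-!
Let `M r` be the maximum of the solution over the sphere of radius `r`. Testing the inequality with
`ψ ^ p * (u - k)₊ ^ 2` for a cutoff `ψ` gives a Caccioppoli inequality, and De Giorgi iteration
turns it into a growth lemma: if the solution is at most `η + 2 * S` on a ball of radius `ρ` and at
least `η + S` at its centre, then `S ^ (p - 1)` dominates `ρ ^ p` times the source, as long as the
drift, split off by Young's inequality, is small compared to `1 / S`. The maximum principle makes
`M` nondecreasing, so the growth lemma becomes a lower bound for `M r₂ - M r₁`, in which either the
source alone or the balance of source and drift prevails.

Chaining annuli on which `M` grows by a fixed factor, one bounds the integral of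
`(r * f_σ(r)) ^ (1 / (p - 1))` over `(r₁, r₂]` by a constant times the increment from `M r₁` to
`M r₂` of primitives of negative powers of lower envelopes of `g`. These increments are
superadditive, so the estimate survives chaining with the same constant. One of the primitives, that
of `g_a ^ (-1 / (p - 1))`, does not occur in `F_∞`; once `M` has grown by a fixed factor, it is
dominated by the power `p / (p - 1)` of the integral of `(g_θ(t) * t) ^ (-1 / p)`. As the left-hand
side diverges, `M` is unbounded, and the contribution of an initial interval is absorbed.
-/

section RealInequalities

lemma rpow_le_rpow_add_rpow_sub_mul_rpow {α p s t : ℝ} (hα : 0 ≤ α) (hαp : α ≤ p) (hs : 0 < s)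
    (ht : 0 ≤ t) : t ^ α ≤ s ^ α + s ^ (α - p) * t ^ p := by
  rcases le_or_gt t s with hts | hst
  · have : t ^ α ≤ s ^ α := by gcongr
    have : 0 ≤ s ^ (α - p) * t ^ p := by positivity
    linarith
  · have ht' : 0 < t := hs.trans hst
    calc t ^ α = t ^ (α - p) * t ^ p := by rw [← Real.rpow_add ht', sub_add_cancel]
      _ ≤ s ^ (α - p) * t ^ p := by
        gcongr ?_ * _
        exact Real.rpow_le_rpow_of_nonpos hs hst.le (by linarith)
      _ ≤ s ^ α + s ^ (α - p) * t ^ p := le_add_of_nonneg_left (by positivity)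

lemma rpow_sub_one_mul_le_add {p X Y ε : ℝ} (hp : 1 < p) (hX : 0 ≤ X) (hY : 0 ≤ Y) (hε : 0 < ε) :
    X ^ (p - 1) * Y ≤ ε * X ^ p + ε ^ (1 - p) * Y ^ p := by
  rcases hY.eq_or_lt with rfl | hY
  · have : 0 ≤ ε * X ^ p := by positivity
    simpa [Real.zero_rpow (by linarith : p ≠ 0)] using this
  · have h := rpow_le_rpow_add_rpow_sub_mul_rpow (α := p - 1) (p := p) (by linarith)
      (by linarith) (div_pos hY hε) hX
    have hneg : p - 1 - p = -1 := by ring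
    have hYp : Y ^ p = Y ^ (p - 1) * Y := by rw [Real.rpow_sub_one hY.ne']; field_simp
    calc X ^ (p - 1) * Y ≤ ((Y / ε) ^ (p - 1) + (Y / ε) ^ (p - 1 - p) * X ^ p) * Y := by gcongr
      _ = ε * X ^ p + ε ^ (1 - p) * Y ^ p := by
        rw [hneg, Real.rpow_neg_one, Real.div_rpow hY.le hε.le, hYp, ← neg_sub p 1,
          Real.rpow_neg hε.le]
        field_simp
        ring

lemma hasDerivAt_max_zero_sq (t : ℝ) :
    HasDerivAt (fun t : ℝ ↦ (max t 0) ^ 2) (2 * max t 0) t := by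
  rcases lt_trichotomy t 0 with ht | rfl | ht
  · have hzero : (fun t : ℝ ↦ (max t 0) ^ 2) =ᶠ[nhds t] fun _ ↦ 0 := by
      filter_upwards [Iio_mem_nhds ht] with s hs
      simp [max_eq_right (mem_Iio.1 hs).le]
    simpa [max_eq_right ht.le] using (hasDerivAt_const t (0 : ℝ)).congr_of_eventuallyEq hzero
  · have hO : (fun t : ℝ ↦ (max t 0) ^ 2) =O[nhds 0] fun t ↦ ‖t - 0‖ ^ 2 := by
      refine Asymptotics.isBigO_of_le _ fun t ↦ ?_
      rw [sub_zero, norm_pow, norm_pow, norm_norm]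
      gcongr
      simpa using abs_max_le_max_abs_abs (a := t) (b := 0)
    simpa using (hO.hasFDerivAt one_lt_two).hasDerivAt
  · have hsq : (fun t : ℝ ↦ (max t 0) ^ 2) =ᶠ[nhds t] fun s ↦ s ^ 2 := by
      filter_upwards [Ioi_mem_nhds ht] with s hs
      simp [max_eq_left (mem_Ioi.1 hs).le]
    simpa [max_eq_left ht.le] using (hasDerivAt_pow 2 t).congr_of_eventuallyEq hsq

lemma contDiff_max_zero_sq : ContDiff ℝ 1 (fun t : ℝ ↦ (max t 0) ^ 2) := by
  have hderiv : deriv (fun t : ℝ ↦ (max t 0) ^ 2) = fun t ↦ 2 * max t 0 :=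
    funext fun t ↦ (hasDerivAt_max_zero_sq t).deriv
  rw [contDiff_one_iff_deriv, hderiv]
  exact ⟨fun t ↦ (hasDerivAt_max_zero_sq t).differentiableAt, by fun_prop⟩

end RealInequalities

section Cutoff

variable {E : Type*} [NormedAddCommGroup E] [InnerProductSpace ℝ E]

lemma exists_abs_deriv_smoothTransition_le :
    ∃ K : ℝ, 0 < K ∧ ∀ x, |deriv Real.smoothTransition x| ≤ K := by
  have hcont : Continuous (deriv Real.smoothTransition) :=
    (Real.smoothTransition.contDiff (n := 1)).continuous_deriv le_rfl
  have hsupp : HasCompactSupport (deriv Real.smoothTransition) := by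
    refine HasCompactSupport.intro (isCompact_Icc (a := (0 : ℝ)) (b := 1)) fun x hx ↦ ?_
    rcases lt_or_ge x 0 with hx0 | hx0
    · refine IsLocalMin.deriv_eq_zero (Eventually.of_forall fun y ↦ ?_)
      rw [Real.smoothTransition.zero_of_nonpos hx0.le]
      exact Real.smoothTransition.nonneg y
    · refine IsLocalMax.deriv_eq_zero (Eventually.of_forall fun y ↦ ?_)
      rw [Real.smoothTransition.one_of_one_le (not_le.1 fun h ↦ hx ⟨hx0, h⟩).le]
      exact Real.smoothTransition.le_one y
  obtain ⟨K, hK⟩ := hcont.bounded_above_of_compact_support hsupp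
  exact ⟨max K 1, by positivity, fun x ↦ (hK x).trans (le_max_left _ _)⟩

/-- `ψ` is a `C¹` cutoff between the concentric balls of radii `r' < r` about `z`, with gradient
bounded by `K / (r - r')`. -/
structure IsCutoff (K : ℝ) (z : E) (r' r : ℝ) (ψ : E → ℝ) : Prop where
  contDiff : ContDiff ℝ 1 ψ
  nonneg : ∀ x, 0 ≤ ψ x
  le_one : ∀ x, ψ x ≤ 1
  eq_one : ∀ x, ‖x - z‖ ≤ r' → ψ x = 1
  eq_zero : ∀ x, r ≤ ‖x - z‖ → ψ x = 0
  norm_fderiv_le : ∀ x, ‖fderiv ℝ ψ x‖ ≤ K / (r - r')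

lemma fderiv_eq_zero_of_nonneg_of_eq_zero {ψ : E → ℝ} (hψ : ∀ x, 0 ≤ ψ x) {x : E}
    (hx : ψ x = 0) : fderiv ℝ ψ x = 0 :=
  IsLocalMin.fderiv_eq_zero (Eventually.of_forall fun y ↦ hx.trans_le (hψ y))

namespace IsCutoff

variable {K r' r : ℝ} {z : E} {ψ : E → ℝ}

lemma hasCompactSupport [FiniteDimensional ℝ E] (h : IsCutoff K z r' r ψ) :
    HasCompactSupport ψ :=
  have := FiniteDimensional.proper_real E
  HasCompactSupport.intro (isCompact_closedBall z r) fun x hx ↦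
    h.eq_zero x (by rw [mem_closedBall, not_le, dist_eq_norm] at hx; exact hx.le)

end IsCutoff

lemma norm_fderiv_comp_normSq_div_le {χ : ℝ → ℝ} {K r' r : ℝ} {z x : E}
    (hχ : DifferentiableAt ℝ χ ((r ^ 2 - ‖x - z‖ ^ 2) / (r ^ 2 - r' ^ 2)))
    (hK : |deriv χ ((r ^ 2 - ‖x - z‖ ^ 2) / (r ^ 2 - r' ^ 2))| ≤ K)
    (hr' : 0 < r') (hr : r' < r) (hx : ‖x - z‖ ≤ r) :
    ‖fderiv ℝ (fun x ↦ χ ((r ^ 2 - ‖x - z‖ ^ 2) / (r ^ 2 - r' ^ 2))) x‖ ≤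
      2 * K / (r - r') := by
  have hd : 0 < r - r' := by linarith
  have hinner : HasFDerivAt (fun x ↦ (r ^ 2 - ‖x - z‖ ^ 2) / (r ^ 2 - r' ^ 2))
      ((r ^ 2 - r' ^ 2)⁻¹ • -(2 • innerSL ℝ (x - z) : E →L[ℝ] ℝ)) x := by
    have hsq : HasFDerivAt (fun x ↦ ‖x - z‖ ^ 2) (2 • innerSL ℝ (x - z) : E →L[ℝ] ℝ) x := by
      simpa using ((hasFDerivAt_id x).sub_const z).norm_sq
    simpa only [div_eq_inv_mul] using (hsq.const_sub (r ^ 2)).const_mul ((r ^ 2 - r' ^ 2)⁻¹)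
  have hnorm : ‖(r ^ 2 - r' ^ 2)⁻¹ • -(2 • innerSL ℝ (x - z) : E →L[ℝ] ℝ)‖ ≤ 2 / (r - r') := by
    have hfac : r ^ 2 - r' ^ 2 = (r - r') * (r + r') := by ring
    have hpos : 0 < r ^ 2 - r' ^ 2 := by rw [hfac]; exact mul_pos hd (by linarith)
    rw [norm_smul, norm_neg, Real.norm_of_nonneg (inv_nonneg.2 hpos.le), ← Nat.cast_smul_eq_nsmul ℝ,
      norm_smul, innerSL_apply_norm, inv_mul_le_iff₀ hpos, hfac]
    calc ‖((2 : ℕ) : ℝ)‖ * ‖x - z‖ ≤ 2 * (r + r') := by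
          rw [Nat.cast_ofNat, Real.norm_ofNat]; linarith
      _ = (r - r') * (r + r') * (2 / (r - r')) := by field_simp
  have hcomp := (hχ.hasDerivAt.comp_hasFDerivAt x hinner).fderiv
  rw [Function.comp_def] at hcomp
  rw [hcomp, norm_smul, Real.norm_eq_abs]
  calc _ ≤ K * (2 / (r - r')) :=
        mul_le_mul hK hnorm (norm_nonneg _) ((abs_nonneg _).trans hK)
    _ = 2 * K / (r - r') := by ring

variable (E) in
lemma exists_isCutoff : ∃ K : ℝ, 0 < K ∧ ∀ (z : E) (r' r : ℝ), 0 < r' → r' < r →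
    ∃ ψ : E → ℝ, IsCutoff K z r' r ψ := by
  obtain ⟨K, hK, hderiv⟩ := exists_abs_deriv_smoothTransition_le
  refine ⟨2 * K, by positivity, fun z r' r hr' hr ↦ ?_⟩
  have hd : 0 < r ^ 2 - r' ^ 2 := by nlinarith
  have hχ := Real.smoothTransition.contDiff (n := 1)
  have hzero : ∀ x : E, r ≤ ‖x - z‖ →
      Real.smoothTransition ((r ^ 2 - ‖x - z‖ ^ 2) / (r ^ 2 - r' ^ 2)) = 0 := fun x hx ↦
    Real.smoothTransition.zero_of_nonpos
      (div_nonpos_of_nonpos_of_nonneg (by nlinarith) hd.le)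
  exact
    ⟨fun x ↦ Real.smoothTransition ((r ^ 2 - ‖x - z‖ ^ 2) / (r ^ 2 - r' ^ 2)),
      { contDiff := hχ.comp ((contDiff_const.sub
          ((contDiff_id.sub contDiff_const).norm_sq ℝ)).div_const _)
        nonneg := fun x ↦ Real.smoothTransition.nonneg _
        le_one := fun x ↦ Real.smoothTransition.le_one _
        eq_one := fun x hx ↦ Real.smoothTransition.one_of_one_le <| by
          rw [le_div_iff₀ hd]; nlinarith [norm_nonneg (x - z)]
        eq_zero := hzero
        norm_fderiv_le := fun x ↦ by
          rcases le_or_gt r ‖x - z‖ with hx | hx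
          · have : 0 < r - r' := by linarith
            have hfderiv := fderiv_eq_zero_of_nonneg_of_eq_zero
              (fun x ↦ Real.smoothTransition.nonneg
                ((r ^ 2 - ‖x - z‖ ^ 2) / (r ^ 2 - r' ^ 2))) (hzero x hx)
            rw [hfderiv, norm_zero]
            positivity
          · exact norm_fderiv_comp_normSq_div_le (hχ.differentiable one_ne_zero _)
              (hderiv _) hr' hr hx.le }⟩

end Cutoff

section BilinearBound

lemma norm_bilin_le_indicator {X F G : Type*} [NormedAddCommGroup F] [NormedSpace ℝ F]
    [NormedAddCommGroup G] [NormedSpace ℝ G] {f : X → F} {W : X → G} {C : ℝ} {K : Set X}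
    (B : F →L[ℝ] G →L[ℝ] ℝ)
    (hC : ∀ x, ‖f x‖ ≤ C) (hK : Function.support f ⊆ K) (x : X) :
    ‖B (f x) (W x)‖ ≤ K.indicator (fun x ↦ ‖B‖ * C * ‖W x‖) x := by
  by_cases hx : x ∈ K
  · rw [indicator_of_mem hx]
    exact (B.le_opNorm₂ _ _).trans (by gcongr; exact hC x)
  · have hfx : f x = 0 := Function.notMem_support.1 fun h ↦ hx (hK h)
    simp [indicator_of_notMem hx, hfx]

lemma integrable_indicator_const_mul_norm {X G : Type*} [TopologicalSpace X] [T2Space X]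
    [MeasurableSpace X] [OpensMeasurableSpace X] {μ : Measure X} [NormedAddCommGroup G]
    {W : X → G} {K : Set X} (hK : IsCompact K)
    (hW : LocallyIntegrable W μ) (c : ℝ) :
    Integrable (K.indicator fun x ↦ c * ‖W x‖) μ :=
  IntegrableOn.integrable_indicator ((hW.integrableOn_isCompact hK).norm.const_mul c)
    hK.measurableSet

end BilinearBound

section IntegralComparison

variable {X : Type*} [MeasurableSpace X] {μ : Measure X} {F G : X → ℝ} {s : Set X} {c : ℝ}

lemma integral_le_const_mul_setIntegral (hF : Integrable F μ) (hG : IntegrableOn G s μ)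
    (hs : MeasurableSet s) (hzero : ∀ x ∉ s, F x = 0) (hle : ∀ᵐ x ∂μ, x ∈ s → F x ≤ c * G x) :
    ∫ x, F x ∂μ ≤ c * ∫ x in s, G x ∂μ := by
  rw [← setIntegral_eq_integral_of_forall_compl_eq_zero hzero, ← integral_const_mul]
  exact setIntegral_mono_on_ae hF.integrableOn (hG.const_mul c) hs hle

lemma const_mul_setIntegral_le_integral (hF : Integrable F μ) (hG : IntegrableOn G s μ)
    (hs : MeasurableSet s) (hF0 : ∀ x, 0 ≤ F x) (hle : ∀ x ∈ s, c * G x ≤ F x) :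
    c * ∫ x in s, G x ∂μ ≤ ∫ x, F x ∂μ := by
  rw [← integral_const_mul]
  exact (setIntegral_mono_on (hG.const_mul c) hF.integrableOn hs hle).trans
    (setIntegral_le_integral hF (Eventually.of_forall hF0))

end IntegralComparison

section Mollification

variable {E : Type*} [NormedAddCommGroup E]

variable (E) in
/-- The bump function about the origin, supported in the ball of radius `1 / (k + 1)`, that serves
as the `k`-th mollifier. -/
def mollifierBump (k : ℕ) : ContDiffBump (0 : E) where
  rIn := 1 / (2 * ((k : ℝ) + 1))
  rOut := 1 / ((k : ℝ) + 1)
  rIn_pos := by positivity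
  rIn_lt_rOut := by
    have : (0 : ℝ) ≤ k := by positivity
    exact one_div_lt_one_div_of_lt (by positivity) (by linarith)

lemma tendsto_mollifierBump_rOut :
    Tendsto (fun k ↦ (mollifierBump E k).rOut) atTop (nhds 0) :=
  tendsto_one_div_add_atTop_nhds_zero_nat

lemma mollifierBump_rOut_le_one (k : ℕ) : (mollifierBump E k).rOut ≤ 1 :=
  (div_le_one (by positivity)).2 (le_add_of_nonneg_left (Nat.cast_nonneg k))

variable [NormedSpace ℝ E] [FiniteDimensional ℝ E] [MeasurableSpace E] {μ : Measure E}
  {F : Type*} [NormedAddCommGroup F] [NormedSpace ℝ F]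
  {G : Type*} [NormedAddCommGroup G] [NormedSpace ℝ G]

/-- The convolution of `f` with the `k`-th mollifier. -/
def mollify (μ : Measure E) (k : ℕ) (f : E → F) : E → F :=
  convolution ((mollifierBump E k).normed μ) f (ContinuousLinearMap.lsmul ℝ ℝ) μ

lemma mollify_nonneg {f : E → ℝ} (k : ℕ) (hf : ∀ x, 0 ≤ f x) (x : E) : 0 ≤ mollify μ k f x :=
  integral_nonneg fun y ↦ mul_nonneg ((mollifierBump E k).nonneg_normed y) (hf _)

variable [BorelSpace E]

lemma integrable_bilin {f : E → F} {W : E → G} (B : F →L[ℝ] G →L[ℝ] ℝ) (hf : Continuous f)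
    (hc : HasCompactSupport f) (hW : LocallyIntegrable W μ) :
    Integrable (fun x ↦ B (f x) (W x)) μ := by
  obtain ⟨C, hC⟩ := hf.bounded_above_of_compact_support hc
  exact (integrable_indicator_const_mul_norm hc hW (‖B‖ * C)).mono'
    (B.aestronglyMeasurable_comp₂ hf.aestronglyMeasurable hW.aestronglyMeasurable)
    (Eventually.of_forall (norm_bilin_le_indicator B hC (subset_tsupport f)))

variable [μ.IsAddHaarMeasure]

lemma support_mollify_subset (k : ℕ) (f : E → F) :
    Function.support (mollify μ k f) ⊆ cthickening 1 (Function.support f) := by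
  intro x hx
  obtain ⟨y, hy, w, hw, rfl⟩ := support_convolution_subset _ hx
  refine mem_cthickening_of_dist_le _ w _ _ hw ?_
  rw [ContDiffBump.support_normed_eq, mem_ball_zero_iff] at hy
  simpa using hy.le.trans (mollifierBump_rOut_le_one k)

lemma contDiff_mollify {f : E → F} (k : ℕ) (hf : Continuous f) :
    ContDiff ℝ (⊤ : ℕ∞) (mollify μ k f) :=
  (mollifierBump E k).hasCompactSupport_normed.contDiff_convolution_left _
    (mollifierBump E k).contDiff_normed hf.locallyIntegrable

lemma hasCompactSupport_mollify {f : E → F} (k : ℕ) (hf : HasCompactSupport f) :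
    HasCompactSupport (mollify μ k f) :=
  (mollifierBump E k).hasCompactSupport_normed.convolution _ hf

lemma fderiv_mollify {f : E → F} (k : ℕ) (hf : ContDiff ℝ 1 f) (hc : HasCompactSupport f) :
    fderiv ℝ (mollify μ k f) = mollify μ k (fderiv ℝ f) := by
  ext1 x
  have hloc : LocallyIntegrable ((mollifierBump E k).normed μ) μ :=
    ((mollifierBump E k).contDiff_normed (n := 0)).continuous.locallyIntegrable
  exact (hc.hasFDerivAt_convolution_right (ContinuousLinearMap.lsmul ℝ ℝ) hloc hf x).fderiv

lemma norm_mollify_le [CompleteSpace F] {f : E → F} {C : ℝ} (k : ℕ) (hC : ∀ x, ‖f x‖ ≤ C)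
    (hf : Continuous f) (x : E) : ‖mollify μ k f x‖ ≤ C := by
  have hdist : dist (mollify μ k f x) 0 ≤ C :=
    dist_convolution_le ((norm_nonneg _).trans (hC 0))
      (ContDiffBump.support_normed_eq (mollifierBump E k) (μ := μ)).subset
      (mollifierBump E k).nonneg_normed (ContDiffBump.integral_normed (mollifierBump E k))
      hf.aestronglyMeasurable fun y _ ↦ by simpa using hC y
  simpa using hdist

lemma tendsto_mollify [CompleteSpace F] {f : E → F} (hf : Continuous f) (x : E) :
    Tendsto (fun k ↦ mollify μ k f x) atTop (nhds (f x)) :=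
  ContDiffBump.convolution_tendsto_right_of_continuous tendsto_mollifierBump_rOut hf x

lemma tendsto_integral_bilin_mollify [CompleteSpace F] {f : E → F} {W : E → G}
    (B : F →L[ℝ] G →L[ℝ] ℝ) (hf : Continuous f) (hc : HasCompactSupport f)
    (hW : LocallyIntegrable W μ) :
    Tendsto (fun k ↦ ∫ x, B (mollify μ k f x) (W x) ∂μ) atTop (nhds (∫ x, B (f x) (W x) ∂μ)) := by
  obtain ⟨C, hC⟩ := hf.bounded_above_of_compact_support hc
  have hsupp (k : ℕ) : Function.support (mollify μ k f) ⊆ cthickening 1 (tsupport f) :=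
    (support_mollify_subset k f).trans (cthickening_subset_of_subset 1 (subset_tsupport f))
  refine tendsto_integral_of_dominated_convergence _
    (fun k ↦ B.aestronglyMeasurable_comp₂ (contDiff_mollify k hf).continuous.aestronglyMeasurable
      hW.aestronglyMeasurable)
    (integrable_indicator_const_mul_norm hc.isCompact.cthickening hW (‖B‖ * C))
    (fun k ↦ Eventually.of_forall
      (norm_bilin_le_indicator B (fun x ↦ norm_mollify_le k hC hf x) (hsupp k)))
    (Eventually.of_forall fun x ↦ ?_)
  exact ((B.flip (W x)).continuous.tendsto _).comp (tendsto_mollify hf x)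

end Mollification

section Sobolev

variable {E : Type*} [NormedAddCommGroup E] [NormedSpace ℝ E]

variable (E) in
/-- The Sobolev conjugate `d / (d - 1)` of the exponent `1` in dimension `d = dim E`. -/
def sobolevExponent : ℝ := Module.finrank ℝ E / (Module.finrank ℝ E - 1)

lemma one_lt_sobolevExponent (hE : 2 ≤ Module.finrank ℝ E) : 1 < sobolevExponent E := by
  have : (2 : ℝ) ≤ Module.finrank ℝ E := by exact_mod_cast hE
  rw [sobolevExponent, one_lt_div] <;> linarith

variable [FiniteDimensional ℝ E] [MeasurableSpace E] [BorelSpace E]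

lemma exists_integral_rpow_le_rpow_integral_fderiv (μ : Measure E) [μ.IsAddHaarMeasure]
    (hE : 2 ≤ Module.finrank ℝ E) :
    ∃ C : ℝ, 0 < C ∧ ∀ w : E → ℝ, ContDiff ℝ 1 w → HasCompactSupport w →
      ∫ x, |w x| ^ sobolevExponent E ∂μ ≤ C * (∫ x, ‖fderiv ℝ w x‖ ∂μ) ^ sobolevExponent E := by
  set κ := sobolevExponent E
  have hκ0 : 0 < κ := one_pos.trans (one_lt_sobolevExponent hE)
  have hconj : (Module.finrank ℝ E : ℝ).HolderConjugate κ :=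
    Real.HolderConjugate.conjExponent (by exact_mod_cast hE)
  refine ⟨lintegralPowLePowLIntegralFDerivConst μ κ + 1, by positivity, fun w hw hc ↦ ?_⟩
  have hleft : ∫⁻ x, ‖w x‖ₑ ^ κ ∂μ = ENNReal.ofReal (∫ x, |w x| ^ κ ∂μ) := by
    have hint : Integrable (fun x ↦ |w x| ^ κ) μ := by
      refine (hw.continuous.abs.rpow_const fun x ↦ Or.inr hκ0.le).integrable_of_hasCompactSupport ?_
      exact hc.comp_left (g := fun t ↦ |t| ^ κ) (by simp [hκ0.ne'])
    rw [ofReal_integral_eq_lintegral_ofReal hint (Eventually.of_forall fun x ↦ by positivity)]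
    refine lintegral_congr fun x ↦ ?_
    rw [← ofReal_norm, ENNReal.ofReal_rpow_of_nonneg (norm_nonneg _) hκ0.le, Real.norm_eq_abs]
  have hright : ∫⁻ x, ‖fderiv ℝ w x‖ₑ ∂μ = ENNReal.ofReal (∫ x, ‖fderiv ℝ w x‖ ∂μ) := by
    have hint : Integrable (fderiv ℝ w) μ :=
      (hw.continuous_fderiv one_ne_zero).integrable_of_hasCompactSupport (hc.fderiv ℝ)
    exact (ofReal_integral_norm_eq_lintegral_enorm hint).symm
  have hnonneg : 0 ≤ ∫ x, ‖fderiv ℝ w x‖ ∂μ := integral_nonneg fun x ↦ norm_nonneg _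
  have hsobolev := lintegral_pow_le_pow_lintegral_fderiv μ hw hc hconj
  rw [hleft, hright, ENNReal.ofReal_rpow_of_nonneg hnonneg hκ0.le, ← ENNReal.ofReal_coe_nnreal,
    ← ENNReal.ofReal_mul (by positivity), ENNReal.ofReal_le_ofReal_iff (by positivity)] at hsobolev
  exact hsobolev.trans (by gcongr; linarith)

end Sobolev

section FluxSubsolution

variable {E : Type*} [NormedAddCommGroup E] [NormedSpace ℝ E] [MeasureSpace E]

/-- `u` is a weak solution of `div V ≥ H` whose flux `V` is coercive and of growth `p - 1` in the
gradient of `u`, as for `V = A(·, Du)` with `A` of `p`-Laplace type. -/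
structure IsFluxSubsolution (p C₁ C₂ : ℝ) (u : E → ℝ) (V : E → E) (H : E → ℝ) : Prop where
  contDiff : ContDiff ℝ 1 u
  coercive : ∀ x, C₁ * ‖fderiv ℝ u x‖ ^ p ≤ fderiv ℝ u x (V x)
  norm_flux_le : ∀ x, ‖V x‖ ≤ C₂ * ‖fderiv ℝ u x‖ ^ (p - 1)
  aestronglyMeasurable_flux : AEStronglyMeasurable V
  locallyIntegrable_source : LocallyIntegrable H
  integral_le_zero : ∀ φ : E → ℝ, ContDiff ℝ (⊤ : ℕ∞) φ → HasCompactSupport φ → (∀ x, 0 ≤ φ x) →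
    (∫ x, φ x * H x) + ∫ x, fderiv ℝ φ x (V x) ≤ 0

namespace IsFluxSubsolution

variable {p C₁ C₂ : ℝ} {u : E → ℝ} {V : E → E} {H : E → ℝ}

lemma continuous_norm_fderiv_rpow (h : IsFluxSubsolution p C₁ C₂ u V H) {s : ℝ} (hs : 0 ≤ s) :
    Continuous fun x ↦ ‖fderiv ℝ u x‖ ^ s :=
  (h.contDiff.continuous_fderiv one_ne_zero).norm.rpow_const fun _ ↦ Or.inr hs

variable [FiniteDimensional ℝ E] [BorelSpace E] [(volume : Measure E).IsAddHaarMeasure]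

lemma locallyIntegrable_flux (h : IsFluxSubsolution p C₁ C₂ u V H) (hp : 1 ≤ p) :
    LocallyIntegrable V :=
  ((h.continuous_norm_fderiv_rpow (sub_nonneg.2 hp)).const_mul C₂).locallyIntegrable.mono
    h.aestronglyMeasurable_flux
    (Eventually.of_forall fun x ↦ (h.norm_flux_le x).trans (le_abs_self _))

lemma integrable_and_integral_le_zero (h : IsFluxSubsolution p C₁ C₂ u V H) (hp : 1 ≤ p)
    {φ : E → ℝ} (hφ : ContDiff ℝ 1 φ) (hc : HasCompactSupport φ) (hφ0 : ∀ x, 0 ≤ φ x) :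
    Integrable (fun x ↦ φ x * H x + fderiv ℝ φ x (V x)) ∧
      ∫ x, (φ x * H x + fderiv ℝ φ x (V x)) ≤ 0 := by
  have hDφ : Continuous (fderiv ℝ φ) := hφ.continuous_fderiv one_ne_zero
  have hV := h.locallyIntegrable_flux hp
  have hint₁ := integrable_bilin (ContinuousLinearMap.mul ℝ ℝ) hφ.continuous hc
    h.locallyIntegrable_source
  have hint₂ := integrable_bilin (ContinuousLinearMap.id ℝ (E →L[ℝ] ℝ)) hDφ (hc.fderiv ℝ) hV
  refine ⟨hint₁.add hint₂, (integral_add hint₁ hint₂).trans_le ?_⟩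
  have hlim₁ := tendsto_integral_bilin_mollify (ContinuousLinearMap.mul ℝ ℝ) hφ.continuous hc
    h.locallyIntegrable_source
  have hlim₂ := tendsto_integral_bilin_mollify (ContinuousLinearMap.id ℝ (E →L[ℝ] ℝ)) hDφ
    (hc.fderiv ℝ) hV
  refine le_of_tendsto (hlim₁.add hlim₂) (Eventually.of_forall fun k ↦ ?_)
  rw [← fderiv_mollify k hφ hc]
  exact h.integral_le_zero _ (contDiff_mollify k hφ.continuous) (hasCompactSupport_mollify k hc)
    (mollify_nonneg k hφ0)

end IsFluxSubsolution

end FluxSubsolution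

section Excess

variable {E : Type*}

/-- The positive part of `u - k`. -/
def excess (u : E → ℝ) (k : ℝ) (x : E) : ℝ := max (u x - k) 0

lemma excess_nonneg (u : E → ℝ) (k : ℝ) (x : E) : 0 ≤ excess u k x := le_max_right _ _

lemma excess_eq_zero {u : E → ℝ} {k : ℝ} {x : E} (h : u x ≤ k) : excess u k x = 0 :=
  max_eq_right (sub_nonpos.2 h)

lemma excess_eq_sub {u : E → ℝ} {k : ℝ} {x : E} (h : k ≤ u x) : excess u k x = u x - k :=
  max_eq_left (sub_nonneg.2 h)

lemma continuous_excess [TopologicalSpace E] {u : E → ℝ} (hu : Continuous u) (k : ℝ) :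
    Continuous (excess u k) :=
  (hu.sub continuous_const).max continuous_const

lemma integrableOn_excess_ball [MetricSpace E] [ProperSpace E] [MeasureSpace E]
    [OpensMeasurableSpace E] [IsFiniteMeasureOnCompacts (volume : Measure E)] {u : E → ℝ}
    (hu : Continuous u) (k : ℝ) (z : E) (r : ℝ) : IntegrableOn (excess u k) (ball z r) :=
  ((continuous_excess hu k).continuousOn.integrableOn_compact (isCompact_closedBall z r)).mono_set
    ball_subset_closedBall

/-- The test function `ψ ^ p * (u - k)₊ ^ 2` of the Caccioppoli inequality. -/
def energyTest (p : ℝ) (ψ u : E → ℝ) (k : ℝ) (x : E) : ℝ := ψ x ^ p * excess u k x ^ 2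

lemma energyTest_nonneg {p : ℝ} {ψ u : E → ℝ} (hψ : ∀ x, 0 ≤ ψ x) (k : ℝ) (x : E) :
    0 ≤ energyTest p ψ u k x :=
  mul_nonneg (Real.rpow_nonneg (hψ x) p) (sq_nonneg _)

lemma hasCompactSupport_energyTest [TopologicalSpace E] {p : ℝ} {ψ : E → ℝ} (hp : p ≠ 0)
    (hψ : HasCompactSupport ψ) (u : E → ℝ) (k : ℝ) : HasCompactSupport (energyTest p ψ u k) :=
  HasCompactSupport.mul_right (hψ.comp_left (g := fun t : ℝ ↦ t ^ p) (Real.zero_rpow hp))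

variable [NormedAddCommGroup E] [NormedSpace ℝ E] {p : ℝ} {ψ u : E → ℝ}

lemma contDiff_energyTest (hp : 1 ≤ p) (hψ : ContDiff ℝ 1 ψ) (hu : ContDiff ℝ 1 u) (k : ℝ) :
    ContDiff ℝ 1 (energyTest p ψ u k) :=
  (ContDiff.rpow_const_of_le (m := 1) hψ (by exact_mod_cast hp)).mul
    (contDiff_max_zero_sq.comp (hu.sub contDiff_const))

lemma hasFDerivAt_excess_sq {x : E} (hu : DifferentiableAt ℝ u x) (k : ℝ) :
    HasFDerivAt (fun x ↦ excess u k x ^ 2) ((2 * excess u k x) • fderiv ℝ u x) x :=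
  (hasDerivAt_max_zero_sq (u x - k)).comp_hasFDerivAt (f := fun x ↦ u x - k) x
    (hu.hasFDerivAt.sub_const k)

lemma fderiv_energyTest (hp : 1 ≤ p) {x : E} (hψ : DifferentiableAt ℝ ψ x)
    (hu : DifferentiableAt ℝ u x) (k : ℝ) :
    fderiv ℝ (energyTest p ψ u k) x =
      (2 * (ψ x ^ p * excess u k x)) • fderiv ℝ u x +
        (p * (ψ x ^ (p - 1) * excess u k x ^ 2)) • fderiv ℝ ψ x := by
  have hmul :=
    ((hψ.hasFDerivAt.rpow_const (Or.inr hp)).mul (hasFDerivAt_excess_sq hu k)).fderiv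
  simp only [smul_smul] at hmul
  refine hmul.trans ?_
  congr 2 <;> ring

end Excess

section Caccioppoli

variable {E : Type*} [NormedAddCommGroup E] [InnerProductSpace ℝ E]

/-- The constant in the Caccioppoli inequality. -/
def caccioppoliConst (p C₁ C₂ : ℝ) : ℝ := p * C₂ * (C₁ / (2 * p * C₂)) ^ (1 - p)

lemma caccioppoliConst_pos {p C₁ C₂ : ℝ} (hp : 0 < p) (hC₁ : 0 < C₁) (hC₂ : 0 < C₂) :
    0 < caccioppoliConst p C₁ C₂ := by
  unfold caccioppoliConst; positivity

/-- The weighted energy density controlled by the Caccioppoli inequality. -/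
def energyDensity (p : ℝ) (ψ u : E → ℝ) (k : ℝ) (x : E) : ℝ :=
  ψ x ^ p * excess u k x * ‖fderiv ℝ u x‖ ^ p

variable {p C₁ C₂ K ρ S η a b r r' k : ℝ} {u ψ H : E → ℝ} {V : E → E} {z x : E}

lemma energyDensity_nonneg (hψ : 0 ≤ ψ x) : 0 ≤ energyDensity p ψ u k x := by
  have := excess_nonneg u k x
  unfold energyDensity; positivity

lemma energy_eq_zero_of_notMem_ball (hp : p ≠ 0) (hψ : IsCutoff K z r' r ψ) (hx : x ∉ ball z r) :
    energyTest p ψ u k x = 0 ∧ fderiv ℝ (energyTest p ψ u k) x = 0 ∧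
      energyDensity p ψ u k x = 0 := by
  have hψx : ψ x = 0 := hψ.eq_zero x (not_lt.1 fun hlt ↦ hx (mem_ball_iff_norm.2 hlt))
  have hφx : energyTest p ψ u k x = 0 := by simp [energyTest, hψx, hp]
  exact ⟨hφx, fderiv_eq_zero_of_nonneg_of_eq_zero (energyTest_nonneg hψ.nonneg k) hφx,
    by simp [energyDensity, hψx, hp]⟩

variable [MeasureSpace E]

/-- On the ball of radius `ρ` about `z` the function `u` exceeds the level `η` by at most `2 * S`,
and where it exceeds `η` the source `H` is at least `a`, up to a gradient term `b * ‖Du‖ ^ p` that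
is small enough to be absorbed in the energy of functions of oscillation `2 * S`. -/
structure IsGrowthBall (p C₁ : ℝ) (u H : E → ℝ) (z : E) (ρ S η a b : ℝ) : Prop where
  radius_pos : 0 < ρ
  height_pos : 0 < S
  source_pos : 0 < a
  coeff_nonneg : 0 ≤ b
  coeff_mul_height_le : b * S ≤ C₁ / 4
  le_level_add : ∀ x, ‖x - z‖ < ρ → u x ≤ η + 2 * S
  source_le : ∀ᵐ x, ‖x - z‖ < ρ → η < u x → a ≤ H x + b * ‖fderiv ℝ u x‖ ^ p

namespace IsGrowthBall

lemma excess_le (l : IsGrowthBall p C₁ u H z ρ S η a b) (hk : η ≤ k) (hx : ‖x - z‖ < ρ) :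
    excess u k x ≤ 2 * S := by
  have := l.le_level_add x hx
  have := l.height_pos
  exact max_le (by linarith) (by positivity)

lemma ae_le_energyTest_mul_source (l : IsGrowthBall p C₁ u H z ρ S η a b) (hk : η ≤ k)
    (hψ : ∀ x, 0 ≤ ψ x) :
    ∀ᵐ x, ‖x - z‖ < ρ →
      a * energyTest p ψ u k x - C₁ / 2 * energyDensity p ψ u k x ≤ energyTest p ψ u k x * H x := by
  filter_upwards [l.source_le] with x hsource hx
  rcases le_or_gt (u x) k with huk | huk
  · simp [energyTest, energyDensity, excess_eq_zero huk]
  have habsorb : b * excess u k x ≤ C₁ / 2 := by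
    have := mul_le_mul_of_nonneg_left (l.excess_le hk hx) l.coeff_nonneg
    linarith [l.coeff_mul_height_le]
  calc a * energyTest p ψ u k x - C₁ / 2 * energyDensity p ψ u k x
      ≤ a * energyTest p ψ u k x - b * excess u k x * energyDensity p ψ u k x := by
        gcongr; exact energyDensity_nonneg (hψ x)
    _ = energyTest p ψ u k x * (a - b * ‖fderiv ℝ u x‖ ^ p) := by
        unfold energyTest energyDensity; ring
    _ ≤ energyTest p ψ u k x * H x := by
        gcongr
        · exact energyTest_nonneg hψ k x
        · linarith [hsource hx (hk.trans_lt huk)]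

end IsGrowthBall

namespace IsFluxSubsolution

lemma le_fderiv_energyTest_flux (h : IsFluxSubsolution p C₁ C₂ u V H) (hp : 1 < p) (hC₁ : 0 < C₁)
    (hC₂ : 0 < C₂) (hψ : DifferentiableAt ℝ ψ x) (hψ0 : 0 ≤ ψ x) (k : ℝ) :
    3 / 2 * C₁ * energyDensity p ψ u k x -
        caccioppoliConst p C₁ C₂ * (excess u k x * (excess u k x * ‖fderiv ℝ ψ x‖) ^ p) ≤
      fderiv ℝ (energyTest p ψ u k) x (V x) := by
  have hu := h.contDiff.differentiable one_ne_zero x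
  have hw := excess_nonneg u k x
  have hcoercive := h.coercive x
  have hcross : -(‖fderiv ℝ ψ x‖ * (C₂ * ‖fderiv ℝ u x‖ ^ (p - 1))) ≤ fderiv ℝ ψ x (V x) := by
    have hop := (fderiv ℝ ψ x).le_opNorm (V x)
    have hV := mul_le_mul_of_nonneg_left (h.norm_flux_le x) (norm_nonneg (fderiv ℝ ψ x))
    exact neg_le_of_abs_le (hop.trans hV)
  rw [fderiv_energyTest hp.le hψ hu]
  simp only [add_apply, smul_apply, smul_eq_mul]
  simp only [energyDensity, caccioppoliConst]
  set w := excess u k x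
  set X := ‖fderiv ℝ u x‖
  set Y := ‖fderiv ℝ ψ x‖
  have hyoung := rpow_sub_one_mul_le_add hp (mul_nonneg hψ0 (norm_nonneg (fderiv ℝ u x)))
    (mul_nonneg hw (norm_nonneg (fderiv ℝ ψ x))) (by positivity : 0 < C₁ / (2 * p * C₂))
  rw [Real.mul_rpow hψ0 (norm_nonneg _), Real.mul_rpow hψ0 (norm_nonneg _)] at hyoung
  calc 3 / 2 * C₁ * (ψ x ^ p * w * X ^ p) -
        p * C₂ * (C₁ / (2 * p * C₂)) ^ (1 - p) * (w * (w * Y) ^ p)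
      = 2 * (ψ x ^ p * w) * (C₁ * X ^ p) - p * C₂ * w *
          (C₁ / (2 * p * C₂) * (ψ x ^ p * X ^ p) +
            (C₁ / (2 * p * C₂)) ^ (1 - p) * (w * Y) ^ p) := by
        field_simp; ring
    _ ≤ 2 * (ψ x ^ p * w) * (C₁ * X ^ p) -
          p * C₂ * w * (ψ x ^ (p - 1) * X ^ (p - 1) * (w * Y)) := by gcongr
    _ = 2 * (ψ x ^ p * w) * (C₁ * X ^ p) +
          p * (ψ x ^ (p - 1) * w ^ 2) * -(Y * (C₂ * X ^ (p - 1))) := by ring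
    _ ≤ _ := by gcongr

lemma integrable_energyDensity [BorelSpace E]
    [(volume : Measure E).IsAddHaarMeasure] (h : IsFluxSubsolution p C₁ C₂ u V H)
    (hp : 0 < p) (hψ : ContDiff ℝ 1 ψ) (hc : HasCompactSupport ψ) (k : ℝ) :
    Integrable (energyDensity p ψ u k) :=
  (((hψ.continuous.rpow_const fun _ ↦ Or.inr hp.le).mul
    (continuous_excess h.contDiff.continuous k)).mul
      (h.continuous_norm_fderiv_rpow hp.le)).integrable_of_hasCompactSupport
    (hc.comp_left (g := fun t : ℝ ↦ t ^ p) (Real.zero_rpow hp.ne')).mul_right.mul_right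

lemma ae_energy_le (h : IsFluxSubsolution p C₁ C₂ u V H) (hp : 1 < p) (hC₁ : 0 < C₁)
    (hC₂ : 0 < C₂) (l : IsGrowthBall p C₁ u H z ρ S η a b) (hψ : IsCutoff K z r' r ψ)
    (hr : r ≤ ρ) (hk : η ≤ k) :
    ∀ᵐ x, x ∈ ball z r →
      a * energyTest p ψ u k x + C₁ * energyDensity p ψ u k x -
          (energyTest p ψ u k x * H x + fderiv ℝ (energyTest p ψ u k) x (V x)) ≤
        caccioppoliConst p C₁ C₂ * (2 * S * (K / (r - r'))) ^ p * excess u k x := by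
  have hcac := caccioppoliConst_pos (by linarith : 0 < p) hC₁ hC₂
  filter_upwards [l.ae_le_energyTest_mul_source hk hψ.nonneg] with x hsource hx
  have hxρ : ‖x - z‖ < ρ := (mem_ball_iff_norm.1 hx).trans_le hr
  have hflux := h.le_fderiv_energyTest_flux hp hC₁ hC₂
    (hψ.contDiff.differentiable one_ne_zero x) (hψ.nonneg x) k
  have hw := excess_nonneg u k x
  have hS := l.height_pos
  have hboundary : excess u k x * (excess u k x * ‖fderiv ℝ ψ x‖) ^ p ≤
      excess u k x * (2 * S * (K / (r - r'))) ^ p := by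
    gcongr
    exacts [l.excess_le hk hxρ, hψ.norm_fderiv_le x]
  have := mul_le_mul_of_nonneg_left hboundary hcac.le
  linarith [hsource hxρ]

end IsFluxSubsolution

section Integrals

variable [FiniteDimensional ℝ E] [BorelSpace E] [(volume : Measure E).IsAddHaarMeasure]

lemma caccioppoli (h : IsFluxSubsolution p C₁ C₂ u V H) (hp : 1 < p) (hC₁ : 0 < C₁) (hC₂ : 0 < C₂)
    (l : IsGrowthBall p C₁ u H z ρ S η a b) (hψ : IsCutoff K z r' r ψ) (hr : r ≤ ρ) (hk : η ≤ k) :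
    a * (∫ x, energyTest p ψ u k x) + C₁ * ∫ x, energyDensity p ψ u k x ≤
      caccioppoliConst p C₁ C₂ * (2 * S * (K / (r - r'))) ^ p *
        ∫ x in ball z r, excess u k x := by
  have hp0 : 0 < p := by linarith
  have hc := hψ.hasCompactSupport
  have hφ := contDiff_energyTest hp.le hψ.contDiff h.contDiff k
  have hφc := hasCompactSupport_energyTest hp0.ne' hc u k
  obtain ⟨hint, hweak⟩ := h.integrable_and_integral_le_zero hp.le hφ hφc
    (energyTest_nonneg hψ.nonneg k)
  have hint₁ : Integrable (energyTest p ψ u k) :=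
    hφ.continuous.integrable_of_hasCompactSupport hφc
  have hint₂ := h.integrable_energyDensity hp0 hψ.contDiff hc k
  have hsum := (hint₁.const_mul a).add (hint₂.const_mul C₁)
  have hbound := integral_le_const_mul_setIntegral (hsum.sub hint)
    (integrableOn_excess_ball h.contDiff.continuous k z r) measurableSet_ball ?_
    (h.ae_energy_le hp hC₁ hC₂ l hψ hr hk)
  · rw [integral_sub' hsum hint, integral_add' (hint₁.const_mul a) (hint₂.const_mul C₁),
      integral_const_mul, integral_const_mul] at hbound
    linarith
  · intro x hx
    obtain ⟨hφx, hDφx, hEx⟩ := energy_eq_zero_of_notMem_ball hp0.ne' hψ hx (u := u) (k := k)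
    simp [hφx, hDφx, hEx]

end Integrals

end Caccioppoli

section DeGiorgi

variable {E : Type*}

lemma sub_rpow_mul_excess_le {u : E → ℝ} {k k' s : ℝ} (hk : k ≤ k') (hs : 0 < s) (x : E) :
    (k' - k) ^ s * excess u k' x ≤ excess u k x ^ (s + 1) := by
  have : 0 ≤ k' - k := sub_nonneg.2 hk
  rcases le_or_gt (u x) k' with huk | huk
  · rw [excess_eq_zero huk, mul_zero]
    exact Real.rpow_nonneg (excess_nonneg u k x) _
  · rw [excess_eq_sub huk.le, excess_eq_sub (hk.trans huk.le),
      Real.rpow_add_one (by linarith)]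
    have : 0 ≤ u x - k' := by linarith
    have : 0 ≤ u x - k := by linarith
    gcongr

variable [NormedAddCommGroup E] [InnerProductSpace ℝ E]
  {p C₁ C₂ K ρ S η a b r r' k k' N : ℝ} {u ψ H : E → ℝ} {V : E → E} {z x : E}

lemma norm_fderiv_energyTest_le {s : ℝ} (hp : 1 < p) (hs : 0 < s)
    (hψ : IsCutoff K z r' r ψ) (hu : DifferentiableAt ℝ u x) (hwS : excess u k x ≤ 2 * S) :
    ‖fderiv ℝ (energyTest p ψ u k) x‖ ≤
      2 * s ^ (1 - p) * energyDensity p ψ u k x +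
        (2 * s + 2 * p * S * (K / (r - r'))) * excess u k x := by
  have hw := excess_nonneg u k x
  have hψ0 := hψ.nonneg x
  have hψ₁ : ψ x ^ p ≤ 1 := Real.rpow_le_one hψ0 (hψ.le_one x) (by linarith)
  have hψ₂ : ψ x ^ (p - 1) ≤ 1 := Real.rpow_le_one hψ0 (hψ.le_one x) (by linarith)
  have hyoung : ‖fderiv ℝ u x‖ ≤ s + s ^ (1 - p) * ‖fderiv ℝ u x‖ ^ p := by
    simpa using rpow_le_rpow_add_rpow_sub_mul_rpow zero_le_one hp.le hs (norm_nonneg (fderiv ℝ u x))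
  rw [fderiv_energyTest hp.le (hψ.contDiff.differentiable one_ne_zero x) hu]
  refine (norm_add_le _ _).trans ?_
  rw [norm_smul, norm_smul, Real.norm_of_nonneg (by positivity),
    Real.norm_of_nonneg (by positivity)]
  unfold energyDensity
  set w := excess u k x
  set X := ‖fderiv ℝ u x‖
  calc 2 * (ψ x ^ p * w) * X + p * (ψ x ^ (p - 1) * w ^ 2) * ‖fderiv ℝ ψ x‖
      ≤ 2 * (ψ x ^ p * w) * (s + s ^ (1 - p) * X ^ p) + p * (1 * w ^ 2) * (K / (r - r')) := by
        gcongr; exact hψ.norm_fderiv_le x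
    _ = 2 * s ^ (1 - p) * (ψ x ^ p * w * X ^ p) +
          (2 * s * (ψ x ^ p) + p * w * (K / (r - r'))) * w := by ring
    _ ≤ 2 * s ^ (1 - p) * (ψ x ^ p * w * X ^ p) +
          (2 * s * 1 + p * (2 * S) * (K / (r - r'))) * w := by
        have : 0 ≤ K / (r - r') := (norm_nonneg _).trans (hψ.norm_fderiv_le x)
        gcongr
    _ = _ := by ring

/-- The constant in the estimate of the gradient of the test function `energyTest`. -/
def energyGradConst (p C₁ C₂ K : ℝ) : ℝ :=
  2 * (caccioppoliConst p C₁ C₂ / C₁ * (2 * K) ^ p + 1 + p * K)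

lemma energyGradConst_pos (hp : 0 < p) (hC₁ : 0 < C₁) (hC₂ : 0 < C₂) (hK : 0 < K) :
    0 < energyGradConst p C₁ C₂ K := by
  have := caccioppoliConst_pos hp hC₁ hC₂
  unfold energyGradConst; positivity

variable [FiniteDimensional ℝ E] [MeasureSpace E] [BorelSpace E]
  [(volume : Measure E).IsAddHaarMeasure]

lemma integral_norm_fderiv_energyTest_le_add {s : ℝ} (h : IsFluxSubsolution p C₁ C₂ u V H)
    (hp : 1 < p) (hs : 0 < s) (l : IsGrowthBall p C₁ u H z ρ S η a b)
    (hψ : IsCutoff K z r' r ψ) (hr : r ≤ ρ) (hk : η ≤ k) :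
    ∫ x, ‖fderiv ℝ (energyTest p ψ u k) x‖ ≤
      2 * s ^ (1 - p) * (∫ x, energyDensity p ψ u k x) +
        (2 * s + 2 * p * S * (K / (r - r'))) * ∫ x in ball z r, excess u k x := by
  have hp0 : 0 < p := by linarith
  have hc := hψ.hasCompactSupport
  have hφ := contDiff_energyTest hp.le hψ.contDiff h.contDiff k
  have hintD : Integrable fun x ↦ ‖fderiv ℝ (energyTest p ψ u k) x‖ :=
    (hφ.continuous_fderiv one_ne_zero).norm.integrable_of_hasCompactSupport
      ((hasCompactSupport_energyTest hp0.ne' hc u k).fderiv ℝ).norm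
  have hintE := (h.integrable_energyDensity hp0 hψ.contDiff hc k).const_mul (2 * s ^ (1 - p))
  have hgrad := integral_le_const_mul_setIntegral (hintD.sub hintE)
    (integrableOn_excess_ball h.contDiff.continuous k z r) measurableSet_ball
    (fun x hx ↦ ?_) (.of_forall fun x hx ↦ sub_le_iff_le_add'.2 <|
      norm_fderiv_energyTest_le hp hs hψ (h.contDiff.differentiable one_ne_zero x)
        (l.excess_le hk ((mem_ball_iff_norm.1 hx).trans_le hr)))
  · rw [integral_sub' hintD hintE, integral_const_mul] at hgrad
    exact sub_le_iff_le_add'.1 hgrad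
  · obtain ⟨-, hDφx, hEx⟩ := energy_eq_zero_of_notMem_ball hp0.ne' hψ hx (u := u) (k := k)
    simp [hDφx, hEx]

lemma integral_norm_fderiv_energyTest_le (h : IsFluxSubsolution p C₁ C₂ u V H) (hp : 1 < p)
    (hC₁ : 0 < C₁) (hC₂ : 0 < C₂) (hK : 0 < K) (l : IsGrowthBall p C₁ u H z ρ S η a b) (hN : 1 ≤ N)
    (hr : r ≤ ρ) (hψ : IsCutoff K z (r - ρ / N) r ψ) (hk : η ≤ k) :
    ∫ x, ‖fderiv ℝ (energyTest p ψ u k) x‖ ≤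
      energyGradConst p C₁ C₂ K * (S / ρ) * N ^ p * ∫ x in ball z r, excess u k x := by
  have hρ := l.radius_pos
  have hS := l.height_pos
  set s := S / ρ with hs
  have hs0 : 0 < s := by positivity
  have hN0 : 0 < N := by linarith
  have hNp : N ≤ N ^ p := Real.self_le_rpow_of_one_le hN hp.le
  have hgrad := integral_norm_fderiv_energyTest_le_add h hp hs0 l hψ hr hk
  have hcac := caccioppoli h hp hC₁ hC₂ l hψ hr hk
  have htest : 0 ≤ a * ∫ x, energyTest p ψ u k x :=
    mul_nonneg l.source_pos.le (integral_nonneg (energyTest_nonneg hψ.nonneg k))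
  have hT : 0 ≤ ∫ x in ball z r, excess u k x := integral_nonneg (excess_nonneg u k)
  rw [sub_sub_cancel, show 2 * p * S * (K / (ρ / N)) = 2 * p * K * s * N by rw [hs]; field_simp]
    at hgrad
  rw [sub_sub_cancel, show 2 * S * (K / (ρ / N)) = 2 * K * s * N by rw [hs]; field_simp,
    Real.mul_rpow (by positivity) hN0.le, Real.mul_rpow (by positivity) hs0.le] at hcac
  set T := ∫ x in ball z r, excess u k x
  have henergy : ∫ x, energyDensity p ψ u k x ≤
      caccioppoliConst p C₁ C₂ * ((2 * K) ^ p * s ^ p * N ^ p) * T / C₁ := by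
    rw [le_div_iff₀ hC₁]; linarith
  calc ∫ x, ‖fderiv ℝ (energyTest p ψ u k) x‖
      ≤ 2 * s ^ (1 - p) * (∫ x, energyDensity p ψ u k x) +
          (2 * s * 1 + 2 * p * K * s * N) * T := by linarith
    _ ≤ 2 * s ^ (1 - p) * (caccioppoliConst p C₁ C₂ * ((2 * K) ^ p * s ^ p * N ^ p) * T / C₁) +
          (2 * s * N ^ p + 2 * p * K * s * N ^ p) * T := by
        gcongr; exact hN.trans hNp
    _ = energyGradConst p C₁ C₂ K * s * N ^ p * T := by
        rw [Real.rpow_sub hs0, Real.rpow_one, energyGradConst]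
        field_simp; ring

end DeGiorgi

section Growth

variable {E : Type*} [NormedAddCommGroup E] [InnerProductSpace ℝ E] [FiniteDimensional ℝ E]
  [MeasureSpace E] {p C₁ C₂ K ρ S η a b r r' k k' N : ℝ} {u ψ H : E → ℝ} {V : E → E} {z x : E}

/-- The integral of `(u - k)₊` over the ball of radius `r` about `z`, made dimensionless by the
radius `ρ` and the height `S` of the growth lemma. -/
def scaledExcess (u : E → ℝ) (z : E) (ρ S r k : ℝ) : ℝ :=
  (∫ x in ball z r, excess u k x) / (S * ρ ^ Module.finrank ℝ E)

omit [FiniteDimensional ℝ E] in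
lemma scaledExcess_nonneg (hρ : 0 ≤ ρ) (hS : 0 ≤ S) : 0 ≤ scaledExcess u z ρ S r k :=
  div_nonneg (integral_nonneg (excess_nonneg u k)) (by positivity)

variable [BorelSpace E] [(volume : Measure E).IsAddHaarMeasure]

lemma scaledExcess_le_scaledExcess (hu : Continuous u) (hρ : 0 ≤ ρ) (hS : 0 ≤ S) (hr : r' ≤ r)
    (hk : k ≤ k') : scaledExcess u z ρ S r' k' ≤ scaledExcess u z ρ S r k := by
  refine div_le_div_of_nonneg_right ?_ (by positivity)
  calc ∫ x in ball z r', excess u k' x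
      ≤ ∫ x in ball z r', excess u k x :=
        setIntegral_mono (integrableOn_excess_ball hu k' z r') (integrableOn_excess_ball hu k z r')
          fun x ↦ max_le_max_right 0 (by linarith)
    _ ≤ ∫ x in ball z r, excess u k x :=
        setIntegral_mono_set (integrableOn_excess_ball hu k z r)
          (Eventually.of_forall (excess_nonneg u k)) (ball_subset_ball hr).eventuallyLE

lemma scaledExcess_pos (hu : Continuous u) (hρ : 0 < ρ) (hS : 0 < S) (hr : 0 < r) (hk : k < u z) :
    0 < scaledExcess u z ρ S r k := by
  refine div_pos ?_ (by positivity)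
  rw [setIntegral_pos_iff_support_of_nonneg_ae (Eventually.of_forall (excess_nonneg u k))
    (integrableOn_excess_ball hu k z r)]
  have hopen : IsOpen ({x | k < u x} ∩ ball z r) :=
    (isOpen_lt continuous_const hu).inter isOpen_ball
  refine (hopen.measure_pos volume ⟨z, hk, mem_ball_self hr⟩).trans_le (measure_mono ?_)
  exact fun x hx ↦ ⟨(lt_max_of_lt_left (sub_pos.2 hx.1)).ne', hx.2⟩

lemma sub_rpow_mul_setIntegral_excess_le {κ : ℝ} (hp : 0 < p) (hκ : 1 ≤ κ) (hu : ContDiff ℝ 1 u)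
    (hφ : ContDiff ℝ 1 (energyTest p ψ u k)) (hψ : IsCutoff K z r' r ψ) (hk : k ≤ k') :
    (k' - k) ^ (2 * κ - 1) * ∫ x in ball z r', excess u k' x ≤
      ∫ x, |energyTest p ψ u k x| ^ κ := by
  have hφc := hasCompactSupport_energyTest hp.ne' hψ.hasCompactSupport u k
  refine const_mul_setIntegral_le_integral ?_ (integrableOn_excess_ball hu.continuous k' z r')
    measurableSet_ball (fun x ↦ by positivity) fun x hx ↦ ?_
  · have hcont := hφ.continuous.abs.rpow_const fun _ ↦ Or.inr (by linarith : 0 ≤ κ)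
    exact hcont.integrable_of_hasCompactSupport
      (hφc.comp_left (g := fun t ↦ |t| ^ κ) (by simp [(by linarith : κ ≠ 0)]))
  · have hw := excess_nonneg u k x
    refine (sub_rpow_mul_excess_le hk (by linarith) x).trans_eq ?_
    rw [energyTest, hψ.eq_one x (mem_ball_iff_norm.1 hx).le, Real.one_rpow, one_mul,
      abs_of_nonneg (sq_nonneg _), ← Real.rpow_natCast, ← Real.rpow_mul hw]
    norm_num

omit [FiniteDimensional ℝ E] [MeasureSpace E] [BorelSpace E]
  [(volume : Measure E).IsAddHaarMeasure] in
/-- Both sides of the hypothesis are homogeneous of degree `2 * κ` in `S` and `d` in `ρ`. -/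
lemma div_le_mul_div_rpow_of_rpow_mul_le {d : ℕ} {κ T T' c D : ℝ} (hd : ((d : ℝ) - 1) * κ = d)
    (hρ : 0 < ρ) (hS : 0 < S) (hN : 0 < N) (hT : 0 ≤ T) (hD : 0 ≤ D)
    (h : (S / N) ^ (2 * κ - 1) * T' ≤ c * (D * (S / ρ) * N ^ p * T) ^ κ) :
    T' / (S * ρ ^ d) ≤ c * D ^ κ * N ^ (p * κ + (2 * κ - 1)) * (T / (S * ρ ^ d)) ^ κ := by
  obtain ⟨X, rfl⟩ : ∃ X, T = X * (S * ρ ^ d) := ⟨T / (S * ρ ^ d), by field_simp⟩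
  obtain ⟨X', rfl⟩ : ∃ X', T' = X' * (S * ρ ^ d) := ⟨T' / (S * ρ ^ d), by field_simp⟩
  have hX : 0 ≤ X := nonneg_of_mul_nonneg_left hT (by positivity)
  rw [mul_div_cancel_right₀ _ (by positivity), mul_div_cancel_right₀ _ (by positivity)]
  have hleft : (S / N) ^ (2 * κ - 1) * (X' * (S * ρ ^ d)) =
      X' / N ^ (2 * κ - 1) * (S ^ (2 * κ) * ρ ^ d) := by
    rw [Real.div_rpow hS.le hN.le, Real.rpow_sub_one hS.ne']
    field_simp
  have hright : (D * (S / ρ) * N ^ p * (X * (S * ρ ^ d))) ^ κ =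
      D ^ κ * (N ^ (p * κ) * X ^ κ) * (S ^ (2 * κ) * ρ ^ d) := by
    have hbase : D * (S / ρ) * N ^ p * (X * (S * ρ ^ d)) =
        D * (N ^ p * X) * (S ^ (2 : ℝ) * ρ ^ ((d : ℝ) - 1)) := by
      rw [Real.rpow_sub_one hρ.ne', Real.rpow_two, Real.rpow_natCast]; field_simp
    rw [hbase, Real.mul_rpow (by positivity) (by positivity),
      Real.mul_rpow (by positivity) (by positivity), Real.mul_rpow (by positivity) hX,
      Real.mul_rpow (by positivity) (by positivity), ← Real.rpow_mul hN.le, ← Real.rpow_mul hS.le,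
      ← Real.rpow_mul hρ.le, hd, Real.rpow_natCast]
  rw [hleft, hright, ← mul_assoc c] at h
  have hscaled := le_of_mul_le_mul_right h (by positivity)
  rw [div_le_iff₀ (by positivity)] at hscaled
  rw [Real.rpow_add hN]
  linarith

/-- The exponent of `N` in one step of the De Giorgi iteration. -/
def deGiorgiExponent (E : Type*) [NormedAddCommGroup E] [InnerProductSpace ℝ E] (p : ℝ) : ℝ :=
  p * sobolevExponent E + (2 * sobolevExponent E - 1)

lemma exists_scaledExcess_step (hE : 2 ≤ Module.finrank ℝ E) (hp : 1 < p) (hC₁ : 0 < C₁)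
    (hC₂ : 0 < C₂) :
    ∃ D > 0, ∀ {u H : E → ℝ} {V : E → E} {z : E} {ρ S η a b r k N : ℝ},
      IsFluxSubsolution p C₁ C₂ u V H → IsGrowthBall p C₁ u H z ρ S η a b → r ≤ ρ → η ≤ k →
      1 ≤ N → 0 < r - ρ / N →
      scaledExcess u z ρ S (r - ρ / N) (k + S / N) ≤
        D * N ^ deGiorgiExponent E p * scaledExcess u z ρ S r k ^ sobolevExponent E := by
  obtain ⟨Cs, hCs, hsobolev⟩ := exists_integral_rpow_le_rpow_integral_fderiv (E := E) volume hE
  obtain ⟨K, hK, hcutoff⟩ := exists_isCutoff E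
  have hD := energyGradConst_pos (by linarith : 0 < p) hC₁ hC₂ hK
  set D := energyGradConst p C₁ C₂ K
  have hκ := one_lt_sobolevExponent hE
  refine ⟨Cs * D ^ sobolevExponent E, by positivity, ?_⟩
  intro u H V z ρ S η a b r k N h l hr hk hN hr0
  have hρ := l.radius_pos
  have hS := l.height_pos
  have hN0 : 0 < N := by linarith
  obtain ⟨ψ, hψ⟩ := hcutoff z (r - ρ / N) r hr0 (sub_lt_self _ (by positivity))
  have hφ := contDiff_energyTest hp.le hψ.contDiff h.contDiff k
  have hlower := sub_rpow_mul_setIntegral_excess_le (by linarith) hκ.le h.contDiff hφ hψ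
    (le_add_of_nonneg_right (by positivity : 0 ≤ S / N))
  have hupper := integral_norm_fderiv_energyTest_le h hp hC₁ hC₂ hK l hN hr hψ hk
  rw [add_sub_cancel_left] at hlower
  have hmain := hlower.trans <| (hsobolev _ hφ
    (hasCompactSupport_energyTest (by linarith) hψ.hasCompactSupport u k)).trans <|
      mul_le_mul_of_nonneg_left (Real.rpow_le_rpow (integral_nonneg fun _ ↦ norm_nonneg _) hupper
        (by linarith)) hCs.le
  have hdim : ((Module.finrank ℝ E : ℝ) - 1) * sobolevExponent E = Module.finrank ℝ E := by
    have : (2 : ℝ) ≤ Module.finrank ℝ E := by exact_mod_cast hE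
    exact mul_div_cancel₀ _ (by linarith)
  exact div_le_mul_div_rpow_of_rpow_mul_le hdim hρ hS hN0 (integral_nonneg (excess_nonneg u k))
    hD.le hmain

lemma setIntegral_excess_le [Nontrivial E] (hu : Continuous u)
    (l : IsGrowthBall p C₁ u H z ρ S η a b) :
    ∫ x in ball z ρ, excess u η x ≤
      2 * S * (ρ ^ Module.finrank ℝ E * volume.real (ball (0 : E) 1)) := by
  calc ∫ x in ball z ρ, excess u η x
      ≤ ∫ x in ball z ρ, 2 * S :=
        setIntegral_mono_on (integrableOn_excess_ball hu η z ρ)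
          (integrableOn_const measure_ball_lt_top.ne) measurableSet_ball
          fun x hx ↦ l.excess_le le_rfl (mem_ball_iff_norm.1 hx)
    _ = 2 * S * (ρ ^ Module.finrank ℝ E * volume.real (ball (0 : E) 1)) := by
        have := l.radius_pos
        rw [setIntegral_const, smul_eq_mul, mul_comm, Measure.real,
          Measure.addHaar_ball volume z this.le, ENNReal.toReal_mul,
          ENNReal.toReal_ofReal (by positivity), Measure.real]

lemma exists_scaledExcess_start (hE : 2 ≤ Module.finrank ℝ E) (hp : 1 < p) (hC₁ : 0 < C₁)
    (hC₂ : 0 < C₂) :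
    ∃ D > 0, ∀ {u H : E → ℝ} {V : E → E} {z : E} {ρ S η a b : ℝ},
      IsFluxSubsolution p C₁ C₂ u V H → IsGrowthBall p C₁ u H z ρ S η a b →
      scaledExcess u z ρ S (ρ / 2) (η + S / 2) ≤ D * (S ^ (p - 1) / (a * ρ ^ p)) := by
  obtain ⟨K, hK, hcutoff⟩ := exists_isCutoff E
  have : Nontrivial E := Module.nontrivial_of_finrank_pos (R := ℝ) (by omega)
  have hcac := caccioppoliConst_pos (by linarith : 0 < p) hC₁ hC₂
  set v := volume.real (ball (0 : E) 1)
  have hv : 0 < v := ENNReal.toReal_pos (measure_ball_pos _ _ one_pos).ne' measure_ball_lt_top.ne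
  refine ⟨4 * caccioppoliConst p C₁ C₂ * (4 * K) ^ p * v, by positivity, ?_⟩
  intro u H V z ρ S η a b h l
  have hρ := l.radius_pos
  have hS := l.height_pos
  have ha := l.source_pos
  obtain ⟨ψ, hψ⟩ := hcutoff z (ρ / 2) ρ (by positivity) (by linarith)
  have hcacc := caccioppoli h hp hC₁ hC₂ l hψ le_rfl le_rfl
  have henergy : 0 ≤ C₁ * ∫ x, energyDensity p ψ u η x :=
    mul_nonneg hC₁.le (integral_nonneg fun x ↦ energyDensity_nonneg (hψ.nonneg x))
  have hlower := sub_rpow_mul_setIntegral_excess_le (κ := 1) (by linarith) le_rfl h.contDiff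
    (contDiff_energyTest hp.le hψ.contDiff h.contDiff η) hψ
    (le_add_of_nonneg_right (by positivity : 0 ≤ S / 2))
  have hbound := setIntegral_excess_le h.contDiff.continuous l
  simp only [add_sub_cancel_left, Real.rpow_one, abs_of_nonneg (energyTest_nonneg hψ.nonneg η _)]
    at hlower
  norm_num at hlower
  rw [sub_half, show 2 * S * (K / (ρ / 2)) = S * (4 * K) / ρ by ring,
    Real.div_rpow (by positivity) hρ.le, Real.mul_rpow hS.le (by positivity)] at hcacc
  set T := ∫ x in ball z (ρ / 2), excess u (η + S / 2) x with hT
  have hmain : a * (S / 2 * T) ≤ caccioppoliConst p C₁ C₂ * (S ^ p * (4 * K) ^ p / ρ ^ p) *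
      (2 * S * (ρ ^ Module.finrank ℝ E * v)) := by
    calc a * (S / 2 * T) ≤ a * ∫ x, energyTest p ψ u η x := by gcongr
      _ ≤ _ := (le_add_of_nonneg_right henergy).trans hcacc
      _ ≤ _ := by gcongr
  rw [scaledExcess, ← hT, div_le_iff₀ (by positivity), Real.rpow_sub_one hS.ne']
  calc T = a * (S / 2 * T) * (2 / (a * S)) := by field_simp
    _ ≤ _ := mul_le_mul_of_nonneg_right hmain (by positivity)
    _ = _ := by field_simp; ring

omit [FiniteDimensional ℝ E] [MeasureSpace E] [BorelSpace E]
  [(volume : Measure E).IsAddHaarMeasure] in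
lemma le_mul_pow_of_le_mul_rpow {X : ℕ → ℝ} {D B β x₀ : ℝ} (hD : 0 < D) (hB : 0 < B) (hβ : 0 < β)
    (hx₀ : 0 < x₀) (hX : ∀ j, 0 ≤ X j) (hstep : ∀ j, X (j + 1) ≤ D * B ^ j * X j ^ (1 + β))
    (hstart : X 0 ≤ x₀) (hsmall : D * x₀ ^ β ≤ B ^ (-(1 / β))) (j : ℕ) :
    X j ≤ x₀ * (B ^ (-(1 / β))) ^ j := by
  set μ := B ^ (-(1 / β)) with hμ
  have hμ0 : 0 < μ := by positivity
  have hμβ : μ ^ β = B⁻¹ := by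
    rw [hμ, ← Real.rpow_mul hB.le, show -(1 / β) * β = -1 by field_simp, Real.rpow_neg_one]
  induction j with
  | zero => simpa using hstart
  | succ j ih =>
    have hpow : (x₀ * μ ^ j) ^ (1 + β) = x₀ * μ ^ j * (x₀ ^ β * B⁻¹ ^ j) := by
      rw [Real.rpow_one_add' (by positivity) (by positivity), Real.mul_rpow hx₀.le (by positivity),
        ← hμβ, Real.rpow_pow_comm hμ0.le]
    calc X (j + 1) ≤ D * B ^ j * X j ^ (1 + β) := hstep j
      _ ≤ D * B ^ j * (x₀ * μ ^ j * (x₀ ^ β * B⁻¹ ^ j)) := by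
          rw [← hpow]; gcongr; exact hX j
      _ = D * x₀ ^ β * (x₀ * μ ^ j) * (B * B⁻¹) ^ j := by rw [mul_pow]; ring
      _ = D * x₀ ^ β * (x₀ * μ ^ j) := by rw [mul_inv_cancel₀ hB.ne', one_pow, mul_one]
      _ ≤ μ * (x₀ * μ ^ j) := by gcongr
      _ = x₀ * μ ^ (j + 1) := by ring

omit [FiniteDimensional ℝ E] [MeasureSpace E] [BorelSpace E]
  [(volume : Measure E).IsAddHaarMeasure] in
lemma exists_pos_forall_tendsto_zero {D B β : ℝ} (hD : 0 < D) (hB : 1 < B) (hβ : 0 < β) :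
    ∃ x₀ > 0, ∀ X : ℕ → ℝ, (∀ j, 0 ≤ X j) → (∀ j, X (j + 1) ≤ D * B ^ j * X j ^ (1 + β)) →
      X 0 ≤ x₀ → Tendsto X atTop (nhds 0) := by
  have hB0 : 0 < B := by linarith
  set μ := B ^ (-(1 / β))
  have hμ : μ < 1 := Real.rpow_lt_one_of_one_lt_of_neg hB (neg_neg_of_pos (by positivity))
  refine ⟨(μ / D) ^ (1 / β), by positivity, fun X hX hstep hstart ↦ ?_⟩
  have hsmall : D * ((μ / D) ^ (1 / β)) ^ β ≤ μ := by
    rw [← Real.rpow_mul (by positivity), one_div_mul_cancel hβ.ne', Real.rpow_one,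
      mul_div_cancel₀ _ hD.ne']
  refine squeeze_zero hX
    (le_mul_pow_of_le_mul_rpow hD hB0 hβ (by positivity) hX hstep hstart hsmall) ?_
  rw [← mul_zero ((μ / D) ^ (1 / β))]
  exact (tendsto_pow_atTop_nhds_zero_of_lt_one (by positivity) hμ).const_mul _

/-- The radii of the De Giorgi iteration, decreasing from `ρ / 2` to `ρ / 4`. -/
def iterRadius (ρ : ℝ) (j : ℕ) : ℝ := ρ / 4 * (1 + (1 / 2) ^ j)

/-- The levels of the De Giorgi iteration, increasing from `η + S / 2` to `η + 3 * S / 4`. -/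
def iterLevel (η S : ℝ) (j : ℕ) : ℝ := η + S * (3 / 4 - (1 / 2) ^ j / 4)

lemma exists_scaledExcess_iter_step (hE : 2 ≤ Module.finrank ℝ E) (hp : 1 < p) (hC₁ : 0 < C₁)
    (hC₂ : 0 < C₂) :
    ∃ D > 0, ∀ {u H : E → ℝ} {V : E → E} {z : E} {ρ S η a b : ℝ},
      IsFluxSubsolution p C₁ C₂ u V H → IsGrowthBall p C₁ u H z ρ S η a b → ∀ j,
      scaledExcess u z ρ S (iterRadius ρ (j + 1)) (iterLevel η S (j + 1)) ≤
        D * (2 ^ deGiorgiExponent E p) ^ j *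
          scaledExcess u z ρ S (iterRadius ρ j) (iterLevel η S j) ^ sobolevExponent E := by
  obtain ⟨D, hD, hstep⟩ := exists_scaledExcess_step hE hp hC₁ hC₂
  refine ⟨D * 8 ^ deGiorgiExponent E p, by positivity, fun {u H V z ρ S η a b} h l j ↦ ?_⟩
  have hρ := l.radius_pos
  have hS := l.height_pos
  have hpow : ((1 : ℝ) / 2) ^ j ≤ 1 := pow_le_one₀ (by norm_num) (by norm_num)
  have : 0 < ((1 : ℝ) / 2) ^ j := by positivity
  have hinv : ((1 : ℝ) / 2) ^ j = 1 / 2 ^ j := by rw [div_pow, one_pow]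
  have hradius : iterRadius ρ (j + 1) = iterRadius ρ j - ρ / (8 * 2 ^ j) := by
    rw [iterRadius, iterRadius, pow_succ, hinv]; field_simp; ring
  have hlevel : iterLevel η S (j + 1) = iterLevel η S j + S / (8 * 2 ^ j) := by
    rw [iterLevel, iterLevel, pow_succ, hinv]; field_simp; ring
  have hN : (8 * 2 ^ j : ℝ) ^ deGiorgiExponent E p =
      8 ^ deGiorgiExponent E p * (2 ^ deGiorgiExponent E p) ^ j := by
    rw [Real.mul_rpow (by norm_num) (by positivity), Real.rpow_pow_comm zero_le_two]
  rw [hradius, hlevel, mul_assoc D, ← hN]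
  refine hstep h l ?_ ?_ ?_ ?_
  · unfold iterRadius; nlinarith
  · unfold iterLevel; nlinarith
  · linarith [one_le_pow₀ (one_le_two : (1 : ℝ) ≤ 2) (n := j)]
  · rw [← hradius, iterRadius]; positivity

/-- The growth lemma: De Giorgi iteration between the levels `η + S / 2` and `η + 3 * S / 4`,
started from the smallness that the source term provides. -/
lemma exists_mul_source_le_height (hE : 2 ≤ Module.finrank ℝ E) (hp : 1 < p) (hC₁ : 0 < C₁)
    (hC₂ : 0 < C₂) :
    ∃ c > 0, ∀ {u H : E → ℝ} {V : E → E} {z : E} {ρ S η a b : ℝ},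
      IsFluxSubsolution p C₁ C₂ u V H → IsGrowthBall p C₁ u H z ρ S η a b →
      η + S ≤ u z → c * (a * ρ ^ p) ≤ S ^ (p - 1) := by
  obtain ⟨D, hD, hstep⟩ := exists_scaledExcess_iter_step hE hp hC₁ hC₂
  obtain ⟨D₀, hD₀, hstart⟩ := exists_scaledExcess_start hE hp hC₁ hC₂
  have hκ := one_lt_sobolevExponent hE
  obtain ⟨β, hβ, hκβ⟩ : ∃ β > 0, sobolevExponent E = 1 + β := ⟨_, sub_pos.2 hκ, by ring⟩
  set B := (2 : ℝ) ^ deGiorgiExponent E p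
  have hB : 1 < B := Real.one_lt_rpow one_lt_two <| by
    have : 0 < p * sobolevExponent E := by positivity
    rw [deGiorgiExponent]; linarith
  obtain ⟨x₀, hx₀, hdecay⟩ := exists_pos_forall_tendsto_zero hD hB hβ
  refine ⟨x₀ / D₀, by positivity, fun {u H V z ρ S η a b} h l hz ↦ ?_⟩
  have hρ := l.radius_pos
  have hS := l.height_pos
  have ha := l.source_pos
  by_contra! hlt
  set X := fun j ↦ scaledExcess u z ρ S (iterRadius ρ j) (iterLevel η S j) with hX
  have hX0 : X 0 ≤ x₀ := by
    have hinit := hstart h l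
    rw [div_mul_eq_mul_div, lt_div_iff₀ hD₀] at hlt
    rw [show ρ / 2 = iterRadius ρ 0 by unfold iterRadius; ring,
      show η + S / 2 = iterLevel η S 0 by unfold iterLevel; ring] at hinit
    refine hinit.trans ?_
    rw [mul_div_assoc', div_le_iff₀ (by positivity)]
    linarith
  have hlim := hdecay X (fun j ↦ scaledExcess_nonneg hρ.le hS.le) (fun j ↦ hκβ ▸ hstep h l j) hX0
  refine (scaledExcess_pos h.contDiff.continuous hρ hS (by positivity : 0 < ρ / 4)
    (by linarith : η + 3 / 4 * S < u z)).not_ge (ge_of_tendsto' hlim fun j ↦ ?_)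
  have hpow : 0 < ((1 : ℝ) / 2) ^ j := by positivity
  refine scaledExcess_le_scaledExcess h.contDiff.continuous hρ.le hS.le ?_ ?_
  · unfold iterRadius; nlinarith
  · unfold iterLevel; nlinarith

end Growth

section MaximumPrinciple

/-- The positive part of `u - k` on `U`, extended by zero. -/
def excessOn {E : Type*} (U : Set E) (u : E → ℝ) (k : ℝ) : E → ℝ := U.indicator (excess u k)

section ExcessOn

variable {E : Type*} {U : Set E} {u : E → ℝ} {k : ℝ}

lemma excessOn_nonneg (U : Set E) (u : E → ℝ) (k : ℝ) (x : E) : 0 ≤ excessOn U u k x :=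
  indicator_nonneg (fun x _ ↦ excess_nonneg u k x) x

lemma excessOn_sq_rpow (U : Set E) (u : E → ℝ) (k s : ℝ) :
    (fun x ↦ (excessOn U u k x ^ 2) ^ (s / 2)) = fun x ↦ excessOn U u k x ^ s := by
  funext x
  rw [← Real.rpow_natCast, ← Real.rpow_mul (excessOn_nonneg U u k x)]
  congr 1
  push_cast
  ring

variable [NormedAddCommGroup E]

lemma excessOn_eventuallyEq_zero (hU : IsOpen U) (hu : Continuous u)
    (hk : ∀ x ∈ frontier U, u x < k) {x : E} (hx : x ∉ U) :
    excessOn U u k =ᶠ[nhds x] 0 := by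
  by_cases hcl : x ∈ closure U
  · have hux : u x < k := hk x ⟨hcl, by rwa [hU.interior_eq]⟩
    filter_upwards [hu.continuousAt.eventually (gt_mem_nhds hux)] with y hy
    exact indicator_apply_eq_zero.2 fun _ ↦ excess_eq_zero hy.le
  · filter_upwards [isClosed_closure.isOpen_compl.mem_nhds hcl] with y hy
    exact indicator_of_notMem (fun hyU ↦ hy (subset_closure hyU)) _

lemma continuous_excessOn (hu : Continuous u) (hk : ∀ x ∈ frontier U, u x < k) :
    Continuous (excessOn U u k) :=
  (continuous_excess hu k).indicator fun x hx ↦ excess_eq_zero (hk x hx).le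

lemma hasCompactSupport_excessOn [ProperSpace E] (hU : Bornology.IsBounded U) (u : E → ℝ) (k : ℝ) :
    HasCompactSupport (excessOn U u k) :=
  HasCompactSupport.intro hU.isCompact_closure fun _ hx ↦
    indicator_of_notMem (fun hxU ↦ hx (subset_closure hxU)) _

lemma hasCompactSupport_excessOn_rpow [ProperSpace E] {s : ℝ} (hs : s ≠ 0)
    (hU : Bornology.IsBounded U) (u : E → ℝ) (k : ℝ) :
    HasCompactSupport fun x ↦ excessOn U u k x ^ s :=
  (hasCompactSupport_excessOn hU u k).comp_left (g := fun t ↦ t ^ s) (Real.zero_rpow hs)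

variable [NormedSpace ℝ E]

lemma contDiff_excessOn_sq (hU : IsOpen U) (hu : ContDiff ℝ 1 u)
    (hk : ∀ x ∈ frontier U, u x < k) : ContDiff ℝ 1 fun x ↦ excessOn U u k x ^ 2 := by
  refine contDiff_iff_contDiffAt.2 fun x ↦ ?_
  by_cases hx : x ∈ U
  · refine (contDiff_max_zero_sq.comp
      (hu.sub (contDiff_const (c := k)))).contDiffAt.congr_of_eventuallyEq ?_
    filter_upwards [hU.mem_nhds hx] with y hy
    simp only [excessOn, indicator_of_mem hy, excess, Function.comp_apply]
  · refine (contDiff_const (c := (0 : ℝ))).contDiffAt.congr_of_eventuallyEq ?_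
    filter_upwards [excessOn_eventuallyEq_zero hU hu.continuous hk hx] with y hy
    simp only [hy, Pi.zero_apply, ne_eq, OfNat.ofNat_ne_zero, not_false_eq_true, zero_pow]

lemma fderiv_excessOn_sq (hU : IsOpen U) (hu : ContDiff ℝ 1 u)
    (hk : ∀ x ∈ frontier U, u x < k) (x : E) :
    fderiv ℝ (fun x ↦ excessOn U u k x ^ 2) x = (2 * excessOn U u k x) • fderiv ℝ u x := by
  by_cases hx : x ∈ U
  · rw [excessOn, indicator_of_mem hx,
      ← (hasFDerivAt_excess_sq (hu.differentiable one_ne_zero x) k).fderiv]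
    refine EventuallyEq.fderiv_eq ?_
    filter_upwards [hU.mem_nhds hx] with y hy
    simp only [indicator_of_mem hy]
  · have hzero : (fun y ↦ excessOn U u k y ^ 2) =ᶠ[nhds x] fun _ ↦ 0 := by
      filter_upwards [excessOn_eventuallyEq_zero hU hu.continuous hk hx] with y hy
      simp only [hy, Pi.zero_apply, ne_eq, OfNat.ofNat_ne_zero, not_false_eq_true, zero_pow]
    rw [hzero.fderiv_eq, excessOn, indicator_of_notMem hx]
    simp only [fderiv_fun_const, Pi.zero_apply, mul_zero, zero_smul]

variable {p : ℝ}

lemma contDiff_excessOn_rpow (hp : 1 ≤ p) (hU : IsOpen U) (hu : ContDiff ℝ 1 u)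
    (hk : ∀ x ∈ frontier U, u x < k) : ContDiff ℝ 1 fun x ↦ excessOn U u k x ^ (p + 1) := by
  rw [← excessOn_sq_rpow]
  refine (contDiff_excessOn_sq hU hu hk).rpow_const_of_le (m := 1) ?_
  push_cast
  linarith

lemma hasFDerivAt_excessOn_rpow (hp : 1 ≤ p) (hU : IsOpen U) (hu : ContDiff ℝ 1 u)
    (hk : ∀ x ∈ frontier U, u x < k) (x : E) :
    HasFDerivAt (fun x ↦ excessOn U u k x ^ (p + 1))
      (((p + 1) * (excessOn U u k x ^ (p - 1) * excessOn U u k x)) • fderiv ℝ u x) x := by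
  have hsq : HasFDerivAt (fun x ↦ excessOn U u k x ^ 2) _ x :=
    ((contDiff_excessOn_sq hU hu hk).differentiable one_ne_zero x).hasFDerivAt
  have hpow := hsq.rpow_const (p := (p + 1) / 2) (Or.inr (by linarith))
  rw [fderiv_excessOn_sq hU hu hk, smul_smul, ← Real.rpow_natCast,
    ← Real.rpow_mul (excessOn_nonneg U u k x), excessOn_sq_rpow] at hpow
  convert hpow using 2
  rw [show ((2 : ℕ) : ℝ) * ((p + 1) / 2 - 1) = p - 1 by push_cast; ring]
  ring

end ExcessOn

variable {E : Type*} [NormedAddCommGroup E] [NormedSpace ℝ E] {p C₁ C₂ B k : ℝ} {U : Set E}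
  {u : E → ℝ}

/-- The noncritical points of `U` at which `u` exceeds `k`. -/
def activeSet (U : Set E) (u : E → ℝ) (k : ℝ) : Set E := {x ∈ U | k < u x ∧ fderiv ℝ u x ≠ 0}

lemma isOpen_activeSet (hU : IsOpen U) (hu : ContDiff ℝ 1 u) (k : ℝ) :
    IsOpen (activeSet U u k) :=
  hU.inter ((isOpen_lt continuous_const hu.continuous).inter
    (isOpen_ne_fun (hu.continuous_fderiv one_ne_zero) continuous_const))

lemma excessOn_mul_norm_fderiv_eq_zero {x : E} (hx : x ∉ activeSet U u k) :
    excessOn U u k x * ‖fderiv ℝ u x‖ = 0 := by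
  by_cases hxU : x ∈ U
  · rcases le_or_gt (u x) k with hle | hlt
    · rw [excessOn, indicator_of_mem hxU, excess_eq_zero hle, zero_mul]
    · have hgrad : fderiv ℝ u x = 0 := by_contra fun hne ↦ hx ⟨hxU, hlt, hne⟩
      rw [hgrad, norm_zero, mul_zero]
  · rw [excessOn, indicator_of_notMem hxU, zero_mul]

variable [MeasureSpace E] {V : E → E} {H : E → ℝ}

lemma IsFluxSubsolution.energy_le_of_mem (h : IsFluxSubsolution p C₁ C₂ u V H) (hp : 1 < p)
    (hC₁ : 0 < C₁) (hB : 0 ≤ B) {x : E} (hx : x ∈ U → -(B * ‖fderiv ℝ u x‖ ^ (p - 1)) ≤ H x) :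
    C₁ * (excessOn U u k x * ‖fderiv ℝ u x‖ ^ p) -
        C₁ ^ (1 - p) * B ^ p * (activeSet U u k).indicator (fun y ↦ excessOn U u k y ^ (p + 1)) x ≤
      excessOn U u k x ^ 2 * H x + (2 * excessOn U u k x) * fderiv ℝ u x (V x) := by
  by_cases hact : x ∈ activeSet U u k
  · have hw := excessOn_nonneg U u k x
    have hsource := mul_le_mul_of_nonneg_left (hx hact.1) (sq_nonneg (excessOn U u k x))
    have hflux := mul_le_mul_of_nonneg_left (h.coercive x) (mul_nonneg zero_le_two hw)
    have hyoung := mul_le_mul_of_nonneg_left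
      (rpow_sub_one_mul_le_add hp (norm_nonneg (fderiv ℝ u x)) (mul_nonneg hB hw) hC₁) hw
    rw [Real.mul_rpow hB hw] at hyoung
    rw [indicator_of_mem hact, Real.rpow_add_one' hw (by linarith)]
    linarith
  · have hzero := excessOn_mul_norm_fderiv_eq_zero hact
    rw [indicator_of_notMem hact]
    rcases mul_eq_zero.1 hzero with hw | hgrad
    · simp [hw]
    · by_cases hxU : x ∈ U
      · have hH := hx hxU
        rw [hgrad, Real.zero_rpow (by linarith), mul_zero, neg_zero] at hH
        rw [hgrad, Real.zero_rpow (by linarith), norm_eq_zero.1 hgrad]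
        simpa using mul_nonneg (sq_nonneg (excessOn U u k x)) hH
      · simp [excessOn, hxU]

variable [FiniteDimensional ℝ E] [BorelSpace E] [(volume : Measure E).IsAddHaarMeasure]

lemma integrable_excessOn_mul {f : E → ℝ} (hb : Bornology.IsBounded U) (hu : Continuous u)
    (hk : ∀ x ∈ frontier U, u x < k) (hf : Continuous f) :
    Integrable fun x ↦ excessOn U u k x * f x :=
  ((continuous_excessOn hu hk).mul hf).integrable_of_hasCompactSupport
    (hasCompactSupport_excessOn hb u k).mul_right

lemma integrable_excessOn_rpow {s : ℝ} (hs : 0 < s) (hb : Bornology.IsBounded U)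
    (hu : Continuous u) (hk : ∀ x ∈ frontier U, u x < k) :
    Integrable fun x ↦ excessOn U u k x ^ s :=
  ((continuous_excessOn hu hk).rpow_const fun _ ↦ Or.inr hs.le).integrable_of_hasCompactSupport
    (hasCompactSupport_excessOn_rpow hs.ne' hb u k)

lemma integral_excessOn_rpow_pos {s : ℝ} (hs : 0 < s) (hb : Bornology.IsBounded U)
    (hu : Continuous u) (hk : ∀ x ∈ frontier U, u x < k) (hx : ∃ x ∈ U, k < u x) :
    0 < ∫ x, excessOn U u k x ^ s := by
  obtain ⟨x₀, hx₀U, hx₀⟩ := hx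
  refine ((continuous_excessOn hu hk).rpow_const fun _ ↦
    Or.inr hs.le).integral_pos_of_hasCompactSupport_nonneg_nonzero
    (hasCompactSupport_excessOn_rpow hs.ne' hb u k)
    (fun x ↦ Real.rpow_nonneg (excessOn_nonneg U u k x) s) (x := x₀) ?_
  rw [excessOn, indicator_of_mem hx₀U, excess_eq_sub hx₀.le]
  exact (Real.rpow_pos_of_pos (sub_pos.2 hx₀) s).ne'

lemma IsFluxSubsolution.integral_excessOn_mul_le (h : IsFluxSubsolution p C₁ C₂ u V H)
    (hp : 1 < p) (hC₁ : 0 < C₁) (hB : 0 ≤ B) (hU : IsOpen U) (hb : Bornology.IsBounded U)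
    (hk : ∀ x ∈ frontier U, u x < k)
    (hH : ∀ᵐ x, x ∈ U → -(B * ‖fderiv ℝ u x‖ ^ (p - 1)) ≤ H x) :
    C₁ * ∫ x, excessOn U u k x * ‖fderiv ℝ u x‖ ^ p ≤
      C₁ ^ (1 - p) * B ^ p * ∫ x in activeSet U u k, excessOn U u k x ^ (p + 1) := by
  have hcont := h.contDiff.continuous
  have hmeas := (isOpen_activeSet hU h.contDiff k).measurableSet
  obtain ⟨hint, hle⟩ := h.integrable_and_integral_le_zero hp.le
    (contDiff_excessOn_sq hU h.contDiff hk)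
    ((hasCompactSupport_excessOn hb u k).comp_left (g := fun t ↦ t ^ 2) (zero_pow two_ne_zero))
    fun x ↦ sq_nonneg _
  have hintE := (integrable_excessOn_mul hb hcont hk
    (h.continuous_norm_fderiv_rpow (by linarith : 0 ≤ p))).const_mul C₁
  have hintY := ((integrable_excessOn_rpow (by linarith : 0 < p + 1) hb hcont hk).indicator
    hmeas).const_mul (C₁ ^ (1 - p) * B ^ p)
  have hmono := integral_mono_ae (hintE.sub hintY) hint <| by
    filter_upwards [hH] with x hx
    simpa [fderiv_excessOn_sq hU h.contDiff hk] using
      h.energy_le_of_mem (k := k) hp hC₁ hB hx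
  simp only [Pi.sub_apply] at hmono
  rw [integral_sub hintE hintY, integral_const_mul, integral_const_mul,
    integral_indicator hmeas] at hmono
  linarith

lemma IsFluxSubsolution.integral_norm_fderiv_excessOn_rpow_le
    (h : IsFluxSubsolution p C₁ C₂ u V H) (hp : 1 < p) (hC₁ : 0 < C₁) (hB : 0 ≤ B)
    (hU : IsOpen U) (hb : Bornology.IsBounded U) (hk : ∀ x ∈ frontier U, u x < k)
    (hH : ∀ᵐ x, x ∈ U → -(B * ‖fderiv ℝ u x‖ ^ (p - 1)) ≤ H x) :
    ∫ x, ‖fderiv ℝ (fun y ↦ excessOn U u k y ^ (p + 1)) x‖ ≤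
      (p + 1) * (C₁ ^ (1 - p) * B ^ p / C₁ + 1) *
        ∫ x in activeSet U u k, excessOn U u k x ^ (p + 1) := by
  have hcont := h.contDiff.continuous
  have hmeas := (isOpen_activeSet hU h.contDiff k).measurableSet
  have hintE := integrable_excessOn_mul hb hcont hk
    (h.continuous_norm_fderiv_rpow (by linarith : 0 ≤ p))
  have hintY := (integrable_excessOn_rpow (by linarith : 0 < p + 1) hb hcont hk).indicator hmeas
  have hpointwise : ∀ x, ‖fderiv ℝ (fun y ↦ excessOn U u k y ^ (p + 1)) x‖ ≤
      (p + 1) * (excessOn U u k x * ‖fderiv ℝ u x‖ ^ p +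
        (activeSet U u k).indicator (fun y ↦ excessOn U u k y ^ (p + 1)) x) := by
    intro x
    have hw := excessOn_nonneg U u k x
    rw [(hasFDerivAt_excessOn_rpow hp.le hU h.contDiff hk x).fderiv, norm_smul,
      Real.norm_of_nonneg (by positivity), mul_assoc]
    refine mul_le_mul_of_nonneg_left ?_ (by linarith)
    by_cases hact : x ∈ activeSet U u k
    · have hyoung := mul_le_mul_of_nonneg_left
        (rpow_sub_one_mul_le_add hp hw (norm_nonneg (fderiv ℝ u x)) one_pos) hw
      rw [Real.one_rpow] at hyoung
      rw [indicator_of_mem hact, Real.rpow_add_one' hw (by linarith)]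
      linarith
    · rw [mul_assoc, excessOn_mul_norm_fderiv_eq_zero hact, indicator_of_notMem hact,
        mul_zero, add_zero]
      positivity
  have hmono := integral_mono_of_nonneg (Eventually.of_forall fun x ↦ norm_nonneg _)
    ((hintE.add hintY).const_mul (p + 1)) (Eventually.of_forall hpointwise)
  rw [integral_const_mul, integral_add' hintE hintY, integral_indicator hmeas] at hmono
  refine hmono.trans ?_
  rw [mul_assoc]
  refine mul_le_mul_of_nonneg_left ?_ (by linarith)
  have henergy := h.integral_excessOn_mul_le hp hC₁ hB hU hb hk hH
  rw [← le_div_iff₀' hC₁] at henergy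
  linear_combination henergy

lemma rpow_setIntegral_le_mul_integral_rpow {F : Type*} [MeasurableSpace F] {μ : Measure F}
    {s : Set F} {f : F → ℝ} {κ : ℝ} (hκ : 1 < κ) (hs : μ s ≠ ⊤) (hf0 : ∀ x, 0 ≤ f x)
    (hf : Integrable f μ) (hfκ : Integrable (fun x ↦ f x ^ κ) μ) :
    (∫ x in s, f x ∂μ) ^ κ ≤ μ.real s ^ (κ - 1) * ∫ x, f x ^ κ ∂μ := by
  have hint_nonneg : 0 ≤ ∫ x, f x ^ κ ∂μ := integral_nonneg fun x ↦ Real.rpow_nonneg (hf0 x) κ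
  rcases eq_or_ne (μ s) 0 with hzero | hpos
  · rw [setIntegral_measure_zero f hzero, Real.zero_rpow (by linarith)]
    positivity
  have hreal : 0 < μ.real s := ENNReal.toReal_pos hpos hs
  have hjensen := (convexOn_rpow hκ.le).map_set_average_le
    (continuousOn_id.rpow_const fun _ _ ↦ Or.inr (by linarith)) isClosed_Ici hpos hs
    (Eventually.of_forall hf0) hf.integrableOn hfκ.integrableOn
  simp only [setAverage_eq, smul_eq_mul] at hjensen
  rw [Real.mul_rpow (by positivity) (integral_nonneg hf0), Real.inv_rpow hreal.le,
    inv_mul_le_iff₀ (by positivity), ← mul_assoc, ← div_eq_mul_inv,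
    ← Real.rpow_sub_one hreal.ne'] at hjensen
  exact hjensen.trans (mul_le_mul_of_nonneg_left
    (setIntegral_le_integral hfκ (Eventually.of_forall fun x ↦ Real.rpow_nonneg (hf0 x) κ))
    (by positivity))

lemma IsFluxSubsolution.exists_one_le_mul_volume_activeSet (hE : 2 ≤ Module.finrank ℝ E)
    (h : IsFluxSubsolution p C₁ C₂ u V H) (hp : 1 < p) (hC₁ : 0 < C₁) (hB : 0 ≤ B)
    (hU : IsOpen U) (hb : Bornology.IsBounded U)
    (hH : ∀ᵐ x, x ∈ U → -(B * ‖fderiv ℝ u x‖ ^ (p - 1)) ≤ H x) :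
    ∃ C, ∀ k, (∀ x ∈ frontier U, u x < k) → (∃ x ∈ U, k < u x) →
      1 ≤ C * volume.real (activeSet U u k) ^ (sobolevExponent E - 1) := by
  obtain ⟨Cs, hCs, hsob⟩ := exists_integral_rpow_le_rpow_integral_fderiv (E := E) volume hE
  have hκ := one_lt_sobolevExponent hE
  set κ := sobolevExponent E
  set C' := (p + 1) * (C₁ ^ (1 - p) * B ^ p / C₁ + 1)
  have hC'0 : 0 ≤ C' := by positivity
  refine ⟨Cs * C' ^ κ, fun k hk hx₀ ↦ ?_⟩
  have hcont := h.contDiff.continuous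
  set Y : E → ℝ := fun x ↦ excessOn U u k x ^ (p + 1)
  have hY0 : ∀ x, 0 ≤ Y x := fun x ↦ Real.rpow_nonneg (excessOn_nonneg U u k x) _
  have hYκ_eq : (fun x ↦ Y x ^ κ) = fun x ↦ excessOn U u k x ^ ((p + 1) * κ) :=
    funext fun x ↦ (Real.rpow_mul (excessOn_nonneg U u k x) _ _).symm
  have hexp : 0 < (p + 1) * κ := by positivity
  set I := ∫ x in activeSet U u k, Y x
  have hI0 : 0 ≤ I := integral_nonneg hY0
  have hYκ : ∫ x, Y x ^ κ ≤ Cs * C' ^ κ * I ^ κ := by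
    have hsobY := hsob Y (contDiff_excessOn_rpow hp.le hU h.contDiff hk)
      (hasCompactSupport_excessOn_rpow (by linarith) hb u k)
    simp only [abs_of_nonneg (hY0 _)] at hsobY
    rw [mul_assoc, ← Real.mul_rpow hC'0 hI0]
    refine hsobY.trans (mul_le_mul_of_nonneg_left (Real.rpow_le_rpow ?_ ?_ (by linarith)) hCs.le)
    · exact integral_nonneg fun x ↦ norm_nonneg _
    · exact h.integral_norm_fderiv_excessOn_rpow_le hp hC₁ hB hU hb hk hH
  have hIpos : 0 < I ^ κ := by
    refine (Real.rpow_nonneg hI0 κ).lt_of_ne' fun hzero ↦ ?_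
    rw [hzero, mul_zero, hYκ_eq] at hYκ
    exact (integral_excessOn_rpow_pos hexp hb hcont hk hx₀).not_ge hYκ
  have hholder := rpow_setIntegral_le_mul_integral_rpow hκ
    (hb.subset fun x hx ↦ hx.1 : Bornology.IsBounded (activeSet U u k)).measure_lt_top.ne hY0
    (integrable_excessOn_rpow (by linarith) hb hcont hk)
    (hYκ_eq ▸ integrable_excessOn_rpow hexp hb hcont hk)
  refine le_of_mul_le_mul_right ?_ hIpos
  calc 1 * I ^ κ ≤ volume.real (activeSet U u k) ^ (κ - 1) * ∫ x, Y x ^ κ := by rwa [one_mul]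
    _ ≤ volume.real (activeSet U u k) ^ (κ - 1) * (Cs * C' ^ κ * I ^ κ) := by gcongr
    _ = _ := by ring

lemma volume_activeSet_tendsto_zero (hU : IsOpen U) (hb : Bornology.IsBounded U)
    (hu : ContDiff ℝ 1 u) {m : ℝ} (hm : ∀ x ∈ U, u x ≤ m) :
    Tendsto (fun δ ↦ volume.real (activeSet U u (m - δ))) (nhdsWithin 0 (Ioi 0)) (nhds 0) := by
  have hempty : ⋂ δ > 0, activeSet U u (m - δ) = ∅ := by
    refine eq_empty_of_forall_notMem fun x hx ↦ ?_
    simp only [mem_iInter] at hx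
    obtain ⟨hxU, -, hgrad⟩ := hx 1 one_pos
    have hge : m ≤ u x := le_of_forall_pos_sub_le fun δ hδ ↦ (hx δ hδ).2.1.le
    refine hgrad (IsLocalMax.fderiv_eq_zero ?_)
    filter_upwards [hU.mem_nhds hxU] with y hy using (hm y hy).trans hge
  have hlim := tendsto_measure_biInter_gt (μ := volume) (a := (0 : ℝ))
    (s := fun δ ↦ activeSet U u (m - δ))
    (fun δ _ ↦ (isOpen_activeSet hU hu _).measurableSet.nullMeasurableSet)
    (fun i j _ hij x hx ↦ ⟨hx.1, lt_of_le_of_lt (by linarith) hx.2.1, hx.2.2⟩)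
    ⟨1, one_pos, (hb.subset fun x hx ↦ hx.1).measure_lt_top.ne⟩
  rw [hempty, measure_empty] at hlim
  exact (ENNReal.tendsto_toReal ENNReal.zero_ne_top).comp hlim

/- At levels `k` increasing to an interior maximum the active sets shrink to `∅`, as the gradient
vanishes at maximum points, while Sobolev's inequality bounds their volume from below. -/
theorem IsFluxSubsolution.le_of_forall_frontier_le (hE : 2 ≤ Module.finrank ℝ E)
    (h : IsFluxSubsolution p C₁ C₂ u V H) (hp : 1 < p) (hC₁ : 0 < C₁) (hB : 0 ≤ B)
    (hU : IsOpen U) (hb : Bornology.IsBounded U)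
    (hH : ∀ᵐ x, x ∈ U → -(B * ‖fderiv ℝ u x‖ ^ (p - 1)) ≤ H x)
    (hk : ∀ x ∈ frontier U, u x ≤ k) : ∀ x ∈ U, u x ≤ k := by
  intro x hx
  by_contra! hlt
  obtain ⟨y, hy, hymax⟩ := hb.isCompact_closure.exists_isMaxOn ⟨x, subset_closure hx⟩
    h.contDiff.continuous.continuousOn
  have hky : k < u y := hlt.trans_le (hymax (subset_closure hx))
  have hyU : y ∈ U := by
    by_contra hyU
    exact hky.not_ge (hk y ⟨hy, by rwa [hU.interior_eq]⟩)
  obtain ⟨C, hC⟩ := h.exists_one_le_mul_volume_activeSet hE hp hC₁ hB hU hb hH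
  have hlim := ((volume_activeSet_tendsto_zero hU hb h.contDiff fun z hz ↦
    hymax (subset_closure hz)).rpow_const
      (Or.inr (sub_nonneg.2 (one_lt_sobolevExponent hE).le))).const_mul C
  rw [Real.zero_rpow (sub_ne_zero.2 (one_lt_sobolevExponent hE).ne'), mul_zero] at hlim
  refine absurd (ge_of_tendsto hlim ?_) (not_le.2 one_pos)
  filter_upwards [Ioo_mem_nhdsGT (sub_pos.2 hky)] with δ hδ
  exact hC _ (fun z hz ↦ (hk z hz).trans_lt (by linarith [hδ.2])) ⟨y, hyU, by linarith [hδ.1]⟩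

end MaximumPrinciple

section SphericalMaximum

variable {n : ℕ} {u : Euc n → ℝ}

lemma exists_norm_eq_and_eq_sphMax [NeZero n] (hu : Continuous u) {r : ℝ} (hr : 0 ≤ r) :
    ∃ z, ‖z‖ = r ∧ u z = sphMax u r := by
  obtain ⟨z, hz, hmax⟩ := (isCompact_sphere (0 : Euc n) r).exists_sSup_image_eq
    (NormedSpace.sphere_nonempty.2 hr) hu.continuousOn
  exact ⟨z, mem_sphere_zero_iff_norm.1 hz, hmax.symm⟩

lemma le_sphMax_norm (hu : Continuous u) (x : Euc n) : u x ≤ sphMax u ‖x‖ :=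
  le_csSup ((isCompact_sphere 0 ‖x‖).bddAbove_image hu.continuousOn)
    ⟨x, mem_sphere_zero_iff_norm.2 rfl, rfl⟩

lemma sphMax_eq_sSup_image_unitSphere (u : Euc n → ℝ) {r : ℝ} (hr : 0 < r) :
    sphMax u r = sSup ((fun x ↦ u (r • x)) '' sphere 0 1) := by
  rw [sphMax, ← image_image u (fun x ↦ r • x), image_smul, smul_sphere' hr.ne', smul_zero,
    mul_one, Real.norm_of_nonneg hr.le]

lemma continuousOn_sphMax (hu : Continuous u) : ContinuousOn (sphMax u) (Ioi 0) :=
  Continuous.continuousOn ((isCompact_sphere (0 : Euc n) 1).continuous_sSup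
    (f := fun (r : ℝ) x ↦ u (r • x)) (hu.comp (continuous_fst.smul continuous_snd)))
    |>.congr fun _ hr ↦ sphMax_eq_sSup_image_unitSphere u hr

end SphericalMaximum

section RadialStep

lemma mul_le_two_mul_mul_sub_of_forall_le_sub {M : ℝ → ℝ} {r₁ r₂ ρ d : ℝ} (hρ : 0 < ρ)
    (hd : 0 ≤ d) (hr : ρ ≤ r₂ - r₁)
    (hstep : ∀ s₁ s₂, r₁ ≤ s₁ → s₂ ≤ r₂ → ρ ≤ s₂ - s₁ → d ≤ M s₂ - M s₁) :
    d * (r₂ - r₁) ≤ 2 * ρ * (M r₂ - M r₁) := by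
  set N := ⌊(r₂ - r₁) / ρ⌋₊
  have hN : (1 : ℝ) ≤ N := by
    exact_mod_cast Nat.le_floor (by rw [Nat.cast_one]; exact (one_le_div hρ).2 hr)
  have hle : N * ρ ≤ r₂ - r₁ :=
    (le_div_iff₀ hρ).1 (Nat.floor_le (div_nonneg (hρ.le.trans hr) hρ.le))
  have hlt : r₂ - r₁ < (N + 1) * ρ := (div_lt_iff₀ hρ).1 (Nat.lt_floor_add_one _)
  set δ := (r₂ - r₁) / N
  have hδ : ρ ≤ δ := by rwa [le_div_iff₀' (by linarith)]
  have hNδ : N * δ = r₂ - r₁ := mul_div_cancel₀ _ (by linarith)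
  have hsum : N • d ≤ ∑ i ∈ Finset.range N, (M (r₁ + (i + 1 : ℕ) * δ) - M (r₁ + i * δ)) := by
    refine (Finset.card_nsmul_le_sum (Finset.range N) _ d fun i hi ↦ ?_).trans_eq' (by simp)
    have hi : ((i + 1 : ℕ) : ℝ) ≤ N := by exact_mod_cast Finset.mem_range.1 hi
    refine hstep _ _ (by nlinarith [Nat.cast_nonneg (α := ℝ) i]) (by nlinarith) ?_
    push_cast
    linarith
  rw [Finset.sum_range_sub (fun i : ℕ ↦ M (r₁ + i * δ)), hNδ, nsmul_eq_mul] at hsum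
  simp only [add_sub_cancel, Nat.cast_zero, zero_mul, add_zero] at hsum
  calc d * (r₂ - r₁) ≤ d * (2 * (N * ρ)) := by gcongr; nlinarith
    _ = 2 * ρ * (N * d) := by ring
    _ ≤ 2 * ρ * (M r₂ - M r₁) := by gcongr

lemma exists_criticalWidth {p C₁ c a s : ℝ} (hC₁ : 0 < C₁) (hc : 0 < c) (hp : 0 < p)
    (ha : 0 < a) (hs : 0 < s) :
    ∃ ρ > 0, c * (a * (ρ / 2) ^ p) = (C₁ / 4 / (a * s ^ (-p))) ^ (p - 1) ∧
      ∀ d D, C₁ / 4 / (a * s ^ (-p)) * d ≤ 2 * ρ * D →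
        C₁ * s * d ≤ 16 * ((C₁ / 4) ^ (p - 1) / c) ^ (1 / p) * D := by
  set K := ((C₁ / 4) ^ (p - 1) / c) ^ (1 / p) with hK
  have hKpow : c * K ^ p = (C₁ / 4) ^ (p - 1) := by
    rw [hK, ← Real.rpow_mul (by positivity), one_div_mul_cancel hp.ne', Real.rpow_one]
    field_simp
  refine ⟨2 * (K * s ^ (p - 1) / a), by positivity, ?_, fun d D hdD ↦ ?_⟩
  · have hspow : (s ^ (p - 1)) ^ p = (s ^ p) ^ (p - 1) := by
      rw [← Real.rpow_mul hs.le, ← Real.rpow_mul hs.le, mul_comm]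
    rw [mul_div_cancel_left₀ _ two_ne_zero, Real.rpow_neg hs.le,
      show C₁ / 4 / (a * (s ^ p)⁻¹) = C₁ / 4 * s ^ p / a by field_simp,
      Real.div_rpow (by positivity) ha.le, Real.div_rpow (by positivity) ha.le,
      Real.mul_rpow (by positivity) (by positivity), Real.mul_rpow (by positivity) (by positivity),
      hspow, ← hKpow, Real.rpow_sub_one ha.ne']
    field_simp
  · rw [Real.rpow_neg hs.le, Real.rpow_sub_one hs.ne'] at hdD
    have hmul := mul_le_mul_of_nonneg_left hdD (by positivity : 0 ≤ 4 * a * s / s ^ p)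
    field_simp at hmul ⊢
    linarith

variable {n : ℕ}

/-- `u` obeys the maximum principle on centred balls and the growth estimate with constant `c`:
what the radial argument uses of the inequality `div V ≥ H`. -/
structure HasRadialGrowth (p C₁ c : ℝ) (u H : Euc n → ℝ) : Prop where
  continuous : Continuous u
  le_sphMax : ∀ x r, 0 < r → ‖x‖ ≤ r → u x ≤ sphMax u r
  growth : ∀ ⦃z ρ S η a b⦄, IsGrowthBall p C₁ u H z ρ S η a b → η + S ≤ u z →
    c * (a * ρ ^ p) ≤ S ^ (p - 1)

namespace HasRadialGrowth

variable [NeZero n] {p C₁ c : ℝ} {u H : Euc n → ℝ}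

lemma monotoneOn_sphMax (h : HasRadialGrowth p C₁ c u H) : MonotoneOn (sphMax u) (Ioi 0) := by
  intro r hr s hs hrs
  obtain ⟨z, hz, hmax⟩ := exists_norm_eq_and_eq_sphMax h.continuous (mem_Ioi.1 hr).le
  exact hmax ▸ h.le_sphMax z s hs (hz.trans_le hrs)

lemma growth_annulus_of_pos (h : HasRadialGrowth p C₁ c u H) {s₁ s₂ a b lo ε : ℝ} (hs₁ : 0 < s₁)
    (hs : s₁ < s₂) (ha : 0 < a) (hb : 0 ≤ b)
    (hH : ∀ᵐ x, x ∈ Ann n s₁ s₂ → lo < u x → a ≤ H x + b * ‖fderiv ℝ u x‖ ^ p) (hε : 0 < ε)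
    (hbε : b * (sphMax u s₂ - sphMax u s₁ + ε) ≤ C₁ / 4)
    (hlo : lo < 2 * sphMax u s₁ - sphMax u s₂ - ε) :
    c * (a * ((s₂ - s₁) / 2) ^ p) ≤ (sphMax u s₂ - sphMax u s₁ + ε) ^ (p - 1) := by
  obtain ⟨z, hz, hmax⟩ := exists_norm_eq_and_eq_sphMax (r := (s₁ + s₂) / 2) h.continuous
    (by linarith)
  have hle : sphMax u s₁ ≤ u z :=
    hmax ▸ h.monotoneOn_sphMax hs₁ (mem_Ioi.2 (by linarith)) (by linarith)
  have hmono := h.monotoneOn_sphMax hs₁ (mem_Ioi.2 (hs₁.trans hs)) hs.le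
  have hball : ∀ x : Euc n, ‖x - z‖ < (s₂ - s₁) / 2 → x ∈ Ann n s₁ s₂ := by
    intro x hx
    have hx₂ := norm_sub_norm_le x z
    have hx₁ := norm_sub_norm_le z x
    rw [norm_sub_rev] at hx₁
    constructor <;> linarith
  refine h.growth (z := z) (η := u z - (sphMax u s₂ - sphMax u s₁ + ε)) (b := b)
    ⟨by linarith, by linarith, ha, hb, hbε, fun x hx ↦ ?_, ?_⟩ (by linarith)
  · linarith [h.le_sphMax x s₂ (hs₁.trans hs) (hball x hx).2.le]
  · filter_upwards [hH] with x hx hxz hη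
    exact hx (hball x hxz) (by linarith)

lemma growth_annulus (h : HasRadialGrowth p C₁ c u H) (hp : 1 < p) {s₁ s₂ a b lo : ℝ}
    (hs₁ : 0 < s₁) (hs : s₁ < s₂) (ha : 0 < a) (hb : 0 ≤ b)
    (hH : ∀ᵐ x, x ∈ Ann n s₁ s₂ → lo < u x → a ≤ H x + b * ‖fderiv ℝ u x‖ ^ p)
    (hbM : b * (sphMax u s₂ - sphMax u s₁) < C₁ / 4)
    (hlo : lo < 2 * sphMax u s₁ - sphMax u s₂) :
    c * (a * ((s₂ - s₁) / 2) ^ p) ≤ (sphMax u s₂ - sphMax u s₁) ^ (p - 1) := by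
  set D := sphMax u s₂ - sphMax u s₁
  have hlim : Tendsto (fun ε : ℝ ↦ (D + ε) ^ (p - 1)) (nhdsWithin 0 (Ioi 0))
      (nhds (D ^ (p - 1))) := by
    have hcont : Continuous fun ε : ℝ ↦ (D + ε) ^ (p - 1) :=
      (continuous_const.add continuous_id).rpow_const fun x ↦ Or.inr (by linarith)
    simpa using (hcont.tendsto 0).mono_left nhdsWithin_le_nhds
  have hcoeff : ∀ᶠ ε in nhds (0 : ℝ), b * (D + ε) < C₁ / 4 :=
    (by fun_prop : Continuous fun ε ↦ b * (D + ε)).continuousAt.eventually_lt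
      continuousAt_const (by simpa using hbM)
  have hlevel : ∀ᶠ ε in nhds (0 : ℝ), lo < 2 * sphMax u s₁ - sphMax u s₂ - ε :=
    continuousAt_const.eventually_lt (by fun_prop) (by simpa using hlo)
  refine ge_of_tendsto hlim ?_
  filter_upwards [self_mem_nhdsWithin, nhdsWithin_le_nhds hcoeff, nhdsWithin_le_nhds hlevel]
    with ε hε hbε hloε
  exact h.growth_annulus_of_pos hs₁ hs ha hb hH hε hbε.le hloε

/-- Below the radius at which the two sides of the growth estimate balance, the annulus is crossed
in one step; a wider annulus is cut into pieces of that critical width. -/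
lemma growth_annulus_or (h : HasRadialGrowth p C₁ c u H) (hp : 1 < p) (hC₁ : 0 < C₁)
    (hc : 0 < c) {r₁ r₂ a s lo : ℝ} (hr₁ : 0 < r₁) (hr : r₁ < r₂) (ha : 0 < a) (hs : 0 < s)
    (hH : ∀ᵐ x, x ∈ Ann n r₁ r₂ → lo < u x → a ≤ H x + a * s ^ (-p) * ‖fderiv ℝ u x‖ ^ p)
    (hlo : lo < 2 * sphMax u r₁ - sphMax u r₂) :
    c * (a * ((r₂ - r₁) / 2) ^ p) ≤ (sphMax u r₂ - sphMax u r₁) ^ (p - 1) ∨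
      C₁ * s * (r₂ - r₁) ≤
        16 * ((C₁ / 4) ^ (p - 1) / c) ^ (1 / p) * (sphMax u r₂ - sphMax u r₁) := by
  obtain ⟨ρ, hρ, hcritical, hscale⟩ := exists_criticalWidth hC₁ hc (one_pos.trans hp) ha hs
  set b := a * s ^ (-p)
  have hb : 0 < b := by positivity
  have hstep : ∀ s₁ s₂, r₁ ≤ s₁ → s₂ ≤ r₂ → ρ ≤ s₂ - s₁ →
      C₁ / 4 / b ≤ sphMax u s₂ - sphMax u s₁ := by
    intro s₁ s₂ hs₁ hs₂ hρs
    by_contra! hlt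
    have hM₁ := h.monotoneOn_sphMax hr₁ (mem_Ioi.2 (hr₁.trans_le hs₁)) hs₁
    have hM₂ := h.monotoneOn_sphMax (mem_Ioi.2 (by linarith)) (mem_Ioi.2 (hr₁.trans hr)) hs₂
    have hM := h.monotoneOn_sphMax (mem_Ioi.2 (hr₁.trans_le hs₁)) (mem_Ioi.2 (by linarith))
      (by linarith : s₁ ≤ s₂)
    have hgrowth := h.growth_annulus hp (s₁ := s₁) (s₂ := s₂) (lo := lo) (by linarith)
      (by linarith) ha hb.le (hH.mono fun x hx hxs ↦ hx ⟨hs₁.trans_lt hxs.1, hxs.2.trans_le hs₂⟩)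
      ((lt_div_iff₀' hb).1 hlt) (by linarith)
    refine (hgrowth.trans_lt (Real.rpow_lt_rpow (sub_nonneg.2 hM) hlt (by linarith))).not_ge ?_
    rw [← hcritical]
    gcongr
  rcases lt_or_ge (b * (sphMax u r₂ - sphMax u r₁)) (C₁ / 4) with hlow | hhigh
  · exact Or.inl (h.growth_annulus hp hr₁ hr ha hb.le hH hlow hlo)
  right
  refine hscale _ _ ?_
  rcases lt_or_ge (r₂ - r₁) ρ with hnarrow | hwide
  · have hD := (div_le_iff₀' hb).2 hhigh
    have hD0 : 0 ≤ C₁ / 4 / b := by positivity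
    nlinarith
  · exact mul_le_two_mul_mul_sub_of_forall_le_sub hρ (by positivity) hwide hstep

end HasRadialGrowth

end RadialStep

section WeakSolution

variable {n : ℕ}

/-- A coefficient of the differential inequality: measurable, nonnegative and locally bounded. -/
structure IsCoefficient (b : Euc n → ℝ) : Prop where
  measurable : Measurable b
  nonneg : ∀ x, 0 ≤ b x
  locBdd : LocBdd b

/-- An admissible source nonlinearity: continuous and nonnegative on `[0, ∞)`, positive on
`(0, ∞)`. -/
structure IsNonlinearity (g : ℝ → ℝ) : Prop where
  continuousOn : ContinuousOn g (Ici 0)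
  nonneg : ∀ t ∈ Ici (0 : ℝ), 0 ≤ g t
  pos : ∀ t, 0 < t → 0 < g t

/-- The right-hand side `q g(u) - b |Du|^α` of the differential inequality written as
`div A(x, Du) ≥ H`. -/
def sourceTerm (α : ℝ) (b q : Euc n → ℝ) (g : ℝ → ℝ) (u : Euc n → ℝ) (x : Euc n) : ℝ :=
  q x * g (u x) - b x * ‖fderiv ℝ u x‖ ^ α

lemma IsCoefficient.locallyIntegrable {b : Euc n → ℝ} (hb : IsCoefficient b) :
    LocallyIntegrable b := by
  refine (locallyIntegrable_iff).2 fun K hK ↦ ?_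
  obtain ⟨C, hC⟩ := hb.locBdd K hK
  refine Measure.integrableOn_of_bounded hK.measure_lt_top.ne hb.measurable.aestronglyMeasurable
    (M := C) ((ae_restrict_iff' hK.measurableSet).2 (Eventually.of_forall fun x hx ↦ ?_))
  rw [Real.norm_of_nonneg (hb.nonneg x)]
  exact hC x hx

lemma norm_gradient_eq_norm_fderiv (u : Euc n → ℝ) (x : Euc n) : ‖gradient u x‖ = ‖fderiv ℝ u x‖ :=
  (InnerProductSpace.toDual ℝ (Euc n)).symm.norm_map _

lemma continuous_gradient {u : Euc n → ℝ} (hu : ContDiff ℝ 1 u) : Continuous (gradient u) :=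
  (InnerProductSpace.toDual ℝ (Euc n)).symm.continuous.comp (hu.continuous_fderiv one_ne_zero)

variable {p C₁ C₂ α : ℝ} {b q u : Euc n → ℝ} {g : ℝ → ℝ}

lemma isFluxSubsolution_of_isWeakSol {A : Euc n → Euc n → Euc n} (hA : StructCond A p C₁ C₂)
    (hα : 0 ≤ α) (hb : IsCoefficient b) (hq : IsCoefficient q) (hg : IsNonlinearity g)
    (hu : ContDiff ℝ 1 u) (hu0 : ∀ x, 0 ≤ u x)
    (hsol : IsWeakSol A b α (fun x ↦ q x * g (u x)) univ u) :
    IsFluxSubsolution p C₁ C₂ u (fun x ↦ A x (gradient u x)) (sourceTerm α b q g u) := by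
  have hgu : Continuous fun x ↦ g (u x) := hg.continuousOn.comp_continuous hu.continuous hu0
  have hDu : Continuous fun x ↦ ‖fderiv ℝ u x‖ ^ α :=
    (hu.continuous_fderiv one_ne_zero).norm.rpow_const fun _ ↦ Or.inr hα
  have hgain : LocallyIntegrable fun x ↦ q x * g (u x) := hq.locallyIntegrable.mul_continuous hgu
  have hdrift : LocallyIntegrable fun x ↦ b x * ‖fderiv ℝ u x‖ ^ α :=
    hb.locallyIntegrable.mul_continuous hDu
  refine ⟨hu, fun x ↦ ?_, fun x ↦ ?_, ?_, hgain.sub hdrift, fun φ hφ hc hφ0 ↦ ?_⟩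
  · have hcoercive := (hA.2 x (gradient u x)).1
    rwa [inner_gradient_left, norm_gradient_eq_norm_fderiv] at hcoercive
  · exact norm_gradient_eq_norm_fderiv u x ▸ (hA.2 x (gradient u x)).2
  · have hgrad := (continuous_gradient hu).measurable
    exact (hA.1.comp (measurable_id.prodMk hgrad)).aestronglyMeasurable
  · have htest := hsol φ hφ hc (subset_univ _) hφ0
    simp only [setIntegral_univ, norm_gradient_eq_norm_fderiv] at htest
    have hflux : ∫ x, ⟪A x (gradient u x), gradient φ x⟫ = ∫ x, fderiv ℝ φ x (A x (gradient u x)) :=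
      integral_congr_ae (Eventually.of_forall fun x ↦ by
        simp only [real_inner_comm (gradient φ x), inner_gradient_left])
    have hsplit : ∫ x, φ x * sourceTerm α b q g u x =
        (∫ x, q x * g (u x) * φ x) - ∫ x, b x * ‖fderiv ℝ u x‖ ^ α * φ x := by
      rw [← integral_sub]
      · exact integral_congr_ae (Eventually.of_forall fun x ↦ by simp only [sourceTerm]; ring)
      · exact hgain.integrable_smul_right_of_hasCompactSupport hφ.continuous hc
      · exact hdrift.integrable_smul_right_of_hasCompactSupport hφ.continuous hc
    linarith

lemma IsFluxSubsolution.le_sphMax (hn : 2 ≤ n) (hp : 1 < p) (hC₁ : 0 < C₁) (hα : p - 1 ≤ α)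
    (hb : IsCoefficient b) (hq : IsCoefficient q) (hg : IsNonlinearity g) (hu0 : ∀ x, 0 ≤ u x)
    {V : Euc n → Euc n} (h : IsFluxSubsolution p C₁ C₂ u V (sourceTerm α b q g u)) {x : Euc n}
    {r : ℝ} (hr : 0 < r) (hx : ‖x‖ ≤ r) : u x ≤ sphMax u r := by
  rcases hx.eq_or_lt with rfl | hx
  · exact le_sphMax_norm h.contDiff.continuous x
  obtain ⟨B, hB⟩ := hb.locBdd _ (isCompact_closedBall (0 : Euc n) r)
  obtain ⟨D, hD⟩ := (isCompact_closedBall (0 : Euc n) r).exists_bound_of_continuousOn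
    (h.continuous_norm_fderiv_rpow (sub_nonneg.2 hα)).continuousOn
  have hx0 : (0 : Euc n) ∈ closedBall 0 r := mem_closedBall_self hr.le
  have hB0 : 0 ≤ B := (hb.nonneg 0).trans (hB 0 hx0)
  have hD0 : 0 ≤ D := (norm_nonneg _).trans (hD 0 hx0)
  refine h.le_of_forall_frontier_le (by rwa [finrank_euclideanSpace_fin]) hp hC₁
    (mul_nonneg hB0 hD0) (isOpen_ball (x := 0) (ε := r)) isBounded_ball
    (Eventually.of_forall fun y hy ↦ ?_) (fun y hy ↦ ?_) x (mem_ball_zero_iff.2 hx)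
  · have hyK := ball_subset_closedBall hy
    have hsource := mul_nonneg (hq.nonneg y) (hg.nonneg _ (hu0 y))
    have hdrift : b y * ‖fderiv ℝ u y‖ ^ α ≤ B * D * ‖fderiv ℝ u y‖ ^ (p - 1) := by
      rw [← sub_add_cancel α (p - 1), Real.rpow_add_of_nonneg (norm_nonneg _) (by linarith)
        (by linarith), ← mul_assoc]
      gcongr
      exacts [hB y hyK, (le_abs_self _).trans (hD y hyK)]
    simp only [sourceTerm]
    linarith
  · rw [frontier_ball _ hr.ne', mem_sphere_zero_iff_norm] at hy
    exact hy ▸ le_sphMax_norm h.contDiff.continuous y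

theorem exists_hasRadialGrowth (hn : 2 ≤ n) (hp : 1 < p) (hC₁ : 0 < C₁) (hC₂ : 0 < C₂)
    (hα : p - 1 ≤ α) :
    ∃ c > 0, ∀ {A : Euc n → Euc n → Euc n} {b q : Euc n → ℝ} {g : ℝ → ℝ} {u : Euc n → ℝ},
      StructCond A p C₁ C₂ → IsCoefficient b → IsCoefficient q → IsNonlinearity g →
      ContDiff ℝ 1 u → (∀ x, 0 ≤ u x) → IsWeakSol A b α (fun x ↦ q x * g (u x)) univ u →
      HasRadialGrowth p C₁ c u (sourceTerm α b q g u) := by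
  have hrank : 2 ≤ Module.finrank ℝ (Euc n) := by rwa [finrank_euclideanSpace_fin]
  obtain ⟨c, hc, hgrowth⟩ := exists_mul_source_le_height hrank hp hC₁ hC₂
  refine ⟨c, hc, fun hA hb hq hg hu hu0 hsol ↦ ?_⟩
  have hflux := isFluxSubsolution_of_isWeakSol hA (by linarith) hb hq hg hu hu0 hsol
  exact ⟨hu.continuous, fun x r hr hx ↦ hflux.le_sphMax hn hp hC₁ hα hb hq hg hu0 hr hx,
    fun _ _ _ _ _ _ hball ↦ hgrowth hflux hball⟩

end WeakSolution

section RadialProfile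

variable {n : ℕ}

/-- What the differential inequality leaves of the spherical maxima `M`: they are continuous and
nondecreasing, and across every annulus where `q ≥ Q`, `b ≤ β` and `g ≥ G` their increment is
controlled from below by the source or by the drift. -/
structure IsRadialProfile (p α c : ℝ) (b q : Euc n → ℝ) (g M : ℝ → ℝ) : Prop where
  monotoneOn : MonotoneOn M (Ioi 0)
  continuousOn : ContinuousOn M (Ioi 0)
  step : ∀ ⦃r₁ r₂ Q β G lo : ℝ⦄, 0 < r₁ → r₁ < r₂ → 0 < Q → 0 ≤ β → 0 < G →
    (∀ᵐ x, x ∈ Ann n r₁ r₂ → Q ≤ q x ∧ b x ≤ β) →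
    (∀ t, lo < t → t ≤ M r₂ → G ≤ g t) → lo < 2 * M r₁ - M r₂ →
    c * (Q * G * (r₂ - r₁) ^ p) ≤ (M r₂ - M r₁) ^ (p - 1) ∨
      c * ((Q * G) ^ (1 / α) * (r₂ - r₁)) ≤ β ^ (1 / α) * (M r₂ - M r₁)

lemma le_sub_mul_rpow_add_of_two_mul_le {p α a b β s w X : ℝ} (hα : 0 ≤ α) (hαp : α ≤ p)
    (hb : b ≤ β) (hβ : 0 ≤ β) (hs : 0 < s) (hX : 0 ≤ X) (ha : β * s ^ α = a) (hw : 2 * a ≤ w) :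
    a ≤ w - b * X ^ α + a * s ^ (-p) * X ^ p := by
  have hdrift : b * X ^ α ≤ a + a * s ^ (-p) * X ^ p :=
    calc b * X ^ α ≤ β * (s ^ α + s ^ (α - p) * X ^ p) := by
          gcongr
          exact rpow_le_rpow_add_rpow_sub_mul_rpow hα hαp hs hX
      _ = a + a * s ^ (-p) * X ^ p := by rw [sub_eq_add_neg, Real.rpow_add hs, ← ha]; ring
  linarith

variable {p C₁ c α : ℝ} {b q u : Euc n → ℝ} {g : ℝ → ℝ}

namespace HasRadialGrowth

lemma ae_mul_le_source (h : HasRadialGrowth p C₁ c u (sourceTerm α b q g u))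
    (hq : IsCoefficient q) {r₁ r₂ Q β G lo : ℝ} (hr₂ : 0 < r₂) (hG : 0 ≤ G)
    (hae : ∀ᵐ x, x ∈ Ann n r₁ r₂ → Q ≤ q x ∧ b x ≤ β)
    (hg : ∀ t, lo < t → t ≤ sphMax u r₂ → G ≤ g t) :
    ∀ᵐ x, x ∈ Ann n r₁ r₂ → lo < u x → Q * G ≤ q x * g (u x) ∧ b x ≤ β := by
  filter_upwards [hae] with x hx hxr hlo
  exact ⟨mul_le_mul (hx hxr).1 (hg _ hlo (h.le_sphMax x _ hr₂ hxr.2.le)) hG (hq.nonneg x),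
    (hx hxr).2⟩

variable [NeZero n]

lemma growth_annulus_of_nonpos_drift (h : HasRadialGrowth p C₁ c u (sourceTerm α b q g u))
    (hp : 1 < p) (hC₁ : 0 < C₁) {r₁ r₂ w lo : ℝ} (hr₁ : 0 < r₁) (hr : r₁ < r₂) (hw : 0 < w)
    (hae : ∀ᵐ x, x ∈ Ann n r₁ r₂ → lo < u x → w ≤ q x * g (u x) ∧ b x ≤ 0)
    (hlo : lo < 2 * sphMax u r₁ - sphMax u r₂) :
    c * (w / 2 * ((r₂ - r₁) / 2) ^ p) ≤ (sphMax u r₂ - sphMax u r₁) ^ (p - 1) := by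
  refine h.growth_annulus hp hr₁ hr (half_pos hw) le_rfl ?_
    (by rw [zero_mul]; positivity) hlo
  filter_upwards [hae] with x hx hxr hxlo
  obtain ⟨hsource, hdrift⟩ := hx hxr hxlo
  have := mul_nonpos_of_nonpos_of_nonneg hdrift (Real.rpow_nonneg (norm_nonneg (fderiv ℝ u x)) α)
  simp only [sourceTerm]
  linarith

lemma growth_annulus_or_of_drift_le (h : HasRadialGrowth p C₁ c u (sourceTerm α b q g u))
    (hp : 1 < p) (hC₁ : 0 < C₁) (hc : 0 < c) (hα : 0 < α) (hαp : α ≤ p) {r₁ r₂ w β lo : ℝ}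
    (hr₁ : 0 < r₁) (hr : r₁ < r₂) (hw : 0 < w) (hβ : 0 < β)
    (hae : ∀ᵐ x, x ∈ Ann n r₁ r₂ → lo < u x → w ≤ q x * g (u x) ∧ b x ≤ β)
    (hlo : lo < 2 * sphMax u r₁ - sphMax u r₂) :
    c * (w / 2 * ((r₂ - r₁) / 2) ^ p) ≤ (sphMax u r₂ - sphMax u r₁) ^ (p - 1) ∨
      C₁ * (w / (2 * β)) ^ (1 / α) * (r₂ - r₁) ≤
        16 * ((C₁ / 4) ^ (p - 1) / c) ^ (1 / p) * (sphMax u r₂ - sphMax u r₁) := by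
  have hs : 0 < (w / (2 * β)) ^ (1 / α) := by positivity
  have hbalance : β * ((w / (2 * β)) ^ (1 / α)) ^ α = w / 2 := by
    rw [← Real.rpow_mul (by positivity), one_div_mul_cancel hα.ne', Real.rpow_one]
    field_simp
  refine h.growth_annulus_or hp hC₁ hc hr₁ hr (half_pos hw) hs ?_ hlo
  filter_upwards [hae] with x hx hxr hxlo
  exact le_sub_mul_rpow_add_of_two_mul_le hα.le hαp (hx hxr hxlo).2 hβ.le hs (norm_nonneg _)
    hbalance (by linarith [(hx hxr hxlo).1])

end HasRadialGrowth

variable [NeZero n]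

theorem exists_isRadialProfile (hp : 1 < p) (hC₁ : 0 < C₁) (hc : 0 < c) (hα : 0 < α)
    (hαp : α ≤ p) :
    ∃ c' > 0, ∀ {b q u : Euc n → ℝ} {g : ℝ → ℝ}, IsCoefficient q →
      HasRadialGrowth p C₁ c u (sourceTerm α b q g u) →
      IsRadialProfile p α c' b q g (sphMax u) := by
  set K := 16 * ((C₁ / 4) ^ (p - 1) / c) ^ (1 / p)
  have hK : 0 < K := by positivity
  refine ⟨min (c / (2 * 2 ^ p)) (C₁ / (K * 2 ^ (1 / α))), by positivity, fun {b q u g} hq h ↦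
    ⟨h.monotoneOn_sphMax, continuousOn_sphMax h.continuous, ?_⟩⟩
  intro r₁ r₂ Q β G lo hr₁ hr hQ hβ hG hae hg hlo
  have hd : 0 < r₂ - r₁ := sub_pos.2 hr
  have hsource := h.ae_mul_le_source hq (hr₁.trans hr) hG.le hae hg
  have hc₁ : min (c / (2 * 2 ^ p)) (C₁ / (K * 2 ^ (1 / α))) * (Q * G * (r₂ - r₁) ^ p) ≤
      c * (Q * G / 2 * ((r₂ - r₁) / 2) ^ p) :=
    calc _ ≤ c / (2 * 2 ^ p) * (Q * G * (r₂ - r₁) ^ p) := by gcongr; exact min_le_left _ _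
      _ = _ := by rw [Real.div_rpow hd.le zero_le_two]; field_simp
  rcases hβ.eq_or_lt with rfl | hβ
  · exact Or.inl (hc₁.trans (h.growth_annulus_of_nonpos_drift hp hC₁ hr₁ hr (by positivity)
      hsource hlo))
  refine (h.growth_annulus_or_of_drift_le hp hC₁ hc hα hαp hr₁ hr (by positivity) hβ hsource
    hlo).imp hc₁.trans fun hdrift ↦ ?_
  calc _ ≤ C₁ / (K * 2 ^ (1 / α)) * ((Q * G) ^ (1 / α) * (r₂ - r₁)) := by
        gcongr; exact min_le_right _ _
    _ = β ^ (1 / α) * (C₁ * (Q * G / (2 * β)) ^ (1 / α) * (r₂ - r₁)) / K := by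
        rw [Real.div_rpow (by positivity) (by positivity), Real.mul_rpow zero_le_two hβ.le]
        field_simp
    _ ≤ β ^ (1 / α) * (K * (sphMax u r₂ - sphMax u r₁)) / K := by gcongr
    _ = _ := by field_simp

end RadialProfile

section LowerEnvelope

variable {g : ℝ → ℝ} {θ t m : ℝ}

lemma le_ginf (hθ : 1 < θ) (ht : 0 < t) (h : ∀ s ∈ Ioo (t / θ) (θ * t), m ≤ g s) :
    m ≤ ginf g θ t :=
  le_csInf (.image g ⟨t, div_lt_self ht hθ, lt_mul_of_one_lt_left ht hθ⟩) (forall_mem_image.2 h)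

namespace IsNonlinearity

lemma ginf_le (hg : IsNonlinearity g) {s : ℝ} (h : 0 ≤ t / θ) (hs : s ∈ Ioo (t / θ) (θ * t)) :
    ginf g θ t ≤ g s :=
  csInf_le ⟨0, forall_mem_image.2 fun _ hx ↦ hg.nonneg _ (h.trans hx.1.le)⟩ (mem_image_of_mem g hs)

lemma ginf_lt_iff (hg : IsNonlinearity g) (hθ : 1 < θ) (ht : 0 < t) :
    ginf g θ t < m ↔ ∃ s ∈ Ioo (t / θ) (θ * t), g s < m := by
  refine ⟨fun h ↦ ?_, fun ⟨s, hs, hsm⟩ ↦ (hg.ginf_le (by positivity) hs).trans_lt hsm⟩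
  by_contra! hle
  exact h.not_ge (le_ginf hθ ht hle)

lemma exists_minimum (hg : IsNonlinearity g) {lo hi : ℝ} (hlo : 0 < lo) (hhi : lo ≤ hi) :
    ∃ G > 0, (∀ t ∈ Icc lo hi, G ≤ g t) ∧
      ∀ ⦃θ t⦄, 0 < t → t / θ < lo → hi < θ * t → ginf g θ t ≤ G := by
  obtain ⟨s, hs, hmin⟩ := isCompact_Icc.exists_isMinOn (nonempty_Icc.2 hhi)
    (hg.continuousOn.mono fun x hx ↦ mem_Ici.2 (hlo.le.trans hx.1))
  refine ⟨g s, hg.pos s (hlo.trans_le hs.1), hmin, fun θ t ht hlt hgt ↦ ?_⟩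
  have hθ : 0 < θ := pos_of_mul_pos_left (hlo.trans_le (hhi.trans hgt.le)) ht.le
  exact hg.ginf_le (by positivity) ⟨hlt.trans_le hs.1, hs.2.trans_lt hgt⟩

lemma aemeasurable_ginf (hg : IsNonlinearity g) (hθ : 1 < θ) :
    AEMeasurable (ginf g θ) (volume.restrict (Ioi 0)) := by
  refine aemeasurable_restrict_of_measurable_subtype measurableSet_Ioi
    (measurable_of_Iio fun m ↦ IsOpen.measurableSet ?_)
  have hθ₀ : 0 < θ := one_pos.trans hθ
  have hsub : (fun t : Ioi (0 : ℝ) ↦ ginf g θ t) ⁻¹' Iio m =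
      Subtype.val ⁻¹' ⋃ s ∈ {s | g s < m}, Ioo (s / θ) (θ * s) := by
    ext ⟨t, ht⟩
    simp only [mem_preimage, mem_Iio, hg.ginf_lt_iff hθ ht, mem_iUnion, mem_ofPred_eq, exists_prop,
      mem_Ioo, div_lt_iff₀' hθ₀]
    exact exists_congr fun s ↦ ⟨fun h ↦ ⟨h.2, h.1.symm⟩, fun h ↦ ⟨h.2.symm, h.1⟩⟩
  rw [hsub]
  exact (isOpen_biUnion fun s _ ↦ isOpen_Ioo).preimage continuous_subtype_val

end IsNonlinearity

end LowerEnvelope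

section PosWeight

/-- A measurable function on `(0, ∞)` with a positive lower bound on each compact subinterval. -/
structure IsPosWeight (w : ℝ → ℝ) : Prop where
  aemeasurable : AEMeasurable w (volume.restrict (Ioi 0))
  exists_le : ∀ ⦃x y⦄, 0 < x → ∃ m > 0, ∀ t ∈ Icc x y, m ≤ w t

/-- The increment between `x` and `y` of a primitive of `w ^ (-e)`. -/
def negPowIntegral (w : ℝ → ℝ) (e x y : ℝ) : ℝ := ∫ t in x..y, w t ^ (-e)

lemma IsNonlinearity.isPosWeight_ginf {g : ℝ → ℝ} {θ : ℝ} (hg : IsNonlinearity g) (hθ : 1 < θ) :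
    IsPosWeight (ginf g θ) where
  aemeasurable := hg.aemeasurable_ginf hθ
  exists_le x y hx := by
    have hθ₀ : 0 < θ := one_pos.trans hθ
    rcases lt_or_ge y x with hyx | hxy
    · exact ⟨1, one_pos, by simp [Icc_eq_empty hyx.not_ge]⟩
    obtain ⟨G, hG, hle, -⟩ := hg.exists_minimum (lo := x / θ) (hi := θ * y) (by positivity)
      ((div_le_self hx.le hθ.le).trans (hxy.trans (le_mul_of_one_le_left (hx.le.trans hxy) hθ.le)))
    refine ⟨G, hG, fun t ht ↦ le_ginf hθ (hx.trans_le ht.1) fun s hs ↦ hle s ⟨?_, ?_⟩⟩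
    · exact (div_le_div_of_nonneg_right ht.1 hθ₀.le).trans hs.1.le
    · exact hs.2.le.trans (mul_le_mul_of_nonneg_left ht.2 hθ₀.le)

lemma IsPosWeight.mul_id {w : ℝ → ℝ} (hw : IsPosWeight w) : IsPosWeight fun t ↦ w t * t where
  aemeasurable := hw.aemeasurable.mul aemeasurable_id'
  exists_le x y hx := by
    obtain ⟨m, hm, hle⟩ := hw.exists_le (y := y) hx
    exact ⟨m * x, by positivity, fun t ht ↦
      mul_le_mul (hle t ht) ht.1 hx.le (hm.le.trans (hle t ht))⟩

namespace IsPosWeight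

variable {w : ℝ → ℝ} {e x y z G : ℝ}

lemma pos (hw : IsPosWeight w) (hx : 0 < x) : 0 < w x := by
  obtain ⟨m, hm, hle⟩ := hw.exists_le (y := x) hx
  exact hm.trans_le (hle x ⟨le_rfl, le_rfl⟩)

lemma intervalIntegrable (hw : IsPosWeight w) (he : 0 ≤ e) (hx : 0 < x) (hy : 0 < y) :
    IntervalIntegrable (fun t ↦ w t ^ (-e)) volume x y := by
  obtain ⟨m, hm, hle⟩ := hw.exists_le (y := max x y) (lt_min hx hy)
  have hmeas : AEMeasurable (fun t ↦ w t ^ (-e)) (volume.restrict (uIoc x y)) :=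
    (hw.aemeasurable.mono_measure (Measure.restrict_mono
      (fun t ht ↦ mem_Ioi.2 ((lt_min hx hy).trans ht.1)) le_rfl)).pow_const _
  rw [intervalIntegrable_iff]
  refine IntegrableOn.of_bound (by simp [uIoc]) hmeas.aestronglyMeasurable (m ^ (-e)) ?_
  filter_upwards [ae_restrict_mem measurableSet_uIoc] with t ht
  have hmt := hle t ⟨ht.1.le, ht.2⟩
  rw [Real.norm_of_nonneg (Real.rpow_nonneg (hm.le.trans hmt) _)]
  exact Real.rpow_le_rpow_of_nonpos hm hmt (by linarith)

lemma negPowIntegral_add (hw : IsPosWeight w) (he : 0 ≤ e) (hx : 0 < x) (hy : 0 < y)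
    (hz : 0 < z) :
    negPowIntegral w e x y + negPowIntegral w e y z = negPowIntegral w e x z :=
  intervalIntegral.integral_add_adjacent_intervals (hw.intervalIntegrable he hx hy)
    (hw.intervalIntegrable he hy hz)

lemma negPowIntegral_nonneg (hw : IsPosWeight w) (hx : 0 < x) (hxy : x ≤ y) :
    0 ≤ negPowIntegral w e x y :=
  intervalIntegral.integral_nonneg hxy fun _ ht ↦
    Real.rpow_nonneg (hw.pos (hx.trans_le ht.1)).le _

lemma negPowIntegral_anti_left (hw : IsPosWeight w) (he : 0 ≤ e) (hx : 0 < x) (hxy : x ≤ y)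
    (hyz : y ≤ z) : negPowIntegral w e y z ≤ negPowIntegral w e x z := by
  have hy := hx.trans_le hxy
  rw [← hw.negPowIntegral_add he hx hy (hy.trans_le hyz)]
  exact le_add_of_nonneg_left (hw.negPowIntegral_nonneg hx hxy)

lemma negPowIntegral_rpow_add_le (hw : IsPosWeight w) (he : 0 ≤ e) (hx : 0 < x) (hxy : x ≤ y)
    (hyz : y ≤ z) {r : ℝ} (hr : 1 ≤ r) :
    negPowIntegral w e x y ^ r + negPowIntegral w e y z ^ r ≤ negPowIntegral w e x z ^ r := by
  have hy := hx.trans_le hxy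
  rw [← hw.negPowIntegral_add he hx hy (hy.trans_le hyz)]
  exact Real.add_rpow_le_rpow_add (hw.negPowIntegral_nonneg hx hxy)
    (hw.negPowIntegral_nonneg hy hyz) hr

lemma mul_rpow_neg_le_negPowIntegral (hw : IsPosWeight w) (he : 0 ≤ e) (hx : 0 < x)
    (hxy : x ≤ y) (hG : ∀ t ∈ Icc x y, w t ≤ G) : (y - x) * G ^ (-e) ≤ negPowIntegral w e x y :=
  calc (y - x) * G ^ (-e) = ∫ _ in x..y, G ^ (-e) := by simp
    _ ≤ negPowIntegral w e x y := intervalIntegral.integral_mono_on hxy (by simp)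
        (hw.intervalIntegrable he hx (hx.trans_le hxy)) fun t ht ↦
          Real.rpow_le_rpow_of_nonpos (hw.pos (hx.trans_le ht.1)) (hG t ht) (by linarith)

lemma negPowIntegral_le_mul_rpow_neg (hw : IsPosWeight w) (he : 0 ≤ e) (hx : 0 < x)
    (hxy : x ≤ y) (hG₀ : 0 < G) (hG : ∀ t ∈ Icc x y, G ≤ w t) :
    negPowIntegral w e x y ≤ (y - x) * G ^ (-e) :=
  calc negPowIntegral w e x y ≤ ∫ _ in x..y, G ^ (-e) :=
        intervalIntegral.integral_mono_on hxy (hw.intervalIntegrable he hx (hx.trans_le hxy))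
          (by simp) fun t ht ↦ Real.rpow_le_rpow_of_nonpos hG₀ (hG t ht) (by linarith)
    _ = (y - x) * G ^ (-e) := by simp

end IsPosWeight

end PosWeight

section Chaining

lemma of_ratio_mem_Icc_sq {P : ℝ → ℝ → Prop} {x₀ l : ℝ} (hx₀ : 0 < x₀) (hl : 1 < l)
    (block : ∀ ⦃x y⦄, x₀ ≤ x → l * x ≤ y → y ≤ l ^ 2 * x → P x y)
    (trans : ∀ ⦃x y z⦄, x₀ ≤ x → x ≤ y → y ≤ z → P x y → P y z → P x z)
    {x y : ℝ} (hx : x₀ ≤ x) (hxy : l * x ≤ y) : P x y := by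
  obtain ⟨N, hN⟩ := pow_unbounded_of_one_lt (y / x) hl
  replace hN : y ≤ l ^ (N + 2) * x := by
    rw [div_lt_iff₀ (hx₀.trans_le hx)] at hN
    refine hN.le.trans ?_
    have := hx₀.trans_le hx
    gcongr
    exacts [hl.le, N.le_add_right 2]
  induction N generalizing x with
  | zero => exact block hx hxy (by simpa using hN)
  | succ N ih =>
    rcases le_or_gt y (l ^ 2 * x) with hshort | hlong
    · exact block hx hxy hshort
    have hx' : 0 < x := hx₀.trans_le hx
    have hxl : x ≤ l * x := le_mul_of_one_le_left hx'.le hl.le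
    refine trans hx hxl hxy (block hx le_rfl ?_) (ih (hx.trans hxl) ?_ ?_)
    · rw [sq, mul_assoc]
      exact le_mul_of_one_le_left (hx'.le.trans hxl) hl.le
    · rw [← mul_assoc, ← sq]
      exact hlong.le
    · rwa [← mul_assoc, ← pow_succ, Nat.add_right_comm]

lemma of_short_of_factor_step {M : ℝ → ℝ} {P : ℝ → Prop} {R R' τ : ℝ} (hRR : R ≤ R')
    (hmono : MonotoneOn M (Icc R R')) (hcont : ContinuousOn M (Icc R R')) (hpos : 0 < M R)
    (hτ : 1 < τ)
    (short : ∀ ⦃s⦄, R ≤ s → s ≤ R' → M R' ≤ τ * M s → P s)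
    (step : ∀ ⦃s s'⦄, R ≤ s → s < s' → s' ≤ R' → M s' = τ * M s → P s' → P s) :
    P R := by
  obtain ⟨N, hN⟩ := pow_unbounded_of_one_lt (M R' / M R) hτ
  rw [div_lt_iff₀ hpos] at hN
  suffices ∀ s ∈ Icc R R', M R' ≤ τ ^ N * M s → P s from this R ⟨le_rfl, hRR⟩ hN.le
  intro s hs hMs
  have hMpos : ∀ s ∈ Icc R R', 0 < M s := fun s hs ↦
    hpos.trans_le (hmono ⟨le_rfl, hRR⟩ hs hs.1)
  clear hN
  induction N generalizing s with
  | zero =>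
    refine short hs.1 hs.2 (hMs.trans ?_)
    rw [pow_zero]
    exact mul_le_mul_of_nonneg_right hτ.le (hMpos s hs).le
  | succ N ih =>
    rcases le_or_gt (M R') (τ * M s) with hshort | hlong
    · exact short hs.1 hs.2 hshort
    have hgrow : M s < τ * M s := lt_mul_of_one_lt_left (hMpos s hs) hτ
    obtain ⟨s', hs', hMs'⟩ := intermediate_value_Icc hs.2
      (hcont.mono (Icc_subset_Icc_left hs.1)) ⟨hgrow.le, hlong.le⟩
    have hss' : s < s' := hs'.1.lt_of_ne (by rintro rfl; exact hgrow.ne hMs')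
    refine step hs.1 hss' hs'.2 hMs' (ih s' ⟨hs.1.trans hs'.1, hs'.2⟩ ?_)
    rwa [hMs', ← mul_assoc, ← pow_succ]

end Chaining

section LevelComparison

/-- Parameters of the chaining of levels: along one link the maximum grows by the factor `l ^ 2`,
and the levels of `g` that matter on such a link stay in the window `(t / a, a * t)`, which is
itself contained, with room for one further link, in `(t / θ, θ * t)`. -/
structure IsLinkRatio (θ a l : ℝ) : Prop where
  one_lt_window : 1 < a
  one_lt : 1 < l
  sq_mul_lt : l ^ 2 * (a + 1) < 2 * a
  mul_sq_lt : a * l ^ 2 < θ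

lemma exists_isLinkRatio {θ : ℝ} (hθ : 1 < θ) : ∃ a l, IsLinkRatio θ a l := by
  have ha : 1 < √θ := Real.lt_sqrt_of_sq_lt (by simpa using hθ)
  obtain ⟨w, hw, hwa⟩ := exists_between (show 1 < 2 * √θ / (√θ + 1) by
    rw [lt_div_iff₀ (by linarith)]; linarith)
  rw [lt_div_iff₀ (by linarith)] at hwa
  have hsq : √w ^ 2 = w := Real.sq_sqrt (by linarith)
  refine ⟨√θ, √w, ha, Real.lt_sqrt_of_sq_lt (by simpa using hw), by rwa [hsq], ?_⟩
  have hwθ : w < √θ := by nlinarith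
  calc √θ * √w ^ 2 < √θ * √θ := by rw [hsq]; gcongr
    _ = θ := Real.mul_self_sqrt (by linarith)

namespace IsLinkRatio

variable {θ a l : ℝ}

lemma one_lt_sq (h : IsLinkRatio θ a l) : 1 < l ^ 2 := one_lt_pow₀ h.one_lt two_ne_zero

lemma sq_lt_window (h : IsLinkRatio θ a l) : l ^ 2 < a := by
  nlinarith [h.one_lt_sq, h.sq_mul_lt, h.one_lt_window]

lemma window_lt (h : IsLinkRatio θ a l) : a < θ := by
  nlinarith [h.one_lt_sq, h.mul_sq_lt, h.one_lt_window]

lemma one_lt_theta (h : IsLinkRatio θ a l) : 1 < θ := h.one_lt_window.trans h.window_lt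

end IsLinkRatio

lemma mul_rpow_neg_le_rpow_mul_rpow {p d m y K : ℝ} (hp : 1 < p) (hd : 0 < d) (hm : 0 < m)
    (hy : 0 < y) (hK : 0 ≤ K) (hyd : y ≤ K * d) :
    d * m ^ (-(1 / (p - 1))) ≤
      K ^ (1 / (p - 1)) * (d * (m * y) ^ (-(1 / p))) ^ (p / (p - 1)) := by
  have hp₁ : 0 < p - 1 := sub_pos.2 hp
  have hpow : (d * (m * y) ^ (-(1 / p))) ^ (p / (p - 1)) =
      d * d ^ (1 / (p - 1)) * (m ^ (-(1 / (p - 1))) * y ^ (-(1 / (p - 1)))) := by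
    rw [Real.mul_rpow hd.le (by positivity), ← Real.rpow_mul (by positivity),
      show -(1 / p) * (p / (p - 1)) = -(1 / (p - 1)) by field_simp, Real.mul_rpow hm.le hy.le,
      show p / (p - 1) = 1 + 1 / (p - 1) by field_simp; ring, Real.rpow_add hd, Real.rpow_one]
  have hyd' : y ^ (1 / (p - 1)) ≤ K ^ (1 / (p - 1)) * d ^ (1 / (p - 1)) := by
    rw [← Real.mul_rpow hK hd.le]
    gcongr
  calc d * m ^ (-(1 / (p - 1)))
      = d * m ^ (-(1 / (p - 1))) * (y ^ (1 / (p - 1)) * y ^ (-(1 / (p - 1)))) := by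
        rw [← Real.rpow_add hy, add_neg_cancel, Real.rpow_zero, mul_one]
    _ ≤ d * m ^ (-(1 / (p - 1))) *
          (K ^ (1 / (p - 1)) * d ^ (1 / (p - 1)) * y ^ (-(1 / (p - 1)))) := by gcongr
    _ = _ := by rw [hpow]; ring

variable {g : ℝ → ℝ} {p θ a l x y : ℝ}

lemma IsNonlinearity.negPowIntegral_le_of_ratio_mem_Icc_sq (hg : IsNonlinearity g) (hp : 1 < p)
    (hr : IsLinkRatio θ a l) (hx : 0 < x) (hly : l * x ≤ y) (hyl : y ≤ l ^ 2 * x) :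
    negPowIntegral (ginf g a) (1 / (p - 1)) x y ≤ (l / (l - 1)) ^ (1 / (p - 1)) *
      negPowIntegral (fun t ↦ ginf g θ t * t) (1 / p) x y ^ (p / (p - 1)) := by
  have ha := hr.one_lt_window
  have ha₀ : 0 < a := one_pos.trans ha
  have hθ₀ : 0 < θ := one_pos.trans hr.one_lt_theta
  have hl₁ : 0 < l - 1 := sub_pos.2 hr.one_lt
  have : 0 < p - 1 := sub_pos.2 hp
  have hxy : x < y := (lt_mul_of_one_lt_left hx hr.one_lt).trans_le hly
  have hy : 0 < y := hx.trans hxy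
  obtain ⟨G, hG, hle, hge⟩ := hg.exists_minimum (lo := x / a) (hi := a * y) (by positivity)
    ((div_le_self hx.le ha.le).trans (hxy.le.trans (le_mul_of_one_le_left hy.le ha.le)))
  have hinner : ∀ t ∈ Icc x y, G ≤ ginf g a t := fun t ht ↦
    le_ginf ha (hx.trans_le ht.1) fun s hs ↦
      hle s ⟨le_trans (by gcongr; exact ht.1) hs.1.le, hs.2.le.trans (by gcongr; exact ht.2)⟩
  have houter : ∀ t ∈ Icc x y, ginf g θ t * t ≤ G * y := fun t ht ↦ by
    have ht₀ : 0 < t := hx.trans_le ht.1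
    refine mul_le_mul (hge ht₀ ?_ ?_) ht.2 ht₀.le hG.le
    · rw [div_lt_div_iff₀ hθ₀ ha₀]
      nlinarith [ht.2, hr.mul_sq_lt]
    · nlinarith [ht.1, hr.mul_sq_lt]
  have hd : 0 < y - x := sub_pos.2 hxy
  have hC : 0 < l / (l - 1) := div_pos (one_pos.trans hr.one_lt) hl₁
  refine ((hg.isPosWeight_ginf ha).negPowIntegral_le_mul_rpow_neg (by positivity) hx hxy.le hG
    hinner).trans ((mul_rpow_neg_le_rpow_mul_rpow hp hd hG hy
      hC.le ?_).trans ?_)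
  · rw [div_mul_eq_mul_div, le_div_iff₀ hl₁]
    nlinarith
  · gcongr
    exact (hg.isPosWeight_ginf hr.one_lt_theta).mul_id.mul_rpow_neg_le_negPowIntegral
      (by positivity) hx hxy.le houter

lemma one_le_div_sub_one (hp : 1 < p) : 1 ≤ p / (p - 1) := by
  rw [one_le_div (sub_pos.2 hp)]
  exact sub_le_self p zero_le_one

lemma IsNonlinearity.negPowIntegral_le (hg : IsNonlinearity g) (hp : 1 < p)
    (hr : IsLinkRatio θ a l) (hx : 0 < x) (hly : l * x ≤ y) :
    negPowIntegral (ginf g a) (1 / (p - 1)) x y ≤ (l / (l - 1)) ^ (1 / (p - 1)) *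
      negPowIntegral (fun t ↦ ginf g θ t * t) (1 / p) x y ^ (p / (p - 1)) := by
  have : 0 < p - 1 := sub_pos.2 hp
  have hl₁ : 0 < l - 1 := sub_pos.2 hr.one_lt
  refine of_ratio_mem_Icc_sq (P := fun x y ↦ negPowIntegral (ginf g a) (1 / (p - 1)) x y ≤
    (l / (l - 1)) ^ (1 / (p - 1)) *
      negPowIntegral (fun t ↦ ginf g θ t * t) (1 / p) x y ^ (p / (p - 1))) hx hr.one_lt
    (fun x' y' hx' ↦ hg.negPowIntegral_le_of_ratio_mem_Icc_sq hp hr (hx.trans_le hx'))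
    (fun x' y' z' hx' hxy hyz hxy_le hyz_le ↦ ?_) le_rfl hly
  have hx₀ := hx.trans_le hx'
  have hy₀ := hx₀.trans_le hxy
  have hl₀ : 0 < l := one_pos.trans hr.one_lt
  rw [← (hg.isPosWeight_ginf hr.one_lt_window).negPowIntegral_add (by positivity) hx₀ hy₀
    (hy₀.trans_le hyz)]
  refine (add_le_add hxy_le hyz_le).trans ?_
  rw [← mul_add]
  gcongr
  exact (hg.isPosWeight_ginf hr.one_lt_theta).mul_id.negPowIntegral_rpow_add_le (by positivity)
    hx₀ hxy hyz (one_le_div_sub_one hp)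

end LevelComparison

section Links

lemma mul_le_of_le_add_inv_mul {p L Q ψ X Y K : ℝ} (hp : 1 < p) (hL : 0 ≤ L) (hQ : 0 < Q)
    (hψ : 0 < ψ) (hX : 0 ≤ X) (hY : 0 ≤ Y) (hK : 0 ≤ K)
    (hle : L ≤ Q ^ (-(1 / p)) * X + ψ⁻¹ * Y) (hψK : ψ ^ (p - 1) ≤ K * L * Q) :
    ψ * L ≤ 2 * Y + K ^ (1 / (p - 1)) * (2 * X) ^ (p / (p - 1)) := by
  have hp₁ : 0 < p - 1 := sub_pos.2 hp
  rcases le_total (Q ^ (-(1 / p)) * X) (ψ⁻¹ * Y) with hXY | hYX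
  · have : ψ * L ≤ 2 * Y :=
      calc ψ * L ≤ ψ * (2 * (ψ⁻¹ * Y)) := by gcongr; linarith
        _ = 2 * Y := by field_simp
    have : 0 ≤ K ^ (1 / (p - 1)) * (2 * X) ^ (p / (p - 1)) := by positivity
    linarith
  have hLX : L ≤ Q ^ (-(1 / p)) * (2 * X) := by linarith
  have hQL : Q * L ^ p ≤ (2 * X) ^ p :=
    calc Q * L ^ p ≤ Q * (Q ^ (-(1 / p)) * (2 * X)) ^ p := by gcongr
      _ = (2 * X) ^ p := by
        rw [Real.mul_rpow (by positivity) (by positivity), ← Real.rpow_mul hQ.le,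
          show -(1 / p) * p = -1 by field_simp, Real.rpow_neg_one, mul_inv_cancel_left₀ hQ.ne']
  have hψL : (ψ * L) ^ (p - 1) ≤ K * (2 * X) ^ p :=
    calc (ψ * L) ^ (p - 1) = ψ ^ (p - 1) * L ^ (p - 1) := Real.mul_rpow hψ.le hL
      _ ≤ K * L * Q * L ^ (p - 1) := by gcongr
      _ = K * (Q * (L * L ^ (p - 1))) := by ring
      _ = K * (Q * L ^ p) := by
        rw [← Real.rpow_one_add' hL (by linarith), add_sub_cancel]
      _ ≤ K * (2 * X) ^ p := by gcongr
  have hroot : ((ψ * L) ^ (p - 1)) ^ (1 / (p - 1)) = ψ * L := by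
    rw [← Real.rpow_mul (by positivity), mul_one_div_cancel hp₁.ne', Real.rpow_one]
  calc ψ * L ≤ (K * (2 * X) ^ p) ^ (1 / (p - 1)) := by
        rw [← hroot]
        gcongr
    _ = K ^ (1 / (p - 1)) * (2 * X) ^ (p / (p - 1)) := by
        rw [Real.mul_rpow hK (by positivity), ← Real.rpow_mul (by positivity), mul_one_div]
    _ ≤ _ := le_add_of_nonneg_left (by positivity)

lemma add_rpow_le_mul_rpow_add_rpow {x y r : ℝ} (hx : 0 ≤ x) (hy : 0 ≤ y) (hr : 1 ≤ r) :
    (x + y) ^ r ≤ 2 ^ (r - 1) * (x ^ r + y ^ r) := by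
  lift x to NNReal using hx
  lift y to NNReal using hy
  exact_mod_cast NNReal.rpow_add_le_mul_rpow_add_rpow x y hr

lemma le_rpow_neg_mul_of_mul_rpow_le {p c Q G d m : ℝ} (hp : 1 < p) (hc : 0 < c) (hQ : 0 < Q)
    (hG : 0 < G) (hd : 0 ≤ d) (hm : 0 ≤ m) (h : c * (Q * G * d ^ p) ≤ m ^ (p - 1)) :
    d ≤ Q ^ (-(1 / p)) * (c ^ (-(1 / p)) * (m * G ^ (-(1 / (p - 1)))) ^ ((p - 1) / p)) := by
  have hp₁ : 0 < p - 1 := sub_pos.2 hp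
  have hdp : d ^ p ≤ c⁻¹ * Q⁻¹ * G⁻¹ * m ^ (p - 1) := by
    rw [← div_le_iff₀' (by positivity)]
    refine le_trans (le_of_eq ?_) h
    field_simp
  calc d = (d ^ p) ^ (1 / p) := by
        rw [← Real.rpow_mul hd, mul_one_div_cancel (by positivity), Real.rpow_one]
    _ ≤ (c⁻¹ * Q⁻¹ * G⁻¹ * m ^ (p - 1)) ^ (1 / p) := by gcongr
    _ = _ := by
        rw [Real.mul_rpow (by positivity) (by positivity),
          Real.mul_rpow (by positivity) (by positivity),
          Real.mul_rpow (by positivity) (by positivity), Real.mul_rpow hm (by positivity),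
          ← Real.rpow_mul hm, ← Real.rpow_mul hG.le, Real.inv_rpow hc.le, Real.inv_rpow hQ.le,
          Real.inv_rpow hG.le, ← Real.rpow_neg hc.le, ← Real.rpow_neg hQ.le, ← Real.rpow_neg hG.le,
          mul_one_div, show -(1 / (p - 1)) * ((p - 1) / p) = -(1 / p) by field_simp]
        ring

variable {n : ℕ} {p α c θ a l : ℝ} {b q : Euc n → ℝ} {g M : ℝ → ℝ}

/-- On the annulus `r₁ < |x| < r₂` one has `q ≥ Q` and `b ≤ β`, and the drift `β` is so small
compared with the source `Q` that it still allows the density `ψ`. -/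
structure IsAnnulusBound (α : ℝ) (b q : Euc n → ℝ) (r₁ r₂ Q β ψ : ℝ) : Prop where
  source_pos : 0 < Q
  drift_nonneg : 0 ≤ β
  density_pos : 0 < ψ
  ae_le : ∀ᵐ x, x ∈ Ann n r₁ r₂ → Q ≤ q x ∧ b x ≤ β
  drift_mul_le : β ^ (1 / α) * ψ ≤ Q ^ (1 / α)

lemma IsAnnulusBound.mono {r₁ r₂ s₁ s₂ Q β ψ : ℝ} (h : IsAnnulusBound α b q r₁ r₂ Q β ψ)
    (hs₁ : r₁ ≤ s₁) (hs₂ : s₂ ≤ r₂) : IsAnnulusBound α b q s₁ s₂ Q β ψ :=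
  { h with ae_le := h.ae_le.mono fun _ hx hxs ↦ hx ⟨hs₁.trans_lt hxs.1, hxs.2.trans_le hs₂⟩ }

lemma IsNonlinearity.exists_level_bound (hg : IsNonlinearity g) (hr : IsLinkRatio θ a l)
    {m₁ m₂ : ℝ} (hm₁ : 0 < m₁) (hm : m₁ ≤ m₂) (hml : m₂ ≤ l ^ 2 * m₁) :
    ∃ G > 0, ∃ lo < 2 * m₁ - m₂, (∀ t, lo < t → t ≤ m₂ → G ≤ g t) ∧
      ∀ t ∈ Icc m₁ m₂, ginf g a t ≤ G ∧ ginf g θ t ≤ G := by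
  have ha : 0 < a := one_pos.trans hr.one_lt_window
  obtain ⟨lo, hlo, hlo'⟩ := exists_between (show l ^ 2 * m₁ / a < 2 * m₁ - m₂ by
    rw [div_lt_iff₀ ha]
    nlinarith [hr.sq_mul_lt])
  have hlo₀ : 0 < lo := (show 0 ≤ l ^ 2 * m₁ / a by positivity).trans_lt hlo
  obtain ⟨G, hG, hle, hge⟩ := hg.exists_minimum (hi := m₂) hlo₀ (by linarith)
  have hwindow : ∀ ⦃t'⦄, a ≤ t' → ∀ t ∈ Icc m₁ m₂, ginf g t' t ≤ G := fun t' hat t ht ↦ by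
    have ht₀ : 0 < t := hm₁.trans_le ht.1
    refine hge ht₀ (lt_of_le_of_lt ?_ hlo) (hml.trans_lt ?_)
    · have := ht.2.trans hml
      gcongr
    · calc l ^ 2 * m₁ < a * m₁ := by gcongr; exact hr.sq_lt_window
        _ ≤ t' * t := mul_le_mul hat ht.1 hm₁.le (ha.le.trans hat)
  exact ⟨G, hG, lo, hlo', fun t h₁ h₂ ↦ hle t ⟨h₁.le, h₂⟩,
    fun t ht ↦ ⟨hwindow le_rfl t ht, hwindow hr.window_lt.le t ht⟩⟩

lemma IsRadialProfile.sub_le_of_le_sq_mul (hM : IsRadialProfile p α c b q g M)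
    (hg : IsNonlinearity g) (hp : 1 < p) (hα : 0 < α) (hc : 0 < c) (hr : IsLinkRatio θ a l)
    {r₁ r₂ Q β ψ : ℝ} (hr₁ : 0 < r₁) (hr₁₂ : r₁ < r₂) (hMpos : 0 < M r₁)
    (hB : IsAnnulusBound α b q r₁ r₂ Q β ψ) (hlink : M r₂ ≤ l ^ 2 * M r₁) :
    r₂ - r₁ ≤ Q ^ (-(1 / p)) * (c ^ (-(1 / p)) *
        negPowIntegral (ginf g a) (1 / (p - 1)) (M r₁) (M r₂) ^ ((p - 1) / p)) +
      ψ⁻¹ * (c⁻¹ * negPowIntegral (ginf g θ) (1 / α) (M r₁) (M r₂)) := by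
  obtain ⟨hQ, hβ, hψ, hae, hβψ⟩ := hB
  have : 0 < p - 1 := sub_pos.2 hp
  have hd : 0 < r₂ - r₁ := sub_pos.2 hr₁₂
  have hm : M r₁ ≤ M r₂ := hM.monotoneOn hr₁ (hr₁.trans hr₁₂) hr₁₂.le
  have hm₀ : 0 ≤ M r₂ - M r₁ := sub_nonneg.2 hm
  have hwa := hg.isPosWeight_ginf hr.one_lt_window
  have hwθ := hg.isPosWeight_ginf hr.one_lt_theta
  have hI₂ := hwθ.negPowIntegral_nonneg (e := 1 / α) hMpos hm
  have hI₃ := hwa.negPowIntegral_nonneg (e := 1 / (p - 1)) hMpos hm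
  obtain ⟨G, hG, lo, hlo, hGg, hginf⟩ := hg.exists_level_bound hr hMpos hm hlink
  rcases hM.step hr₁ hr₁₂ hQ hβ hG hae hGg hlo with hsource | hdrift
  · refine (le_rpow_neg_mul_of_mul_rpow_le hp hc hQ hG hd.le hm₀ hsource).trans
      ((?_ : _ ≤ _).trans (le_add_of_nonneg_right (by positivity)))
    gcongr
    exact hwa.mul_rpow_neg_le_negPowIntegral (by positivity) hMpos hm fun t ht ↦ (hginf t ht).1
  · refine le_trans ?_ (le_add_of_nonneg_left (by positivity))
    calc r₂ - r₁ = (c * ((Q * G) ^ (1 / α) * (r₂ - r₁))) * (c⁻¹ * (Q * G) ^ (-(1 / α))) := by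
          rw [Real.rpow_neg (by positivity)]
          field_simp
      _ ≤ β ^ (1 / α) * (M r₂ - M r₁) * (c⁻¹ * (Q * G) ^ (-(1 / α))) := by gcongr
      _ = β ^ (1 / α) * Q ^ (-(1 / α)) * (c⁻¹ * ((M r₂ - M r₁) * G ^ (-(1 / α)))) := by
          rw [Real.mul_rpow hQ.le hG.le]
          ring
      _ ≤ ψ⁻¹ * (c⁻¹ * negPowIntegral (ginf g θ) (1 / α) (M r₁) (M r₂)) := by
          gcongr
          · rw [Real.rpow_neg hQ.le, ← div_eq_mul_inv, div_le_iff₀ (by positivity), inv_mul_eq_div,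
              le_div_iff₀ hψ]
            exact hβψ
          · exact hwθ.mul_rpow_neg_le_negPowIntegral (by positivity) hMpos hm
              fun t ht ↦ (hginf t ht).2

lemma IsNonlinearity.negPowIntegral_rpow_le (hg : IsNonlinearity g) (hp : 1 < p)
    (hr : IsLinkRatio θ a l) {x y : ℝ} (hx : 0 < x) (hly : l * x ≤ y) :
    negPowIntegral (ginf g a) (1 / (p - 1)) x y ^ ((p - 1) / p) ≤
      (l / (l - 1)) ^ (1 / p) * negPowIntegral (fun t ↦ ginf g θ t * t) (1 / p) x y := by
  have hp₁ : 0 < p - 1 := sub_pos.2 hp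
  have hl₁ : 0 < l - 1 := sub_pos.2 hr.one_lt
  have hl₀ : 0 < l := one_pos.trans hr.one_lt
  have hxy : x ≤ y := (le_mul_of_one_le_left hx.le hr.one_lt.le).trans hly
  have hI₁ := (hg.isPosWeight_ginf hr.one_lt_theta).mul_id.negPowIntegral_nonneg (e := 1 / p) hx hxy
  have hI₃ := (hg.isPosWeight_ginf hr.one_lt_window).negPowIntegral_nonneg (e := 1 / (p - 1)) hx hxy
  refine (Real.rpow_le_rpow hI₃ (hg.negPowIntegral_le hp hr hx hly) (by positivity)).trans_eq ?_
  rw [Real.mul_rpow (by positivity) (by positivity), ← Real.rpow_mul (by positivity),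
    ← Real.rpow_mul hI₁, show 1 / (p - 1) * ((p - 1) / p) = 1 / p by field_simp,
    show p / (p - 1) * ((p - 1) / p) = 1 by field_simp, Real.rpow_one]

/-- The part of the increment between the levels `x` and `y` that is governed by the source term.
It combines the integral in `F_∞` with the last link of a chain, which may be too short for its
`1 / (p - 1)`-integral to be controlled by the former. -/
def sourceIncrement (g : ℝ → ℝ) (p θ a l x y : ℝ) : ℝ :=
  (l / (l - 1)) ^ (1 / p) * negPowIntegral (fun t ↦ ginf g θ t * t) (1 / p) x y +
    negPowIntegral (ginf g a) (1 / (p - 1)) x y ^ ((p - 1) / p)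

namespace IsNonlinearity

lemma negPowIntegral_rpow_le_sourceIncrement (hg : IsNonlinearity g) (hr : IsLinkRatio θ a l)
    {x y : ℝ} (hx : 0 < x) (hxy : x ≤ y) :
    negPowIntegral (ginf g a) (1 / (p - 1)) x y ^ ((p - 1) / p) ≤
      sourceIncrement g p θ a l x y := by
  have hl₁ : 0 < l - 1 := sub_pos.2 hr.one_lt
  have hl₀ : 0 < l := one_pos.trans hr.one_lt
  have := (hg.isPosWeight_ginf hr.one_lt_theta).mul_id.negPowIntegral_nonneg (e := 1 / p) hx hxy
  exact le_add_of_nonneg_left (by positivity)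

lemma sourceIncrement_nonneg (hg : IsNonlinearity g) (hr : IsLinkRatio θ a l)
    {x y : ℝ} (hx : 0 < x) (hxy : x ≤ y) : 0 ≤ sourceIncrement g p θ a l x y :=
  (Real.rpow_nonneg ((hg.isPosWeight_ginf hr.one_lt_window).negPowIntegral_nonneg hx hxy) _).trans
    (hg.negPowIntegral_rpow_le_sourceIncrement hr hx hxy)

lemma rpow_add_sourceIncrement_le (hg : IsNonlinearity g) (hp : 1 < p) (hr : IsLinkRatio θ a l)
    {x y z : ℝ} (hx : 0 < x) (hly : l * x ≤ y) (hyz : y ≤ z) :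
    negPowIntegral (ginf g a) (1 / (p - 1)) x y ^ ((p - 1) / p) + sourceIncrement g p θ a l y z ≤
      sourceIncrement g p θ a l x z := by
  have : 0 < p - 1 := sub_pos.2 hp
  have hxy : x ≤ y := (le_mul_of_one_le_left hx.le hr.one_lt.le).trans hly
  have hy : 0 < y := hx.trans_le hxy
  have hwa := hg.isPosWeight_ginf hr.one_lt_window
  rw [sourceIncrement, sourceIncrement, ← (hg.isPosWeight_ginf
    hr.one_lt_theta).mul_id.negPowIntegral_add (by positivity) hx hy (hy.trans_le hyz), mul_add,
    ← add_assoc]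
  gcongr
  · exact hg.negPowIntegral_rpow_le hp hr hx hly
  · exact hwa.negPowIntegral_nonneg hy hyz
  · exact hwa.negPowIntegral_anti_left (by positivity) hx hxy hyz

end IsNonlinearity

lemma IsRadialProfile.sub_le (hM : IsRadialProfile p α c b q g M)
    (hg : IsNonlinearity g) (hp : 1 < p) (hα : 0 < α) (hc : 0 < c) (hr : IsLinkRatio θ a l)
    {r₁ r₂ Q β ψ : ℝ} (hr₁ : 0 < r₁) (hr₁₂ : r₁ ≤ r₂) (hMpos : 0 < M r₁)
    (hB : IsAnnulusBound α b q r₁ r₂ Q β ψ) :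
    r₂ - r₁ ≤ Q ^ (-(1 / p)) * (c ^ (-(1 / p)) * sourceIncrement g p θ a l (M r₁) (M r₂)) +
      ψ⁻¹ * (c⁻¹ * negPowIntegral (ginf g θ) (1 / α) (M r₁) (M r₂)) := by
  have hQ := hB.source_pos
  have hψ := hB.density_pos
  have : 0 < p - 1 := sub_pos.2 hp
  have : 0 < l := one_pos.trans hr.one_lt
  have hle : ∀ ⦃s s'⦄, r₁ ≤ s → s ≤ s' → M s ≤ M s' := fun s s' hs hss' ↦
    hM.monotoneOn (hr₁.trans_le hs) (hr₁.trans_le (hs.trans hss')) hss'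
  have hpos : ∀ ⦃s⦄, r₁ ≤ s → 0 < M s := fun s hs ↦ hMpos.trans_le (hle le_rfl hs)
  have hwθ := hg.isPosWeight_ginf hr.one_lt_theta
  refine of_short_of_factor_step (P := fun s ↦ r₂ - s ≤
      Q ^ (-(1 / p)) * (c ^ (-(1 / p)) * sourceIncrement g p θ a l (M s) (M r₂)) +
        ψ⁻¹ * (c⁻¹ * negPowIntegral (ginf g θ) (1 / α) (M s) (M r₂)))
    hr₁₂ (fun s hs s' _ ↦ hle hs.1) (hM.continuousOn.mono fun s hs ↦ hr₁.trans_le hs.1) hMpos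
    hr.one_lt_sq ?short ?step
  case short =>
    intro s hs hs' hshort
    rcases hs'.eq_or_lt with rfl | hlt
    · have := hwθ.negPowIntegral_nonneg (e := 1 / α) (hpos hs) le_rfl
      have := hg.sourceIncrement_nonneg (p := p) hr (hpos hs) le_rfl
      rw [sub_self]
      positivity
    refine (hM.sub_le_of_le_sq_mul hg hp hα hc hr (hr₁.trans_le hs) hlt (hpos hs)
      (hB.mono hs le_rfl) hshort).trans ?_
    gcongr
    exact hg.negPowIntegral_rpow_le_sourceIncrement hr (hpos hs) (hle hs hs')
  case step =>
    intro s s' hs hss' hs' hfactor hrest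
    have hlink := hM.sub_le_of_le_sq_mul hg hp hα hc hr (hr₁.trans_le hs) hss' (hpos hs)
      (hB.mono hs hs') hfactor.le
    have hsource := hg.rpow_add_sourceIncrement_le (y := M s') hp hr (hpos hs)
      (by
        rw [hfactor, sq, mul_assoc]
        have := hpos hs
        exact le_mul_of_one_le_left (by positivity) hr.one_lt.le) (hle (hs.trans hss'.le) hs')
    rw [← hwθ.negPowIntegral_add (by positivity) (hpos hs) (hpos (hs.trans hss'.le)) (hpos hr₁₂)]
    refine le_trans ?_ (add_le_add_left (mul_le_mul_of_nonneg_left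
      (mul_le_mul_of_nonneg_left hsource (by positivity)) (by positivity)) _)
    linarith

/-- The increment between the levels `x` and `y` of the primitives of powers of `g` against which
the radial density is compared. -/
def levelIncrement (g : ℝ → ℝ) (p α θ a x y : ℝ) : ℝ :=
  negPowIntegral (fun t ↦ ginf g θ t * t) (1 / p) x y ^ (p / (p - 1)) +
    negPowIntegral (ginf g θ) (1 / α) x y + negPowIntegral (ginf g a) (1 / (p - 1)) x y

lemma IsNonlinearity.sourceIncrement_rpow_le (hg : IsNonlinearity g) (hp : 1 < p)
    (hr : IsLinkRatio θ a l) {x y : ℝ} (hx : 0 < x) (hxy : x ≤ y) :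
    sourceIncrement g p θ a l x y ^ (p / (p - 1)) ≤ 2 ^ (p / (p - 1) - 1) *
      ((l / (l - 1)) ^ (1 / (p - 1)) *
          negPowIntegral (fun t ↦ ginf g θ t * t) (1 / p) x y ^ (p / (p - 1)) +
        negPowIntegral (ginf g a) (1 / (p - 1)) x y) := by
  have : 0 < p - 1 := sub_pos.2 hp
  have hl₁ : 0 < l - 1 := sub_pos.2 hr.one_lt
  have hl₀ : 0 < l := one_pos.trans hr.one_lt
  have hI₁ := (hg.isPosWeight_ginf hr.one_lt_theta).mul_id.negPowIntegral_nonneg (e := 1 / p) hx hxy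
  have hI₃ := (hg.isPosWeight_ginf hr.one_lt_window).negPowIntegral_nonneg (e := 1 / (p - 1)) hx hxy
  refine (add_rpow_le_mul_rpow_add_rpow (by positivity) (by positivity)
    (one_le_div_sub_one hp)).trans_eq ?_
  rw [Real.mul_rpow (by positivity) hI₁, ← Real.rpow_mul (by positivity), ← Real.rpow_mul hI₃,
    show 1 / p * (p / (p - 1)) = 1 / (p - 1) by field_simp,
    show (p - 1) / p * (p / (p - 1)) = 1 by field_simp, Real.rpow_one]

namespace IsNonlinearity

variable {x y z : ℝ}

lemma levelIncrement_nonneg (hg : IsNonlinearity g) (hr : IsLinkRatio θ a l)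
    (hx : 0 < x) (hxy : x ≤ y) : 0 ≤ levelIncrement g p α θ a x y := by
  have hwθ := hg.isPosWeight_ginf hr.one_lt_theta
  have := hwθ.mul_id.negPowIntegral_nonneg (e := 1 / p) hx hxy
  have := hwθ.negPowIntegral_nonneg (e := 1 / α) hx hxy
  have := (hg.isPosWeight_ginf hr.one_lt_window).negPowIntegral_nonneg (e := 1 / (p - 1)) hx hxy
  unfold levelIncrement
  positivity

lemma levelIncrement_add_le (hg : IsNonlinearity g) (hp : 1 < p) (hα : 0 < α)
    (hr : IsLinkRatio θ a l) (hx : 0 < x) (hxy : x ≤ y) (hyz : y ≤ z) :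
    levelIncrement g p α θ a x y + levelIncrement g p α θ a y z ≤
      levelIncrement g p α θ a x z := by
  have : 0 < p - 1 := sub_pos.2 hp
  have hy := hx.trans_le hxy
  have hz := hy.trans_le hyz
  have hwθ := hg.isPosWeight_ginf hr.one_lt_theta
  have h₁ := hwθ.mul_id.negPowIntegral_rpow_add_le (e := 1 / p) (by positivity) hx hxy hyz
    (one_le_div_sub_one hp)
  have h₂ := hwθ.negPowIntegral_add (e := 1 / α) (by positivity) hx hy hz
  have h₃ := (hg.isPosWeight_ginf hr.one_lt_window).negPowIntegral_add (e := 1 / (p - 1))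
    (by positivity) hx hy hz
  unfold levelIncrement
  linarith

end IsNonlinearity

lemma IsRadialProfile.density_mul_sub_le (hM : IsRadialProfile p α c b q g M)
    (hg : IsNonlinearity g) (hp : 1 < p) (hα : 0 < α) (hc : 0 < c) (hr : IsLinkRatio θ a l)
    {k r₁ r₂ Q β ψ : ℝ} (hk : 1 < k) (hr₁ : 0 < r₁) (hkr : k * r₁ ≤ r₂) (hMpos : 0 < M r₁)
    (hB : IsAnnulusBound α b q r₁ r₂ Q β ψ) (hψQ : ψ ^ (p - 1) ≤ r₂ * Q) :
    ψ * (r₂ - r₁) ≤ 2 * (c⁻¹ * negPowIntegral (ginf g θ) (1 / α) (M r₁) (M r₂)) +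
      (k / (k - 1)) ^ (1 / (p - 1)) * (2 * c ^ (-(1 / p))) ^ (p / (p - 1)) *
        sourceIncrement g p θ a l (M r₁) (M r₂) ^ (p / (p - 1)) := by
  have hk₁ : 0 < k - 1 := sub_pos.2 hk
  have : 0 < k := one_pos.trans hk
  have hr₁₂ : r₁ ≤ r₂ := (le_mul_of_one_le_left hr₁.le hk.le).trans hkr
  have hMle := hM.monotoneOn hr₁ (hr₁.trans_le hr₁₂) hr₁₂
  have hI₂ := (hg.isPosWeight_ginf hr.one_lt_theta).negPowIntegral_nonneg (e := 1 / α) hMpos hMle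
  have hS := hg.sourceIncrement_nonneg (p := p) hr hMpos hMle
  have hψK : ψ ^ (p - 1) ≤ k / (k - 1) * (r₂ - r₁) * Q := by
    refine hψQ.trans (mul_le_mul_of_nonneg_right ?_ hB.source_pos.le)
    rw [div_mul_eq_mul_div, le_div_iff₀ hk₁]
    linarith
  have hscaled := mul_le_of_le_add_inv_mul hp (sub_nonneg.2 hr₁₂) hB.source_pos hB.density_pos
    (by positivity) (by positivity) (by positivity) (hM.sub_le hg hp hα hc hr hr₁ hr₁₂ hMpos hB) hψK
  rwa [← mul_assoc 2 (c ^ _), Real.mul_rpow (by positivity) hS, ← mul_assoc _ (_ ^ _)] at hscaled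

end Links

lemma exists_density_mul_sub_le {p α c θ a l k : ℝ} (hp : 1 < p) (hα : 0 < α) (hc : 0 < c)
    (hr : IsLinkRatio θ a l) (hk : 1 < k) :
    ∃ C > 0, ∀ {n : ℕ} {b q : Euc n → ℝ} {g M : ℝ → ℝ} {r₁ r₂ Q β ψ : ℝ},
      IsRadialProfile p α c b q g M → IsNonlinearity g → 0 < r₁ → k * r₁ ≤ r₂ → 0 < M r₁ →
      IsAnnulusBound α b q r₁ r₂ Q β ψ → ψ ^ (p - 1) ≤ r₂ * Q →
      ψ * (r₂ - r₁) ≤ C * levelIncrement g p α θ a (M r₁) (M r₂) := by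
  have hl₁ : 0 < l - 1 := sub_pos.2 hr.one_lt
  have hl₀ : 0 < l := one_pos.trans hr.one_lt
  have : 0 < k - 1 := sub_pos.2 hk
  have : 0 < k := one_pos.trans hk
  set κ : ℝ := (l / (l - 1)) ^ (1 / (p - 1))
  set D : ℝ := (k / (k - 1)) ^ (1 / (p - 1)) * (2 * c ^ (-(1 / p))) ^ (p / (p - 1)) *
    2 ^ (p / (p - 1) - 1)
  refine ⟨2 * c⁻¹ + D * κ + D, by positivity,
    fun {n b q g M r₁ r₂ Q β ψ} hM hg hr₁ hkr hMpos hB hψQ ↦ ?_⟩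
  have hr₁₂ : r₁ ≤ r₂ := (le_mul_of_one_le_left hr₁.le hk.le).trans hkr
  have hMle := hM.monotoneOn hr₁ (hr₁.trans_le hr₁₂) hr₁₂
  have hwθ := hg.isPosWeight_ginf hr.one_lt_theta
  have hI₁ := Real.rpow_nonneg (hwθ.mul_id.negPowIntegral_nonneg (e := 1 / p) hMpos hMle)
    (p / (p - 1))
  have hI₂ := hwθ.negPowIntegral_nonneg (e := 1 / α) hMpos hMle
  have hI₃ := (hg.isPosWeight_ginf hr.one_lt_window).negPowIntegral_nonneg (e := 1 / (p - 1))
    hMpos hMle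
  have hblock := hM.density_mul_sub_le hg hp hα hc hr hk hr₁ hkr hMpos hB hψQ
  have hsource := hg.sourceIncrement_rpow_le hp hr hMpos hMle
  unfold levelIncrement
  set I₁ := negPowIntegral (fun t ↦ ginf g θ t * t) (1 / p) (M r₁) (M r₂) ^ (p / (p - 1))
  set I₂ := negPowIntegral (ginf g θ) (1 / α) (M r₁) (M r₂)
  set I₃ := negPowIntegral (ginf g a) (1 / (p - 1)) (M r₁) (M r₂)
  calc ψ * (r₂ - r₁) ≤ _ := hblock
    _ ≤ 2 * (c⁻¹ * I₂) + (k / (k - 1)) ^ (1 / (p - 1)) * (2 * c ^ (-(1 / p))) ^ (p / (p - 1)) *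
          (2 ^ (p / (p - 1) - 1) * (κ * I₁ + I₃)) := by gcongr
    _ = 2 * c⁻¹ * I₂ + D * κ * I₁ + D * I₃ := by ring
    _ ≤ (2 * c⁻¹ + D * κ + D) * I₂ + (2 * c⁻¹ + D * κ + D) * I₁ +
          (2 * c⁻¹ + D * κ + D) * I₃ := by
        gcongr <;> linarith [show 0 < c⁻¹ by positivity, show 0 < D by positivity,
          show 0 < D * κ by positivity]
    _ = (2 * c⁻¹ + D * κ + D) * (I₁ + I₂ + I₃) := by ring

section Annulus

variable {n : ℕ} {b q : Euc n → ℝ} {p α σ r r₁ r₂ : ℝ}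

lemma measurableSet_ann (n : ℕ) (r₁ r₂ : ℝ) : MeasurableSet (Ann n r₁ r₂) :=
  (measurableSet_lt measurable_const measurable_norm).inter
    (measurableSet_lt measurable_norm measurable_const)

lemma ann_subset_closedBall : Ann n r₁ r₂ ⊆ closedBall 0 r₂ := fun _ hx ↦
  mem_closedBall_zero_iff.2 hx.2.le

lemma neBot_ae_ann [NeZero n] (hr₁ : 0 ≤ r₁) (hr : r₁ < r₂) :
    NeBot (ae (volume.restrict (Ann n r₁ r₂))) := by
  obtain ⟨s, hs₁, hs₂⟩ := exists_between hr
  obtain ⟨z, hz⟩ := (NormedSpace.sphere_nonempty (x := (0 : Euc n))).2 (hr₁.trans hs₁.le)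
  rw [mem_sphere_zero_iff_norm] at hz
  have hopen : IsOpen (Ann n r₁ r₂) :=
    (isOpen_lt continuous_const continuous_norm).inter (isOpen_lt continuous_norm continuous_const)
  rw [ae_neBot, Ne, Measure.restrict_eq_zero]
  exact (hopen.measure_pos volume ⟨z, hz ▸ hs₁, hz ▸ hs₂⟩).ne'

lemma div_lt_mul_self (hσ : 1 < σ) (hr : 0 < r) : r / σ < σ * r :=
  (div_lt_self hr hσ).trans (lt_mul_of_one_lt_left hr hσ)

namespace IsCoefficient

lemma rpow_const (hb : IsCoefficient b) {e : ℝ} (he : 0 ≤ e) : IsCoefficient fun x ↦ b x ^ e where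
  measurable := hb.measurable.pow_const e
  nonneg x := Real.rpow_nonneg (hb.nonneg x) e
  locBdd K hK := by
    obtain ⟨C, hC⟩ := hb.locBdd K hK
    exact ⟨C ^ e, fun x hx ↦ Real.rpow_le_rpow (hb.nonneg x) (hC x hx) he⟩

lemma ae_le_essSup_ann (hb : IsCoefficient b) (r₁ r₂ : ℝ) :
    ∀ᵐ x ∂volume.restrict (Ann n r₁ r₂), b x ≤ essSup b (volume.restrict (Ann n r₁ r₂)) := by
  obtain ⟨C, hC⟩ := hb.locBdd _ (isCompact_closedBall (0 : Euc n) r₂)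
  refine ae_le_essSup ⟨C, eventually_map.2 ?_⟩
  filter_upwards [ae_restrict_mem (measurableSet_ann n r₁ r₂)] with x hx
  exact hC x (ann_subset_closedBall hx)

lemma ae_qinf_le (hq : IsCoefficient q) (σ r : ℝ) :
    ∀ᵐ x ∂volume.restrict (Ann n (r / σ) (σ * r)), qinf q σ r ≤ q x :=
  ae_essInf_le (isBoundedUnder_of ⟨0, hq.nonneg⟩)

variable [NeZero n]

lemma essSup_ann_nonneg (hb : IsCoefficient b) (hr₁ : 0 ≤ r₁) (hr : r₁ < r₂) :
    0 ≤ essSup b (volume.restrict (Ann n r₁ r₂)) := by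
  have := neBot_ae_ann (n := n) hr₁ hr
  obtain ⟨x, hx⟩ := (hb.ae_le_essSup_ann r₁ r₂).exists
  exact (hb.nonneg x).trans hx

lemma qinf_nonneg (hq : IsCoefficient q) (hσ : 1 < σ) (hr : 0 < r) : 0 ≤ qinf q σ r := by
  have : 0 < σ := one_pos.trans hσ
  have := neBot_ae_ann (n := n) (by positivity) (div_lt_mul_self hσ hr)
  obtain ⟨C, hC⟩ := hq.locBdd _ (isCompact_closedBall (0 : Euc n) (σ * r))
  refine le_essInf_of_ae_le 0 (Eventually.of_forall hq.nonneg) ?_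
  refine IsBoundedUnder.isCoboundedUnder_ge ⟨C, eventually_map.2 ?_⟩
  filter_upwards [ae_restrict_mem (measurableSet_ann n (r / σ) (σ * r))] with x hx
  exact hC x (ann_subset_closedBall hx)

lemma exists_forall_qinf_le (hq : IsCoefficient q) (hσ : 1 < σ) (R : ℝ) :
    ∃ C, ∀ ⦃r⦄, 0 < r → r ≤ R → qinf q σ r ≤ C := by
  have : 0 < σ := one_pos.trans hσ
  obtain ⟨C, hC⟩ := hq.locBdd _ (isCompact_closedBall (0 : Euc n) (σ * R))
  refine ⟨C, fun r hr hrR ↦ ?_⟩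
  have := neBot_ae_ann (n := n) (by positivity) (div_lt_mul_self hσ hr)
  obtain ⟨x, hxr, hx⟩ := ((ae_restrict_mem (measurableSet_ann n (r / σ) (σ * r))).and
    (hq.ae_qinf_le σ r)).exists
  exact hx.trans (hC x (closedBall_subset_closedBall (by gcongr) (ann_subset_closedBall hxr)))

end IsCoefficient

/-- The function `(r * f_σ(r)) ^ (1 / (p - 1))` whose integral the theorem compares with `F_∞`. -/
def radialDensity (q b : Euc n → ℝ) (p α σ r : ℝ) : ℝ := (r * fdef q b p α σ r) ^ (1 / (p - 1))

lemma mul_mul_div_one_add_le {p α r Q E : ℝ} (hα : 0 < α) (hr : 0 ≤ r) (hQ : 0 < Q) (hE : 0 ≤ E) :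
    E * (r * (Q / (1 + r * Q ^ ((α - p + 1) / α) * E))) ≤ Q ^ ((p - 1) / α) := by
  have hsplit : Q ^ ((p - 1) / α) * Q ^ ((α - p + 1) / α) = Q := by
    rw [← Real.rpow_add hQ, ← add_div, show p - 1 + (α - p + 1) = α by ring, div_self hα.ne',
      Real.rpow_one]
  rw [← mul_div_assoc, ← mul_div_assoc, div_le_iff₀ (by positivity)]
  calc E * (r * Q) = Q ^ ((p - 1) / α) * (r * Q ^ ((α - p + 1) / α) * E) := by
        nth_rewrite 1 [← hsplit]; ring
    _ ≤ Q ^ ((p - 1) / α) * (1 + r * Q ^ ((α - p + 1) / α) * E) := by gcongr; linarith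

namespace IsCoefficient

variable [NeZero n]

lemma fdef_nonneg_and_le_qinf (hq : IsCoefficient q) (hb : IsCoefficient b) (hp : 1 < p)
    (hα : 0 < α) (hσ : 1 < σ) (hr : 0 < r) :
    0 ≤ fdef q b p α σ r ∧ fdef q b p α σ r ≤ qinf q σ r := by
  have hp₁ : 0 < p - 1 := sub_pos.2 hp
  have hQ := hq.qinf_nonneg hσ hr
  have hE := (hb.rpow_const (div_nonneg hp₁.le hα.le)).essSup_ann_nonneg
    (div_nonneg hr.le (zero_le_one.trans hσ.le)) (div_lt_mul_self hσ hr)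
  rw [fdef]
  exact ⟨by positivity, div_le_self hQ (le_add_of_nonneg_right (by positivity))⟩

lemma radialDensity_nonneg (hq : IsCoefficient q) (hb : IsCoefficient b) (hp : 1 < p)
    (hα : 0 < α) (hσ : 1 < σ) (hr : 0 < r) : 0 ≤ radialDensity q b p α σ r :=
  Real.rpow_nonneg (mul_nonneg hr.le (hq.fdef_nonneg_and_le_qinf hb hp hα hσ hr).1) _

lemma radialDensity_rpow_le (hq : IsCoefficient q) (hb : IsCoefficient b) (hp : 1 < p)
    (hα : 0 < α) (hσ : 1 < σ) (hr : 0 < r) :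
    radialDensity q b p α σ r ^ (p - 1) ≤ r * qinf q σ r := by
  have hf := hq.fdef_nonneg_and_le_qinf hb hp hα hσ hr
  rw [radialDensity, ← Real.rpow_mul (mul_nonneg hr.le hf.1),
    one_div_mul_cancel (sub_pos.2 hp).ne', Real.rpow_one]
  exact mul_le_mul_of_nonneg_left hf.2 hr.le

lemma exists_isAnnulusBound (hq : IsCoefficient q) (hb : IsCoefficient b) (hp : 1 < p)
    (hα : 0 < α) (hσ : 1 < σ) (hr : 0 < r) (hψ : 0 < radialDensity q b p α σ r) :
    ∃ β, IsAnnulusBound α b q (r / σ) (σ * r) (qinf q σ r) β (radialDensity q b p α σ r) := by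
  have hp₁ : 0 < p - 1 := sub_pos.2 hp
  have hbe := hb.rpow_const (div_nonneg hp₁.le hα.le)
  have hE := hbe.essSup_ann_nonneg (div_nonneg hr.le (zero_le_one.trans hσ.le))
    (div_lt_mul_self hσ hr)
  have hQ : 0 < qinf q σ r := pos_of_mul_pos_right ((Real.rpow_pos_of_pos hψ _).trans_le
    (hq.radialDensity_rpow_le hb hp hα hσ hr)) hr.le
  have hf := hq.fdef_nonneg_and_le_qinf hb hp hα hσ hr
  have haeq := (ae_restrict_iff' (measurableSet_ann _ _ _)).1 (hq.ae_qinf_le σ r)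
  have haeb := (ae_restrict_iff' (measurableSet_ann _ _ _)).1 (hbe.ae_le_essSup_ann (r / σ) (σ * r))
  have hbal := mul_mul_div_one_add_le (p := p) hα hr.le hQ hE
  rw [← fdef] at hbal
  set E := essSup (fun x ↦ b x ^ ((p - 1) / α)) (volume.restrict (Ann n (r / σ) (σ * r)))
  refine ⟨E ^ (α / (p - 1)), hQ, by positivity, hψ, ?_, ?_⟩
  · filter_upwards [haeq, haeb] with x hqx hbx hx
    refine ⟨hqx hx, ?_⟩
    calc b x = (b x ^ ((p - 1) / α)) ^ (α / (p - 1)) := by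
          rw [← Real.rpow_mul (hb.nonneg x), div_mul_div_cancel₀ hα.ne', div_self hp₁.ne',
            Real.rpow_one]
      _ ≤ E ^ (α / (p - 1)) :=
          Real.rpow_le_rpow (hbe.nonneg x) (hbx hx) (by positivity)
  · calc (E ^ (α / (p - 1))) ^ (1 / α) * radialDensity q b p α σ r
        = (E * (r * fdef q b p α σ r)) ^ (1 / (p - 1)) := by
          rw [radialDensity, Real.mul_rpow hE (mul_nonneg hr.le hf.1), ← Real.rpow_mul hE,
            show α / (p - 1) * (1 / α) = 1 / (p - 1) by field_simp]
      _ ≤ (qinf q σ r ^ ((p - 1) / α)) ^ (1 / (p - 1)) :=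
          Real.rpow_le_rpow (mul_nonneg hE (mul_nonneg hr.le hf.1)) hbal (by positivity)
      _ = qinf q σ r ^ (1 / α) := by
          rw [← Real.rpow_mul hQ.le, show (p - 1) / α * (1 / (p - 1)) = 1 / α by field_simp]

end IsCoefficient

end Annulus

section RadialMeasure

lemma tendsto_measure_Ioc_nhds_top {ν : Measure ℝ} {x y : ℝ} (htop : ν (Ioi x) = ⊤)
    (hfin : ν (Ioc x y) ≠ ⊤) : Tendsto (fun z ↦ ν (Ioc y z)) atTop (nhds ⊤) := by
  have hIoi : ν (Ioi y) = ⊤ := by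
    refine (ENNReal.add_eq_top.1 (top_le_iff.1 ?_)).resolve_left hfin
    rw [← htop]
    exact (measure_mono Ioi_subset_Ioc_union_Ioi).trans (measure_union_le _ _)
  rw [← hIoi, ← iUnion_Ioc_eq_Ioi_self_iff.2 fun z _ ↦ ⟨z, le_rfl⟩]
  exact tendsto_measure_iUnion_atTop fun _ _ ↦ Ioc_subset_Ioc_right

variable {n : ℕ} {b q : Euc n → ℝ} {g M : ℝ → ℝ} {p α c θ σ a l x y : ℝ}

/-- The measure on `ℝ` with density `radialDensity`. -/
def radialMeasure (q b : Euc n → ℝ) (p α σ : ℝ) : Measure ℝ :=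
  volume.withDensity fun r ↦ ENNReal.ofReal (radialDensity q b p α σ r)

lemma radialMeasure_Ioc_le (hψ : ∀ r ∈ Ioc x y, radialDensity q b p α σ r ≤ c) :
    radialMeasure q b p α σ (Ioc x y) ≤ ENNReal.ofReal c * ENNReal.ofReal (y - x) := by
  rw [radialMeasure, withDensity_apply _ measurableSet_Ioc, ← Real.volume_Ioc, ← setLIntegral_const]
  exact setLIntegral_mono' measurableSet_Ioc fun r hr ↦ ENNReal.ofReal_le_ofReal (hψ r hr)

variable [NeZero n]

lemma radialMeasure_Ioc_ne_top (hq : IsCoefficient q) (hb : IsCoefficient b) (hp : 1 < p)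
    (hα : 0 < α) (hσ : 1 < σ) (hx : 0 < x) : radialMeasure q b p α σ (Ioc x y) ≠ ⊤ := by
  have hp₁ : 0 < p - 1 := sub_pos.2 hp
  obtain ⟨C, hC⟩ := hq.exists_forall_qinf_le hσ y
  refine ne_top_of_le_ne_top (ENNReal.mul_ne_top ENNReal.ofReal_ne_top ENNReal.ofReal_ne_top)
    (radialMeasure_Ioc_le (c := (y * C) ^ (1 / (p - 1))) fun r hr ↦ ?_)
  have hr₀ : 0 < r := hx.trans hr.1
  have hψ := hq.radialDensity_nonneg hb hp hα hσ hr₀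
  calc radialDensity q b p α σ r = (radialDensity q b p α σ r ^ (p - 1)) ^ (1 / (p - 1)) := by
        rw [← Real.rpow_mul hψ, mul_one_div_cancel hp₁.ne', Real.rpow_one]
    _ ≤ (y * C) ^ (1 / (p - 1)) := by
        refine Real.rpow_le_rpow (by positivity) ?_ (by positivity)
        exact (hq.radialDensity_rpow_le hb hp hα hσ hr₀).trans
          (mul_le_mul hr.2 (hC hr₀ hr.2) (hq.qinf_nonneg hσ hr₀) (hr₀.le.trans hr.2))

lemma setIntegral_radialDensity_le (hq : IsCoefficient q) (hb : IsCoefficient b) (hp : 1 < p)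
    (hα : 0 < α) (hσ : 1 < σ) (hx : 0 < x) (hc : 0 ≤ c)
    (h : radialMeasure q b p α σ (Ioc x y) ≤ ENNReal.ofReal c) :
    ∫ r in Ioc x y, radialDensity q b p α σ r ≤ c := by
  refine (Real.le_norm_self _).trans ((norm_integral_le_lintegral_norm _).trans
    (ENNReal.toReal_le_of_le_ofReal hc ?_))
  rw [radialMeasure, withDensity_apply _ measurableSet_Ioc] at h
  refine (setLIntegral_congr_fun measurableSet_Ioc fun r hr ↦ ?_).trans_le h
  rw [Real.norm_of_nonneg (hq.radialDensity_nonneg hb hp hα hσ (hx.trans hr.1))]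

variable (n) in
theorem exists_radialMeasure_Ioc_le_levelIncrement (hp : 1 < p) (hα : 0 < α) (hc : 0 < c)
    (hσ : 1 < σ) (hr : IsLinkRatio θ a l) :
    ∃ C > 0, ∀ {b q : Euc n → ℝ} {g M : ℝ → ℝ} {x y : ℝ}, IsCoefficient b → IsCoefficient q →
      IsNonlinearity g → IsRadialProfile p α c b q g M → 0 < x → 0 < M x → √σ * x ≤ y →
      radialMeasure q b p α σ (Ioc x y) ≤
        ENNReal.ofReal (C * levelIncrement g p α θ a (M x) (M y)) := by
  have hk : 1 < √σ := Real.lt_sqrt_of_sq_lt (by simpa using hσ)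
  have hk_sq : √σ ^ 2 = σ := Real.sq_sqrt (by linarith)
  have hσ₀ : 0 < σ := one_pos.trans hσ
  obtain ⟨C, hC, hblock⟩ := exists_density_mul_sub_le hp hα hc hr hk
  refine ⟨C, hC, fun {b q g M x₀ y₀} hb hq hg hM hx₀ hMpos hxy ↦ ?_⟩
  have hMle : ∀ ⦃s t⦄, x₀ ≤ s → s ≤ t → M s ≤ M t := fun s t hs hst ↦
    hM.monotoneOn (hx₀.trans_le hs) (hx₀.trans_le (hs.trans hst)) hst
  have hMpos' : ∀ ⦃s⦄, x₀ ≤ s → 0 < M s := fun s hs ↦ hMpos.trans_le (hMle le_rfl hs)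
  refine of_ratio_mem_Icc_sq (P := fun x y ↦ radialMeasure q b p α σ (Ioc x y) ≤
    ENNReal.ofReal (C * levelIncrement g p α θ a (M x) (M y))) hx₀ hk ?block ?trans le_rfl hxy
  case block =>
    intro x y hx hkx hyk
    rw [hk_sq] at hyk
    have hx' : 0 < x := hx₀.trans_le hx
    have hlt : x < y := (lt_mul_of_one_lt_left hx' hk).trans_le hkx
    have hd : 0 < y - x := sub_pos.2 hlt
    refine (radialMeasure_Ioc_le (c := C * levelIncrement g p α θ a (M x) (M y) / (y - x))
      fun r hr' ↦ ?_).trans_eq (by rw [← ENNReal.ofReal_mul' hd.le, div_mul_cancel₀ _ hd.ne'])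
    have hr₀ : 0 < r := hx'.trans hr'.1
    rw [le_div_iff₀ hd]
    rcases (hq.radialDensity_nonneg hb hp hα hσ hr₀).eq_or_lt with hzero | hpos
    · rw [← hzero, zero_mul]
      exact mul_nonneg hC.le (hg.levelIncrement_nonneg hr (hMpos' hx) (hMle hx hlt.le))
    obtain ⟨β, hB⟩ := hq.exists_isAnnulusBound hb hp hα hσ hr₀ hpos
    refine hblock hM hg hx' hkx (hMpos' hx) (hB.mono ?_ ?_)
      ((hq.radialDensity_rpow_le hb hp hα hσ hr₀).trans ?_)
    · rw [div_le_iff₀' hσ₀]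
      exact hr'.2.trans hyk
    · exact hyk.trans (by gcongr; exact hr'.1.le)
    · exact mul_le_mul_of_nonneg_right hr'.2 hB.source_pos.le
  case trans =>
    intro x y z hx hxy hyz hxy_le hyz_le
    have hxy' := hMle hx hxy
    have hyz' := hMle (hx.trans hxy) hyz
    rw [← Ioc_union_Ioc_eq_Ioc hxy hyz]
    refine (measure_union_le _ _).trans ((add_le_add hxy_le hyz_le).trans ?_)
    rw [← ENNReal.ofReal_add
      (mul_nonneg hC.le (hg.levelIncrement_nonneg hr (hMpos' hx) hxy'))
      (mul_nonneg hC.le (hg.levelIncrement_nonneg hr (hMpos' (hx.trans hxy)) hyz')), ← mul_add]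
    gcongr
    exact hg.levelIncrement_add_le hp hα hr (hMpos' hx) hxy' hyz'

end RadialMeasure

section Comparison

variable {p α θ a l C k r₀ x y : ℝ} {g M : ℝ → ℝ} {ν : Measure ℝ}

lemma Finfty_eq (hx : 1 ≤ x) : Finfty g θ p α x =
    negPowIntegral (fun t ↦ ginf g θ t * t) (1 / p) 1 x ^ (p / (p - 1)) +
      negPowIntegral (ginf g θ) (1 / α) 1 x := by
  simp only [Finfty, negPowIntegral, intervalIntegral.integral_of_le hx]

namespace IsNonlinearity

lemma Finfty_nonneg (hg : IsNonlinearity g) (hθ : 1 < θ) (hx : 1 ≤ x) :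
    0 ≤ Finfty g θ p α x := by
  have hwθ := hg.isPosWeight_ginf hθ
  rw [Finfty_eq hx]
  exact add_nonneg (Real.rpow_nonneg (hwθ.mul_id.negPowIntegral_nonneg one_pos hx) _)
    (hwθ.negPowIntegral_nonneg one_pos hx)

lemma levelIncrement_le_Finfty (hg : IsNonlinearity g) (hp : 1 < p) (hα : 0 < α)
    (hr : IsLinkRatio θ a l) (hx : 1 ≤ x) (hxy : l * x ≤ y) :
    levelIncrement g p α θ a x y ≤ (1 + (l / (l - 1)) ^ (1 / (p - 1))) * Finfty g θ p α y := by
  have : 0 < p - 1 := sub_pos.2 hp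
  have hl₁ : 0 < l - 1 := sub_pos.2 hr.one_lt
  have hx₀ : 0 < x := one_pos.trans_le hx
  have hxy' : x ≤ y := (le_mul_of_one_le_left hx₀.le hr.one_lt.le).trans hxy
  have hwθ := hg.isPosWeight_ginf hr.one_lt_theta
  set κ : ℝ := (l / (l - 1)) ^ (1 / (p - 1))
  have hκ : 0 ≤ κ := Real.rpow_nonneg (div_nonneg (by linarith) hl₁.le) _
  have h₁ : negPowIntegral (fun t ↦ ginf g θ t * t) (1 / p) x y ^ (p / (p - 1)) ≤
      negPowIntegral (fun t ↦ ginf g θ t * t) (1 / p) 1 y ^ (p / (p - 1)) :=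
    Real.rpow_le_rpow (hwθ.mul_id.negPowIntegral_nonneg hx₀ hxy')
      (hwθ.mul_id.negPowIntegral_anti_left (by positivity) one_pos hx hxy') (by positivity)
  have h₂ : negPowIntegral (ginf g θ) (1 / α) x y ≤ negPowIntegral (ginf g θ) (1 / α) 1 y :=
    hwθ.negPowIntegral_anti_left (by positivity) one_pos hx hxy'
  have h₃ := hg.negPowIntegral_le hp hr hx₀ hxy
  have h₄ := mul_le_mul_of_nonneg_left h₁ hκ
  have h₅ := mul_nonneg hκ ((hwθ.negPowIntegral_nonneg hx₀ hxy').trans h₂)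
  rw [Finfty_eq (hx.trans hxy'), levelIncrement]
  linarith

end IsNonlinearity

-- A bounded `M` would have bounded level increments, whereas `ν` has infinite mass near infinity.
lemma tendsto_atTop_of_measure_Ioc_le (hg : IsNonlinearity g) (hp : 1 < p) (hα : 0 < α)
    (hr : IsLinkRatio θ a l) (hC : 0 ≤ C) (hM : MonotoneOn M (Ioi 0))
    (hν : ∀ ⦃x y⦄, 0 < x → 0 < M x → k * x ≤ y →
      ν (Ioc x y) ≤ ENNReal.ofReal (C * levelIncrement g p α θ a (M x) (M y)))
    (hx : 0 < x) (hMx : 0 < M x) (htop : Tendsto (fun y ↦ ν (Ioc x y)) atTop (nhds ⊤)) :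
    Tendsto M atTop atTop := by
  refine tendsto_atTop.2 fun B ↦ ?_
  filter_upwards [htop.eventually_const_lt (ENNReal.ofReal_lt_top
    (r := C * levelIncrement g p α θ a (M x) B)), eventually_ge_atTop (k * x),
    eventually_ge_atTop x] with y hlt hky hxy
  by_contra! hyB
  have hMxy : M x ≤ M y := hM hx (hx.trans_le hxy) hxy
  have hsplit := hg.levelIncrement_add_le hp hα hr hMx hMxy hyB.le
  have hrest := hg.levelIncrement_nonneg (p := p) (α := α) hr (hMx.trans_le hMxy) hyB.le
  refine hlt.not_ge ((hν hx hMx hky).trans (ENNReal.ofReal_le_ofReal ?_))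
  exact mul_le_mul_of_nonneg_left (by linarith) hC

lemma eventually_measure_Ioc_le_Finfty (hg : IsNonlinearity g) (hp : 1 < p) (hα : 0 < α)
    (hr : IsLinkRatio θ a l) (hC : 0 ≤ C) (hM : MonotoneOn M (Ioi 0))
    (hν : ∀ ⦃x y⦄, 0 < x → 0 < M x → k * x ≤ y →
      ν (Ioc x y) ≤ ENNReal.ofReal (C * levelIncrement g p α θ a (M x) (M y)))
    (hfin : ∀ y, ν (Ioc r₀ y) ≠ ⊤) (htop : ν (Ioi r₀) = ⊤) (hpos : ∃ x > 0, 0 < M x) :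
    ∀ᶠ r in atTop, 1 ≤ M r ∧ ν (Ioc r₀ r) ≤
      ENNReal.ofReal (2 * C * (1 + (l / (l - 1)) ^ (1 / (p - 1))) * Finfty g θ p α (M r)) := by
  obtain ⟨x, hx, hMx⟩ := hpos
  have htail := fun y ↦ tendsto_measure_Ioc_nhds_top htop (hfin y)
  have hMtop := tendsto_atTop_of_measure_Ioc_le hg hp hα hr hC hM hν hx hMx (htail x)
  obtain ⟨r₁, hM₁, hr₁⟩ :=
    ((hMtop.eventually_ge_atTop 1).and (eventually_gt_atTop 0)).exists
  filter_upwards [hMtop.eventually_ge_atTop 1, hMtop.eventually_ge_atTop (l * M r₁),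
    (htail r₁).eventually_const_lt (hfin r₁).lt_top, eventually_ge_atTop (k * r₁)]
    with r hMr hlr hinit hkr
  refine ⟨hMr, ?_⟩
  calc ν (Ioc r₀ r) ≤ ν (Ioc r₀ r₁) + ν (Ioc r₁ r) :=
        (measure_mono Ioc_subset_Ioc_union_Ioc).trans (measure_union_le _ _)
    _ ≤ 2 * ν (Ioc r₁ r) := by rw [two_mul]; gcongr
    _ ≤ 2 * ENNReal.ofReal (C * levelIncrement g p α θ a (M r₁) (M r)) := by
        gcongr
        exact hν hr₁ (one_pos.trans_le hM₁) hkr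
    _ = ENNReal.ofReal (2 * C * levelIncrement g p α θ a (M r₁) (M r)) := by
        rw [mul_assoc, ENNReal.ofReal_mul zero_le_two, ENNReal.ofReal_ofNat]
    _ ≤ _ := by
        rw [mul_assoc (2 * C)]
        gcongr
        exact hg.levelIncrement_le_Finfty hp hα hr hM₁ hlr

end Comparison

theorem exists_eventually_mul_setIntegral_le_Finfty (n : ℕ) [NeZero n] {p α c θ σ : ℝ}
    (hp : 1 < p) (hα : 0 < α) (hc : 0 < c) (hθ : 1 < θ) (hσ : 1 < σ) :
    ∃ C > 0, ∀ {b q : Euc n → ℝ} {g M : ℝ → ℝ} {r₀ : ℝ}, IsCoefficient b → IsCoefficient q →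
      IsNonlinearity g → IsRadialProfile p α c b q g M → (∃ x > 0, 0 < M x) → 0 < r₀ →
      radialMeasure q b p α σ (Ioi r₀) = ⊤ →
      ∀ᶠ r in atTop, 1 ≤ M r ∧
        C * ∫ ξ in Ioc r₀ r, radialDensity q b p α σ ξ ≤ Finfty g θ p α (M r) := by
  obtain ⟨a, l, hr⟩ := exists_isLinkRatio hθ
  obtain ⟨C, hC, hgrowth⟩ :=
    exists_radialMeasure_Ioc_le_levelIncrement n hp hα hc hσ hr
  have hl₁ : 0 < l - 1 := sub_pos.2 hr.one_lt
  have : 0 < l := one_pos.trans hr.one_lt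
  set K : ℝ := 2 * C * (1 + (l / (l - 1)) ^ (1 / (p - 1)))
  have hK : 0 < K := by positivity
  refine ⟨K⁻¹, inv_pos.2 hK, fun {b q g M r₀} hb hq hg hM hpos hr₀ htop ↦ ?_⟩
  filter_upwards [eventually_measure_Ioc_le_Finfty hg hp hα hr hC.le hM.monotoneOn
    (fun x y hx hMx hxy ↦ hgrowth hb hq hg hM hx hMx hxy)
    (fun y ↦ radialMeasure_Ioc_ne_top hq hb hp hα hσ hr₀) htop hpos] with r ⟨hMr, hle⟩
  refine ⟨hMr, (inv_mul_le_iff₀ hK).2 ?_⟩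
  exact setIntegral_radialDensity_le hq hb hp hα hσ hr₀
    (mul_nonneg hK.le (hg.Finfty_nonneg hθ hMr)) hle

theorem stmt_1_general (n : ℕ) (hn : 2 ≤ n) (p C₁ C₂ α : ℝ) (hp : 1 < p)
    (hC₁ : 0 < C₁) (hC₂ : 0 < C₂) (hα₁ : p - 1 ≤ α) (hα₂ : α ≤ p)
    (θ σ : ℝ) (hθ : 1 < θ) (hσ : 1 < σ) :
    ∃ C : ℝ, 0 < C ∧
      ∀ (r₀ : ℝ), 0 < r₀ →
      ∀ (A : Euc n → Euc n → Euc n), StructCond A p C₁ C₂ →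
      ∀ (b : Euc n → ℝ), Measurable b → (∀ x, 0 ≤ b x) → LocBdd b →
      ∀ (q : Euc n → ℝ), Measurable q → (∀ x, 0 ≤ q x) → LocBdd q →
      ∀ (g : ℝ → ℝ), ContinuousOn g (Ici 0) → (∀ t ∈ Ici (0 : ℝ), 0 ≤ g t) →
        (∀ t : ℝ, 0 < t → 0 < g t) →
      (∫⁻ r in Ioi r₀, ENNReal.ofReal ((r * fdef q b p α σ r) ^ (1 / (p - 1)))) = ⊤ →
      ∀ u : Euc n → ℝ, ContDiff ℝ 1 u → (∀ x, 0 ≤ u x) →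
        IsWeakSol A b α (fun x ↦ q x * g (u x)) univ u →
        (∃ x, u x ≠ 0) →
        ∃ R : ℝ, r₀ < R ∧ ∀ r : ℝ, R ≤ r →
          1 ≤ sphMax u r ∧
            C * ∫ ξ in Ioc r₀ r, (ξ * fdef q b p α σ ξ) ^ (1 / (p - 1)) ≤
              Finfty g θ p α (sphMax u r) := by
  have : NeZero n := ⟨by lia⟩
  have hα : 0 < α := (sub_pos.2 hp).trans_le hα₁
  obtain ⟨c, hc, hgrowth⟩ := exists_hasRadialGrowth hn hp hC₁ hC₂ hα₁
  obtain ⟨c', hc', hprofile⟩ := exists_isRadialProfile (n := n) hp hC₁ hc hα hα₂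
  obtain ⟨C, hC, hmain⟩ := exists_eventually_mul_setIntegral_le_Finfty n hp hα hc' hθ hσ
  refine ⟨C, hC, ?_⟩
  intro r₀ hr₀ A hA b hb_meas hb_nonneg hb_bdd q hq_meas hq_nonneg hq_bdd g hg_cont hg_nonneg
    hg_pos htop u hu hu_nonneg hsol ⟨x, hx⟩
  have hb : IsCoefficient b := ⟨hb_meas, hb_nonneg, hb_bdd⟩
  have hq : IsCoefficient q := ⟨hq_meas, hq_nonneg, hq_bdd⟩
  have hg : IsNonlinearity g := ⟨hg_cont, hg_nonneg, hg_pos⟩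
  have hrad := hgrowth hA hb hq hg hu hu_nonneg hsol
  have hMpos : 0 < sphMax u (‖x‖ + 1) :=
    ((hu_nonneg x).lt_of_ne' hx).trans_le (hrad.le_sphMax x _ (by positivity) (by linarith))
  have hev := hmain hb hq hg (hprofile hq hrad) ⟨_, by positivity, hMpos⟩ hr₀
    ((withDensity_apply _ measurableSet_Ioi).trans htop)
  obtain ⟨R, hR⟩ := eventually_atTop.1 (hev.and (eventually_gt_atTop r₀))
  exact ⟨R, (hR R le_rfl).2, fun r hr ↦ (hR r hr).1⟩

/-- Theorem 2.2 (lower a priori estimate): if the `f_σ` integral diverges while at least one of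
the `g_θ` integrals diverges, there is a constant `C > 0` depending only on
`n, p, θ, σ, α, C₁, C₂` such that every nontrivial nonnegative solution satisfies
`F_∞(M(r;u)) ≥ C ∫_{r₀}^r (ξ f_σ(ξ))^{1/(p-1)} dξ` (with `M(r;u) ≥ 1`) for all large `r`. -/
theorem stmt_1 (n : ℕ) (hn : 2 ≤ n) (p C₁ C₂ α : ℝ) (hp : 1 < p)
    (hC₁ : 0 < C₁) (hC₂ : 0 < C₂) (hα₁ : p - 1 ≤ α) (hα₂ : α ≤ p)
    (θ σ : ℝ) (hθ : 1 < θ) (hσ : 1 < σ) :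
    ∃ C : ℝ, 0 < C ∧
      ∀ (r₀ : ℝ), 0 < r₀ →
      ∀ (A : Euc n → Euc n → Euc n), StructCond A p C₁ C₂ →
      ∀ (b : Euc n → ℝ), Measurable b → (∀ x, 0 ≤ b x) → LocBdd b →
      ∀ (q : Euc n → ℝ), Measurable q → (∀ x, 0 ≤ q x) → LocBdd q →
      ∀ (g : ℝ → ℝ), ContinuousOn g (Set.Ici 0) → (∀ t ∈ Set.Ici (0 : ℝ), 0 ≤ g t) →
        (∀ t : ℝ, 0 < t → 0 < g t) →
      (∫⁻ r in Set.Ioi r₀, ENNReal.ofReal ((r * fdef q b p α σ r) ^ (1 / (p - 1)))) = ⊤ →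
      ((∫⁻ t in Set.Ioi (1 : ℝ), ENNReal.ofReal ((ginf g θ t * t) ^ (-(1 / p)))) = ⊤ ∨
        (∫⁻ t in Set.Ioi (1 : ℝ), ENNReal.ofReal (ginf g θ t ^ (-(1 / α)))) = ⊤) →
      ∀ u : Euc n → ℝ, ContDiff ℝ 1 u → (∀ x, 0 ≤ u x) →
        IsWeakSol A b α (fun x => q x * g (u x)) Set.univ u →
        (∃ x, u x ≠ 0) →
        ∃ R : ℝ, r₀ < R ∧ ∀ r : ℝ, R ≤ r →
          1 ≤ sphMax u r ∧
            C * ∫ ξ in Set.Ioc r₀ r, (ξ * fdef q b p α σ ξ) ^ (1 / (p - 1)) ≤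
              Finfty g θ p α (sphMax u r) := by
  obtain ⟨C, hC, hmain⟩ := stmt_1_general n hn p C₁ C₂ α hp hC₁ hC₂ hα₁ hα₂ θ σ hθ hσ
  exact ⟨C, hC, fun r₀ hr₀ A hA b hbm hb hbl q hqm hq hql g hgc hg hgp htop _ ↦
    hmain r₀ hr₀ A hA b hbm hb hbl q hqm hq hql g hgc hg hgp htop⟩
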